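/- Let k be a positive integer and let G be a 2-connected (finite simple) graph containing a non-separating induced odd cycle. If the minimum degree of G is at least k + 1, then G contains k cycles which have consecutive lengths or satisfy the length condition. -/

import Mathlib

/-!
The `k` cycles found here always have consecutive lengths. They consist of an arc of a fixed odd
cycle and a path outside it, and the paths come from a theorem about rooted graphs.

**Paths.** Let `U` be a vertex set and `A`, `B` the sets of neighbours of two roots `x`, `y`, such that
`U` with both roots and the edge `xy` is 2-connected (`KC.RC`). If every vertex of `U` has degree at
least `d`, counting the roots, then for some `j` each of the pairs `{j, j + 1}, …, {j + d - 1, j + d}`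
contains the number of vertices of some `A`–`B` path (`KC.pathThm`). Such a set of numbers is called a
window of width `d` (`KC.Win`). The proof is by induction on `U`. A proper subset with at most two outer
neighbours is a smaller instance whose paths extend to all of `U` along two disjoint arms
(`KC.twocut`). If there is none, one deletes a small set `S` near a root, applies induction
to a component of the rest, and makes up for the lost degrees by varying the path inside `S`. There
`S` is a maximum clique among the neighbours of a root (`KC.step1`), all of these neighbours if no
vertex sees two of them (`KC.step2`), or two of them together with a common neighbour (`KC.step3`).

**Cycles.** Let `C` be a shortest non-separating induced odd cycle, of length `2 s + 1`, and `T` its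
complement. Antipodal vertices of `C` are joined by arcs with `s` and `s + 1` edges, so a window of
width `k` for paths through `T` between their neighbourhoods gives `k` consecutive cycle
lengths (`KC.antip`). The degree bound needed in `T` is available as long as the vertices of `T` have
few neighbours on `C`; minimality of `C` shows that a vertex not disconnecting `T` has at most two,
and that two of them are at distance two (`KC.Cy.claim`). A vertex `w` with two neighbours on `C` is an asset: arcs with
`s - 1`, …, `s + 2` edges then lead from `w` to an antipodal vertex, and a window of width `k - 2`
suffices (`KC.fourarc`). If `T` has no cut vertex, this is applied to `T` or to `T` without `w`
(`KC.caseI`). Otherwise it is applied to a minimal part `D` of `T` attached through a single cut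
vertex, and the paths are prolonged outside `D` when necessary (`KC.caseIIa`, `KC.caseIIb1`,
`KC.caseIIb2`). For `k = 1` the given cycle is enough; `k = 2` and triangles are treated separately
(`KC.case_two`, `KC.case_three`).
-/

open SimpleGraph

/-- A finite simple graph is 2-connected if it is connected, has at least 3 vertices,
and remains connected after deleting any single vertex. -/
def TwoConnected {V : Type*} [Fintype V] (G : SimpleGraph V) : Prop :=
  G.Connected ∧ 3 ≤ Fintype.card V ∧
    ∀ v : V, (G.induce ({v}ᶜ : Set V)).Connected

/-- The sequence of lengths `f 1, …, f k` satisfies the length condition: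
`f 1 ≥ 2` and consecutive lengths differ by exactly `2`. -/
def LengthSeq (k : ℕ) (f : ℕ → ℕ) : Prop :=
  2 ≤ f 1 ∧ ∀ i, 1 ≤ i → i ≤ k - 1 → f (i + 1) = f i + 2

/-- The sequence of lengths `f 1, …, f k` has consecutive lengths:
`f 1 ≥ 2` and consecutive lengths differ by exactly `1`. -/
def ConsecSeq (k : ℕ) (f : ℕ → ℕ) : Prop :=
  2 ≤ f 1 ∧ ∀ i, 1 ≤ i → i ≤ k - 1 → f (i + 1) = f i + 1

set_option autoImplicit false

namespace KC
open Classical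
variable {V : Type*} {G : SimpleGraph V}

/-! ### Paths, windows and rooted connectivity -/

/-- `l` lists, in order, the vertices of a path of `G` from `a` to `b` inside `U`. Vertex lists are used
instead of walks because paths get concatenated all the time. -/
structure IsP (G : SimpleGraph V) (U : Finset V) (a b : V) (l : List V) : Prop where
  nodup : l.Nodup
  chain : l.IsChain G.Adj
  sub : ∀ z ∈ l, z ∈ U
  head : l.head? = some a
  last : l.getLast? = some b

theorem IsP.single {U : Finset V} {a : V} (h : a ∈ U) : IsP G U a a [a] :=
  ⟨by simp, by simp, by simpa using h, rfl, rfl⟩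

theorem IsP.append {U₁ U₂ U : Finset V} {a s e b : V} {l₁ l₂ : List V}
    (h₁ : IsP G U₁ a s l₁) (h₂ : IsP G U₂ e b l₂) (hse : G.Adj s e)
    (hd : l₁.Disjoint l₂) (hU₁ : U₁ ⊆ U) (hU₂ : U₂ ⊆ U) :
    IsP G U a b (l₁ ++ l₂) := by
  refine ⟨List.nodup_append'.2 ⟨h₁.nodup, h₂.nodup, hd⟩, ?_, ?_, ?_, ?_⟩
  · rw [List.isChain_append]
    refine ⟨h₁.chain, h₂.chain, ?_⟩
    rw [h₁.last, h₂.head]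
    rintro x hx y hy
    simp only [Option.mem_def, Option.some.injEq] at hx hy
    subst hx hy; exact hse
  · intro z hz
    rcases List.mem_append.1 hz with h | h
    · exact hU₁ (h₁.sub z h)
    · exact hU₂ (h₂.sub z h)
  · simp [h₁.head]
  · simp [h₂.last]

theorem IsP.reverse {U : Finset V} {a b : V} {l : List V} (h : IsP G U a b l) :
    IsP G U b a l.reverse := by
  refine ⟨by simpa using h.nodup, ?_, by simpa using h.sub, by simp [h.last], by simp [h.head]⟩
  rw [List.isChain_reverse]
  exact h.chain.imp fun _ _ hab => hab.symm

theorem IsP.mono {U U' : Finset V} {a b : V} {l : List V} (h : IsP G U a b l)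
    (hU : ∀ z ∈ l, z ∈ U') : IsP G U' a b l :=
  ⟨h.nodup, h.chain, hU, h.head, h.last⟩

theorem IsP.head_mem {U : Finset V} {a b : V} {l : List V} (h : IsP G U a b l) : a ∈ l :=
  List.mem_of_mem_head? h.head

theorem IsP.last_mem {U : Finset V} {a b : V} {l : List V} (h : IsP G U a b l) : b ∈ l :=
  List.mem_of_mem_getLast? h.last

theorem IsP.upTo {U : Finset V} {a b p : V} {l : List V} (h : IsP G U a b l) (hp : p ∈ l) :
    ∃ l', IsP G U a p l' ∧ l' ⊆ l := by
  obtain ⟨α, β, rfl⟩ := List.append_of_mem hp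
  have e : α ++ p :: β = (α ++ [p]) ++ β := by simp
  have h1 := h.nodup
  have h2 := h.chain
  rw [e] at h1 h2
  refine ⟨α ++ [p], ⟨h1.of_append_left, (List.isChain_append.1 h2).1, ?_, ?_, by simp⟩, ?_⟩
  · intro z hz; apply h.sub; rw [e]; exact List.mem_append_left _ hz
  · have := h.head
    cases α <;> simpa using this
  · rw [e]; exact List.subset_append_left _ _

/-- Some path inside `U` from a vertex of `A` to a vertex of `B` has exactly `m` vertices. -/
def Pth (G : SimpleGraph V) (U : Finset V) (A B : Set V) (m : ℕ) : Prop :=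
  ∃ a ∈ A, ∃ b ∈ B, ∃ l, IsP G U a b l ∧ l.length = m

/-- The vertices with a neighbour in `S`. -/
def nbs (G : SimpleGraph V) (S : Set V) : Set V := {u | ∃ s ∈ S, G.Adj u s}

theorem Pth.symm {U : Finset V} {A B : Set V} {m : ℕ} (h : Pth G U A B m) : Pth G U B A m := by
  obtain ⟨a, ha, b, hb, l, hl, rfl⟩ := h
  exact ⟨b, hb, a, ha, _, hl.reverse, by simp⟩

theorem Pth.mono {U U' : Finset V} {A B A' B' : Set V} {m : ℕ} (h : Pth G U A B m) (hU : U ⊆ U')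
    (hA : ∀ z ∈ U, z ∈ A → z ∈ A') (hB : ∀ z ∈ U, z ∈ B → z ∈ B') : Pth G U' A' B' m := by
  obtain ⟨a, ha, b, hb, l, hl, rfl⟩ := h
  exact ⟨a, hA _ (hl.sub _ hl.head_mem) ha, b, hB _ (hl.sub _ hl.last_mem) hb, l,
    hl.mono fun z hz => hU (hl.sub z hz), rfl⟩

theorem Pth.single {U : Finset V} {A B : Set V} {v : V} (h : v ∈ U) (hA : v ∈ A) (hB : v ∈ B) :
    Pth G U A B 1 := ⟨v, hA, v, hB, _, IsP.single h, rfl⟩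

theorem Pth.append {U₁ U₂ U : Finset V} {A B A' B' : Set V} {m n : ℕ}
    (h₁ : Pth G U₁ A A' m) (h₂ : Pth G U₂ B' B n) (hAB : ∀ s ∈ A', ∀ e ∈ B', G.Adj s e)
    (hd : Disjoint U₁ U₂) (hU₁ : U₁ ⊆ U) (hU₂ : U₂ ⊆ U) : Pth G U A B (m + n) := by
  obtain ⟨a, ha, s, hs, l₁, hl₁, rfl⟩ := h₁
  obtain ⟨e, he, b, hb, l₂, hl₂, rfl⟩ := h₂
  refine ⟨a, ha, b, hb, _, hl₁.append hl₂ (hAB _ hs _ he) ?_ hU₁ hU₂, by simp⟩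
  intro z hz hz'
  exact (Finset.disjoint_left.1 hd) (hl₁.sub z hz) (hl₂.sub z hz')

theorem Pth.start {U : Finset V} {A B : Set V} {m : ℕ} (h : Pth G U A B m) :
    ∃ a ∈ U, a ∈ A ∧ Pth G U {a} B m := by
  obtain ⟨a, ha, b, hb, l, hl, rfl⟩ := h
  exact ⟨a, hl.sub _ hl.head_mem, ha, a, rfl, b, hb, l, hl, rfl⟩

theorem Pth.finish {U : Finset V} {A B : Set V} {m : ℕ} (h : Pth G U A B m) :
    ∃ b ∈ U, b ∈ B ∧ Pth G U A {b} m := by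
  obtain ⟨a, ha, b, hb, l, hl, rfl⟩ := h
  exact ⟨b, hl.sub _ hl.last_mem, hb, a, ha, b, rfl, l, hl, rfl⟩

theorem Pth.pos {U : Finset V} {A B : Set V} {m : ℕ} (h : Pth G U A B m) : 1 ≤ m := by
  obtain ⟨a, ha, b, hb, l, hl, rfl⟩ := h
  exact List.length_pos_of_mem hl.head_mem

/-- prepend a single vertex -/
theorem Pth.cons {U' U : Finset V} {A B A' : Set V} {m : ℕ} {s : V}
    (h : Pth G U' A' B m) (hs : s ∈ U) (hsU : s ∉ U') (hU : U' ⊆ U) (hA : s ∈ A)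
    (hA' : ∀ e ∈ A', G.Adj s e) : Pth G U A B (m + 1) := by
  rw [add_comm]
  refine Pth.append (Pth.single (U := {s}) (A := A) (B := {s}) (by simp) hA rfl) h ?_ ?_ ?_ hU
  · rintro _ rfl e he; exact hA' e he
  · simpa using hsU
  · simpa using hs

/-- Either `X` contains a path from `A` to `B`, or the part of `X` reachable from `A` is closed in `X`
and misses `B`. -/
theorem path_or_closed (X : Finset V) (A B : Set V) :
    (∃ m, Pth G X A B m) ∨ ∃ D ⊆ X, (∀ v ∈ X, v ∈ A → v ∈ D) ∧ (∀ v ∈ D, v ∉ B) ∧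
      ∀ v ∈ D, ∀ w ∈ X, G.Adj v w → w ∈ D := by
  by_cases h : ∃ m, Pth G X A B m
  · exact Or.inl h
  right
  refine ⟨X.filter fun v => ∃ a ∈ A, ∃ l, IsP G X a v l, Finset.filter_subset _ _, ?_, ?_, ?_⟩
  · intro v hv hA
    simp only [Finset.mem_filter]
    exact ⟨hv, v, hA, _, IsP.single hv⟩
  · intro v hv hB
    simp only [Finset.mem_filter] at hv
    obtain ⟨hv, a, ha, l, hl⟩ := hv
    exact h ⟨_, a, ha, v, hB, l, hl, rfl⟩
  · intro v hv w hw hvw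
    simp only [Finset.mem_filter] at hv ⊢
    obtain ⟨hv, a, ha, l, hl⟩ := hv
    refine ⟨hw, a, ha, ?_⟩
    by_cases hwl : w ∈ l
    · obtain ⟨l', h', -⟩ := hl.upTo hwl
      exact ⟨l', h'⟩
    · exact ⟨_, hl.append (IsP.single hw) hvw (by simpa using hwl) subset_rfl subset_rfl⟩

/-- The component of `X` containing `e`: it is closed in `X`, and no proper nonempty subset of it is. -/
theorem exists_comp (X : Finset V) {e : V} (he : e ∈ X) :
    ∃ E ⊆ X, e ∈ E ∧ (∀ v ∈ E, ∀ w ∈ X, G.Adj v w → w ∈ E) ∧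
      ∀ D ⊆ E, D.Nonempty → (∀ v ∈ D, ∀ w ∈ E, G.Adj v w → w ∈ D) → D = E := by
  let P : Finset V → Prop := fun E => E ⊆ X ∧ e ∈ E ∧ (∀ v ∈ E, ∀ w ∈ X, G.Adj v w → w ∈ E)
  obtain ⟨E, hE, hmin⟩ := Finset.exists_min_image (X.powerset.filter P) Finset.card
    ⟨X, by simpa [P] using ⟨he, fun _ _ w hw _ => hw⟩⟩
  have hmin' : ∀ E', P E' → E.card ≤ E'.card := fun E' h =>
    hmin E' (Finset.mem_filter.2 ⟨Finset.mem_powerset.2 h.1, h⟩)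
  obtain ⟨h1, h2, h3⟩ := (Finset.mem_filter.1 hE).2
  refine ⟨E, h1, h2, h3, ?_⟩
  intro D hD hne hcl
  have hX : ∀ v ∈ D, ∀ w ∈ X, G.Adj v w → w ∈ D :=
    fun v hv w hw hvw => hcl v hv w (h3 v (hD hv) w hw hvw) hvw
  by_cases heD : e ∈ D
  · exact Finset.eq_of_subset_of_card_le hD (hmin' D ⟨hD.trans h1, heD, hX⟩)
  · exfalso
    have := hmin' (E \ D) ⟨Finset.sdiff_subset.trans h1, by simp [h2, heD], ?_⟩
    · have h4 := Finset.card_sdiff_add_card_eq_card hD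
      have := hne.card_pos
      omega
    · intro v hv w hw hvw
      simp only [Finset.mem_sdiff] at hv ⊢
      exact ⟨h3 v hv.1 w hw hvw, fun hwD => hv.2 (hX w hwD v (h1 hv.1) hvw.symm)⟩

/-- A window of width `w` in `L`: each of the `w` consecutive pairs `{j + i, j + i + 1}` meets `L`.
This is weaker than `w` consecutive elements, but adding each of `s`, `s + 1` to the elements of `L`
yields `w` consecutive numbers. -/
def Win (L : ℕ → Prop) (w : ℕ) : Prop := ∃ j, ∀ i < w, L (j + i) ∨ L (j + i + 1)

theorem Win.mono_len {L : ℕ → Prop} {w w' : ℕ} (h : Win L w) (hw : w' ≤ w) : Win L w' := by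
  obtain ⟨j, hj⟩ := h
  exact ⟨j, fun i hi => hj i (by omega)⟩

theorem Win.shift {L L' : ℕ → Prop} {w : ℕ} (c : ℕ) (h : Win L w) (hL : ∀ m, L m → L' (m + c)) :
    Win L' w := by
  obtain ⟨j, hj⟩ := h
  refine ⟨j + c, fun i hi => ?_⟩
  rcases hj i hi with h | h
  · left; convert hL _ h using 1; omega
  · right; convert hL _ h using 1; omega

/-- If every element of `L` can be lengthened by each of `1, …, r`, the window grows by `r - 1`. -/
theorem Win.add {L L' : ℕ → Prop} {w r : ℕ} (c : ℕ) (h : Win L w) (hw : 1 ≤ w) (hr : 1 ≤ r)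
    (hL : ∀ m, L m → ∀ t, 1 ≤ t → t ≤ r → L' (m + t + c)) : Win L' (w + r - 1) := by
  obtain ⟨j, hj⟩ := h
  refine ⟨j + 1 + c, fun i hi => ?_⟩
  by_cases hi' : i < w
  · rcases hj i hi' with h | h
    · left; convert hL _ h 1 le_rfl hr using 1; omega
    · right; convert hL _ h 1 le_rfl hr using 1; omega
  · rcases hj (w - 1) (by omega) with h | h
    · left; convert hL _ h (i - (w - 1) + 1) (by omega) (by omega) using 1; omega
    · right; convert hL _ h (i - (w - 1) + 1) (by omega) (by omega) using 1; omega

/-- If every element of `L` can be lengthened by `c` and by `c + δ`, with `δ` at most the width, the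
window grows by `δ`. -/
theorem Win.two {L L' : ℕ → Prop} {w : ℕ} (c δ : ℕ) (h : Win L w) (hw : δ ≤ w)
    (hL : ∀ m, L m → L' (m + c) ∧ L' (m + c + δ)) : Win L' (w + δ) := by
  obtain ⟨j, hj⟩ := h
  refine ⟨j + c, fun i hi => ?_⟩
  by_cases hi' : i < w
  · rcases hj i hi' with h | h
    · left; convert (hL _ h).1 using 1; omega
    · right; convert (hL _ h).1 using 1; omega
  · rcases hj (i - δ) (by omega) with h | h
    · left; convert (hL _ h).2 using 1; omega
    · right; convert (hL _ h).2 using 1; omega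

theorem Win.exists {L : ℕ → Prop} {w : ℕ} (h : Win L w) (hw : 1 ≤ w) : ∃ m, L m := by
  obtain ⟨j, hj⟩ := h
  rcases hj 0 hw with h | h <;> exact ⟨_, h⟩

/-- Names for the possible outer neighbours of a vertex set: two virtual vertices `x` and `y`, and the
real vertices. -/
inductive Ext (V : Type*) where
  | x : Ext V
  | y : Ext V
  | v : V → Ext V

/-- The neighbourhood of such a vertex; `x` is joined to `A` and `y` to `B`. -/
def At (G : SimpleGraph V) (A B : Set V) : Ext V → Set V
  | .x => A
  | .y => B
  | .v p => {u | G.Adj u p}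

/-- `o` is an outer neighbour of `D` in the graph induced on `U` together with `x` and `y`. -/
def Nb (G : SimpleGraph V) (U : Finset V) (A B : Set V) (D : Finset V) : Ext V → Prop
  | .x => ∃ u ∈ D, u ∈ A
  | .y => ∃ u ∈ D, u ∈ B
  | .v p => p ∈ U ∧ p ∉ D ∧ ∃ u ∈ D, G.Adj u p

/-- Rooted 2-connectivity: every nonempty `D ⊆ U` has at least two outer neighbours. Equivalently,
adding `x` (joined to `A`), `y` (joined to `B`) and the edge `xy` to `U` gives a 2-connected graph. -/
def RC (G : SimpleGraph V) (U : Finset V) (A B : Set V) : Prop :=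
  U.Nonempty ∧ ∀ D ⊆ U, D.Nonempty → ∀ o, ∃ o', o' ≠ o ∧ Nb G U A B D o'

/-- Rooted 3-connectivity: every proper nonempty `D ⊂ U` has at least three outer neighbours. -/
def TC (G : SimpleGraph V) (U : Finset V) (A B : Set V) : Prop :=
  ∀ D ⊆ U, D.Nonempty → D ≠ U → ∀ o₁ o₂, ∃ o', o' ≠ o₁ ∧ o' ≠ o₂ ∧ Nb G U A B D o'

/-- Indicator of a proposition, as `0` or `1`. -/
noncomputable def ind (p : Prop) : ℕ := if p then 1 else 0

theorem ind_pos {p : Prop} (h : p) : ind p = 1 := if_pos h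
theorem ind_neg {p : Prop} (h : ¬ p) : ind p = 0 := if_neg h
theorem ind_le (p : Prop) : ind p ≤ 1 := by unfold ind; split_ifs <;> simp
theorem ind_mono {p q : Prop} (h : p → q) : ind p ≤ ind q := by
  unfold ind; split_ifs <;> simp_all

/-- The degree of `v` in the graph on `U` together with the virtual vertices `x` and `y`. -/
noncomputable def dg (G : SimpleGraph V) (U : Finset V) (A B : Set V) (v : V) : ℕ :=
  (U.filter (G.Adj v)).card + ind (v ∈ A) + ind (v ∈ B)

/-- Exchange `x` and `y`. -/
def Ext.swap : Ext V → Ext V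
  | .x => .y
  | .y => .x
  | .v p => .v p

theorem Ext.swap_swap (o : Ext V) : o.swap.swap = o := by cases o <;> rfl

theorem Nb_swap {U : Finset V} {A B : Set V} {D : Finset V} {o : Ext V} :
    Nb G U B A D o.swap ↔ Nb G U A B D o := by cases o <;> rfl

theorem RC.symm {U : Finset V} {A B : Set V} (h : RC G U A B) : RC G U B A := by
  refine ⟨h.1, fun D hD hne o => ?_⟩
  obtain ⟨o', h1, h2⟩ := h.2 D hD hne o.swap
  exact ⟨o'.swap, fun h => h1 (by rw [← h, Ext.swap_swap]), Nb_swap.2 h2⟩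

theorem TC.symm {U : Finset V} {A B : Set V} (h : TC G U A B) : TC G U B A := by
  intro D hD hne hDU o p
  obtain ⟨o', h1, h2, h3⟩ := h D hD hne hDU o.swap p.swap
  exact ⟨o'.swap, fun h => h1 (by rw [← h, Ext.swap_swap]),
    fun h => h2 (by rw [← h, Ext.swap_swap]), Nb_swap.2 h3⟩

theorem dg_symm {U : Finset V} {A B : Set V} {v : V} : dg G U B A v = dg G U A B v := by
  unfold dg; omega

theorem Win.symm {U : Finset V} {A B : Set V} {w : ℕ} (h : Win (Pth G U A B) w) :
    Win (Pth G U B A) w := h.shift 0 fun _ hm => hm.symm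

/-! ### Disjoint arms to a set -/

/-- An arm: a path in `U \ D` that starts in `A` and whose last vertex has a neighbour in `D`. The
empty list is an arm when `D` itself meets `A`. -/
def Arm (G : SimpleGraph V) (U D : Finset V) (A : Set V) (l : List V) : Prop :=
  (l = [] ∧ ∃ u ∈ D, u ∈ A) ∨
    ∃ s ∈ A, ∃ e, IsP G (U \ D) s e l ∧ ∃ u ∈ D, G.Adj u e

/-- extend an arm of `insert u D` attaching to `u` by `u` itself -/
theorem Arm.extend {U D : Finset V} {A : Set V} {l : List V} {u : V} (h : Arm G U (insert u D) A l)
    (hu : u ∈ U) (huD : u ∉ D) (hd : ∃ d ∈ D, G.Adj d u) : 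
    Arm G U D A l ∨ Arm G U D A (l ++ [u]) := by
  rcases h with ⟨rfl, w, hw, hwA⟩ | ⟨s, hs, e, hl, w, hw, hwe⟩
  · rcases Finset.mem_insert.1 hw with rfl | hw
    · right; right
      exact ⟨w, hwA, w, IsP.single (by simp [hu, huD]), hd⟩
    · left; left; exact ⟨rfl, w, hw, hwA⟩
  · have hsub : ∀ z ∈ l, z ∈ U \ D ∧ z ≠ u := by
      intro z hz
      have := hl.sub z hz
      simp only [Finset.mem_sdiff, Finset.mem_insert, not_or] at this ⊢
      tauto
    rcases Finset.mem_insert.1 hw with rfl | hw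
    · right; right
      refine ⟨s, hs, w, IsP.append (hl.mono fun z hz => (hsub z hz).1)
        (IsP.single (U := U \ D) (by simp [hu, huD])) hwe.symm ?_ subset_rfl subset_rfl, hd⟩
      simp only [List.disjoint_singleton]
      exact fun h => (hsub _ h).2 rfl
    · left; right
      exact ⟨s, hs, e, hl.mono fun z hz => (hsub z hz).1, w, hw, hwe⟩

theorem Arm.notMem {U D : Finset V} {A : Set V} {l : List V} {u : V}
    (h : Arm G U (insert u D) A l) : u ∉ l := by
  intro hu
  rcases h with ⟨rfl, -⟩ | ⟨s, hs, e, hl, -⟩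
  · simp at hu
  · have := hl.sub u hu
    simp at this

theorem Arm.upTo {U D : Finset V} {A : Set V} {l : List V} {p : V}
    (h : Arm G U D A l) (hp : p ∈ l) : ∃ s ∈ A, ∃ l', IsP G (U \ D) s p l' ∧ l' ⊆ l := by
  rcases h with ⟨rfl, -⟩ | ⟨s, hs, e, hl, -⟩
  · simp at hp
  · obtain ⟨l', h1, h2⟩ := hl.upTo hp
    exact ⟨s, hs, l', h1, h2⟩

/-- The tail of an arm ending at `u` is replaced by a detour `r` avoiding `u`: follow `l` up to the
point where `r` attaches (or start afresh in `A`), then take `r` to `D`. -/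
theorem reroute {U D X : Finset V} {A : Set V} {l : List V} {u : V} 
    (h : Arm G U (insert u D) A l) (hX : ∀ z ∈ X, z ∈ U ∧ z ∉ D ∧ z ∉ l ∧ z ≠ u)
    {a : V} {r : List V} (hr : (r = [] ∧ a ∈ D) ∨ ∃ s, IsP G X a s r ∧ ∃ d ∈ D, G.Adj d s)
    (ha : a ∈ A ∨ ∃ p ∈ l, G.Adj a p) :
    ∃ l', Arm G U D A l' ∧ u ∉ l' ∧ l' ⊆ l ++ r := by
  have hXU : ∀ z ∈ X, z ∈ U \ D := fun z hz => by
    simp only [Finset.mem_sdiff]; exact ⟨(hX z hz).1, (hX z hz).2.1⟩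
  rcases ha with ha | ⟨p, hp, hap⟩
  · refine ⟨r, ?_, ?_, List.subset_append_right _ _⟩
    · rcases hr with ⟨rfl, haD⟩ | ⟨s, hr, hd⟩
      · exact Or.inl ⟨rfl, a, haD, ha⟩
      · exact Or.inr ⟨a, ha, s, hr.mono fun z hz => hXU z (hr.sub z hz), hd⟩
    · rcases hr with ⟨rfl, haD⟩ | ⟨s, hr, hd⟩
      · simp
      · intro hu; exact (hX u (hr.sub u hu)).2.2.2 rfl
  · obtain ⟨s₀, hs₀, l', hl', hsub⟩ := h.upTo hp
    have hu : u ∉ l' := fun hu => h.notMem (hsub hu)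
    have hl'' : IsP G (U \ D) s₀ p l' := hl'.mono fun z hz => by
      have := hl'.sub z hz
      simp only [Finset.mem_sdiff, Finset.mem_insert, not_or] at this ⊢
      tauto
    rcases hr with ⟨rfl, haD⟩ | ⟨s, hr, hd⟩
    · exact ⟨l', Or.inr ⟨s₀, hs₀, p, hl'', a, haD, hap⟩, hu, by simpa using hsub⟩
    · refine ⟨l' ++ r, Or.inr ⟨s₀, hs₀, s, hl''.append (hr.mono fun z hz => hXU z (hr.sub z hz))
        hap.symm ?_ subset_rfl subset_rfl, hd⟩, ?_, ?_⟩
      · intro z hz hz'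
        exact (hX z (hr.sub z hz')).2.2.1 (hsub hz)
      · intro h; rcases List.mem_append.1 h with h | h
        · exact hu h
        · exact (hX u (hr.sub u h)).2.2.2 rfl
      · intro z hz
        rcases List.mem_append.1 hz with h | h
        · exact List.mem_append_left _ (hsub h)
        · exact List.mem_append_right _ h

/-- Two disjoint arms leading to `D`, one from `A` and one from `B`. -/
def Fan (G : SimpleGraph V) (U D : Finset V) (A B : Set V) : Prop :=
  ∃ l₁ l₂, Arm G U D A l₁ ∧ Arm G U D B l₂ ∧ l₁.Disjoint l₂

theorem Fan.symm {U D : Finset V} {A B : Set V} (h : Fan G U D A B) : Fan G U D B A := by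
  obtain ⟨l₁, l₂, h1, h2, h3⟩ := h
  exact ⟨l₂, l₁, h2, h1, h3.symm⟩

/-- If the second arm ends with `u`, the first one is rerouted to avoid `u` through the free set `X`. -/
theorem fan_aux {U D X : Finset V} {A B : Set V} {l₁ l₂ : List V} {u : V} 
    (h₁ : Arm G U (insert u D) A l₁) (h₂ : Arm G U D B (l₂ ++ [u]))
    (hd : l₁.Disjoint l₂)
    (hX : ∀ z ∈ X, z ∈ U ∧ z ∉ D ∧ z ∉ l₁ ∧ z ∉ l₂ ∧ z ≠ u)
    {a : V} {r : List V} (hr : (r = [] ∧ a ∈ D) ∨ ∃ s, IsP G X a s r ∧ ∃ d ∈ D, G.Adj d s)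
    (ha : a ∈ A ∨ ∃ p ∈ l₁, G.Adj a p) : Fan G U D A B := by
  obtain ⟨l', hl', hu, hsub⟩ := reroute h₁ (fun z hz => by have := hX z hz; tauto) hr ha
  refine ⟨l', l₂ ++ [u], hl', h₂, ?_⟩
  intro z hz hz'
  rcases List.mem_append.1 hz' with h | h
  · rcases List.mem_append.1 (hsub hz) with h' | h'
    · exact hd h' h
    · rcases hr with ⟨rfl, -⟩ | ⟨s, hr, -⟩
      · simp at h'
      · exact (hX z (hr.sub z h')).2.2.2.1 h
  · rw [List.mem_singleton] at h
    exact hu (h ▸ hz)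

/-- A form of Menger's theorem for rooted 2-connectivity: every nonempty `D ⊆ U` is reached by two
disjoint arms. The induction enlarges `D` by an outer neighbour `u`; of two arms that both attach at
`u`, one can be rerouted, since otherwise some set containing `D` would have `u` as its only outer
neighbour. -/
theorem fan {U : Finset V} {A B : Set V} (h : RC G U A B) (n : ℕ) : ∀ D ⊆ U, D.Nonempty →
    (U \ D).card = n → Fan G U D A B := by
  induction n with
  | zero =>
    intro D hD hne hn
    have hD' : D = U := by
      apply Finset.Subset.antisymm hD
      rwa [Finset.card_eq_zero, Finset.sdiff_eq_empty_iff_subset] at hn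
    subst hD'
    refine ⟨[], [], Or.inl ⟨rfl, ?_⟩, Or.inl ⟨rfl, ?_⟩, by simp⟩
    · obtain ⟨o, ho, h⟩ := h.2 D hD hne .y
      rcases o with _ | _ | p
      · exact h
      · exact absurd rfl ho
      · exact absurd h.1 h.2.1
    · obtain ⟨o, ho, h⟩ := h.2 D hD hne .x
      rcases o with _ | _ | p
      · exact absurd rfl ho
      · exact h
      · exact absurd h.1 h.2.1
  | succ n ih =>
    intro D hD hne hn
    by_cases hu : ∃ u ∈ U, u ∉ D ∧ ∃ d ∈ D, G.Adj d u
    · obtain ⟨u, huU, huD, hadj⟩ := hu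
      have hc : (U \ insert u D).card = n := by
        have : (U \ D) = insert u (U \ insert u D) := by
          ext z; simp only [Finset.mem_sdiff, Finset.mem_insert]
          by_cases hz : z = u
          · subst hz; simp [huU, huD]
          · simp [hz]
        rw [this, Finset.card_insert_of_notMem (by simp)] at hn
        omega
      obtain ⟨l₁, l₂, h1, h2, hd⟩ := ih (insert u D) (Finset.insert_subset huU hD)
        ⟨u, Finset.mem_insert_self _ _⟩ hc
      have hu1 := h1.notMem
      have hu2 := h2.notMem
      rcases h1.extend huU huD hadj with h1' | h1'
      · rcases h2.extend huU huD hadj with h2' | h2'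
        · exact ⟨l₁, l₂, h1', h2', hd⟩
        · refine ⟨l₁, _, h1', h2', ?_⟩
          simp [List.disjoint_append_right, hd, hu1]
      rcases h2.extend huU huD hadj with h2' | h2'
      · refine ⟨_, l₂, h1', h2', ?_⟩
        simp [List.disjoint_append_left, hd, hu2]
      let Bt : Set V := {z | (z ∈ A ∨ ∃ p ∈ l₁, G.Adj z p) ∨ (z ∈ B ∨ ∃ p ∈ l₂, G.Adj z p)}
      let X := U.filter fun z => z ∉ D ∧ z ∉ l₁ ∧ z ∉ l₂ ∧ z ≠ u
      have hX : ∀ z, z ∈ X ↔ z ∈ U ∧ z ∉ D ∧ z ∉ l₁ ∧ z ∉ l₂ ∧ z ≠ u := by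
        intro z; simp [X]
      have key : ∃ a ∈ Bt, ∃ r : List V, (r = [] ∧ a ∈ D) ∨
          ∃ s, IsP G X a s r ∧ ∃ d ∈ D, G.Adj d s := by
        by_cases h0 : ∃ a ∈ D, a ∈ Bt
        · obtain ⟨a, haD, haB⟩ := h0
          exact ⟨a, haB, [], Or.inl ⟨rfl, haD⟩⟩
        rcases path_or_closed (G := G) X Bt {z | ∃ d ∈ D, G.Adj d z} with ⟨m, hm⟩ | ⟨C, hCX, hC1, hC2, hC3⟩
        · obtain ⟨a, ha, b, hb, r, hr, -⟩ := hm
          exact ⟨a, ha, r, Or.inr ⟨b, hr, hb⟩⟩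
        · exfalso
          -- `D` with everything outside `C`, the arms and `u` has `u` as its only outer neighbour, against `RC`
          let E := D ∪ (X \ C)
          have hE : E ⊆ U := by
            intro z hz
            rcases Finset.mem_union.1 hz with hz | hz
            · exact hD hz
            · exact ((hX z).1 (Finset.mem_sdiff.1 hz).1).1
          have hEB : ∀ z ∈ E, z ∉ Bt := by
            intro z hz hzB
            rcases Finset.mem_union.1 hz with hz | hz
            · exact h0 ⟨z, hz, hzB⟩
            · rw [Finset.mem_sdiff] at hz
              exact hz.2 (hC1 z hz.1 hzB)
          obtain ⟨o, ho, hN⟩ := h.2 E hE (hne.mono Finset.subset_union_left) (.v u)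
          rcases o with _ | _ | p
          · obtain ⟨w, hw, hwA⟩ := hN
            exact hEB w hw (Or.inl (Or.inl hwA))
          · obtain ⟨w, hw, hwA⟩ := hN
            exact hEB w hw (Or.inr (Or.inl hwA))
          · obtain ⟨hpU, hpE, w, hw, hwp⟩ := hN
            have hpu : p ≠ u := fun h => ho (by rw [h])
            by_cases hp1 : p ∈ l₁
            · exact hEB w hw (Or.inl (Or.inr ⟨p, hp1, hwp⟩))
            by_cases hp2 : p ∈ l₂
            · exact hEB w hw (Or.inr (Or.inr ⟨p, hp2, hwp⟩))
            have hpD : p ∉ D := fun h => hpE (Finset.mem_union_left _ h)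
            have hpX : p ∈ X := (hX p).2 ⟨hpU, hpD, hp1, hp2, hpu⟩
            have hpC : p ∈ C := by
              by_contra hpC
              exact hpE (Finset.mem_union_right _ (Finset.mem_sdiff.2 ⟨hpX, hpC⟩))
            rcases Finset.mem_union.1 hw with hw | hw
            · exact hC2 p hpC ⟨w, hw, hwp⟩
            · rw [Finset.mem_sdiff] at hw
              exact hw.2 (hC3 p hpC w hw.1 hwp.symm)
      obtain ⟨a, ha, r, hr⟩ := key
      rcases ha with ha | ha
      · exact fan_aux h1 h2' hd (fun z hz => (hX z).1 hz) hr ha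
      · exact (fan_aux h2 h1' hd.symm (fun z hz => by have := (hX z).1 hz; tauto) hr ha).symm
    · have hN : ∀ p, ¬ Nb G U A B D (.v p) := by
        rintro p ⟨h1, h2, h3⟩
        exact hu ⟨p, h1, h2, h3⟩
      refine ⟨[], [], Or.inl ⟨rfl, ?_⟩, Or.inl ⟨rfl, ?_⟩, by simp⟩
      · obtain ⟨o, ho, h⟩ := h.2 D hD hne .y
        rcases o with _ | _ | p
        · exact h
        · exact absurd rfl ho
        · exact absurd h (hN p)
      · obtain ⟨o, ho, h⟩ := h.2 D hD hne .x
        rcases o with _ | _ | p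
        · exact absurd rfl ho
        · exact h
        · exact absurd h (hN p)

/-- the end of an arm is an outer neighbour -/
theorem Arm.toNb {U D : Finset V} {A : Set V} {l : List V} (h : Arm G U D A l) :
    (l = [] ∧ ∃ u ∈ D, u ∈ A) ∨ ∃ e ∈ l, e ∈ U ∧ e ∉ D ∧ (∃ u ∈ D, G.Adj u e) ∧
      ∃ s ∈ A, IsP G (U \ D) s e l := by
  rcases h with h | ⟨s, hs, e, hl, hd⟩
  · exact Or.inl h
  · have := hl.sub _ hl.last_mem
    rw [Finset.mem_sdiff] at this
    exact Or.inr ⟨e, hl.last_mem, this.1, this.2, hd, s, hs, hl⟩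

/-- If `o₁` and `o₂` are the only outer neighbours of `D`, then two disjoint arms extend all paths of
`D` between them to `A`–`B` paths, adding the same number `c` of vertices each time. -/
theorem fan_lift {U D : Finset V} {A B : Set V} (h : RC G U A B) (hD : D ⊆ U) (hne : D.Nonempty)
    {o₁ o₂ : Ext V} (ho : ∀ o, Nb G U A B D o → o = o₁ ∨ o = o₂) :
    ∃ c, ∀ m, Pth G D (At G A B o₁) (At G A B o₂) m → Pth G U A B (m + c) := by
  obtain ⟨l₁, l₂, h1, h2, hd⟩ := fan h _ D hD hne rfl
  -- the arms are attached one after the other; `p₁`, `p₂` are the outer neighbours where they end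
  obtain ⟨p₁, hp₁, hA⟩ : ∃ p₁, (Nb G U A B D p₁ ∧ (∀ e, p₁ = .v e → e ∈ l₁) ∧ p₁ ≠ .y) ∧ ∀ a ∈ At G A B p₁, ∀ b l,
      IsP G D a b l → ∃ s ∈ A, IsP G (U.filter fun z => z ∈ D ∨ z ∈ l₁) s b (l₁ ++ l) := by
    rcases h1.toNb with ⟨rfl, hx⟩ | ⟨e, hel, heU, heD, hadj, s, hs, hl⟩
    · refine ⟨.x, ⟨hx, by simp, by simp⟩, fun a ha b l hl => ⟨a, ha, hl.mono fun z hz => ?_⟩⟩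
      simp [hl.sub z hz, hD (hl.sub z hz)]
    · refine ⟨.v e, ⟨⟨heU, heD, hadj⟩, by rintro _ ⟨⟩; exact hel, by simp⟩, fun a ha b l hl' => ⟨s, hs, ?_⟩⟩
      have : IsP G _ s b (l₁ ++ l) := hl.append (U := U) hl' (SimpleGraph.Adj.symm ha) ?_ Finset.sdiff_subset hD
      · apply this.mono
        intro z hz
        have hzU := this.sub z hz
        rcases List.mem_append.1 hz with h | h
        · simp [hzU, h]
        · simp [hzU, hl'.sub z h]
      · intro z hz hz'
        exact (Finset.mem_sdiff.1 (hl.sub z hz)).2 (hl'.sub z hz')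
  obtain ⟨p₂, hp₂, hB⟩ : ∃ p₂, (Nb G U A B D p₂ ∧ (∀ e, p₂ = .v e → e ∈ l₂) ∧ p₂ ≠ .x) ∧ ∀ b ∈ At G A B p₂, ∀ a l,
      IsP G (U.filter fun z => z ∈ D ∨ z ∈ l₁) a b l → ∃ s ∈ B, IsP G U a s (l ++ l₂.reverse) := by
    rcases h2.toNb with ⟨rfl, hx⟩ | ⟨e, hel, heU, heD, hadj, s, hs, hl⟩
    · refine ⟨.y, ⟨hx, by simp, by simp⟩, fun a ha b l hl => ⟨a, ha, ?_⟩⟩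
      simpa using hl.mono fun z hz => Finset.mem_of_mem_filter _ (hl.sub z hz)
    · refine ⟨.v e, ⟨⟨heU, heD, hadj⟩, by rintro _ ⟨⟩; exact hel, by simp⟩, fun b hb a l hl' => ⟨s, hs, ?_⟩⟩
      refine hl'.append (U := U) hl.reverse hb ?_ (Finset.filter_subset _ _) Finset.sdiff_subset
      intro z hz hz'
      rw [List.mem_reverse] at hz'
      rcases (Finset.mem_filter.1 (hl'.sub z hz)).2 with h | h
      · exact (Finset.mem_sdiff.1 (hl.sub z hz')).2 h
      · exact hd h hz'
  have hne12 : p₁ ≠ p₂ := by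
    intro heq
    subst heq
    rcases p₁ with _ | _ | e
    · exact hp₂.2.2 rfl
    · exact hp₁.2.2 rfl
    · exact hd (hp₁.2.1 e rfl) (hp₂.2.1 e rfl)
  have main : ∀ m, Pth G D (At G A B p₁) (At G A B p₂) m → Pth G U A B (m + (l₁.length + l₂.length)) := by
    rintro m ⟨a, ha, b, hb, l, hl, rfl⟩
    obtain ⟨s, hs, h1⟩ := hA a ha b l hl
    obtain ⟨t, ht, h2⟩ := hB b hb _ _ h1
    exact ⟨s, hs, t, ht, _, h2, by simp; omega⟩
  refine ⟨l₁.length + l₂.length, fun m hm => ?_⟩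
  have q1 := ho _ hp₁.1
  have q2 := ho _ hp₂.1
  rcases q1 with rfl | rfl <;> rcases q2 with rfl | rfl
  · exact absurd rfl hne12
  · exact main m hm
  · exact main m hm.symm
  · exact absurd rfl hne12

/-! ### Two-cuts and an exceptional vertex -/

/-- The path theorem for all vertex sets with fewer than `n` elements. -/
def PS (G : SimpleGraph V) (n : ℕ) : Prop :=
  ∀ U : Finset V, U.card < n → ∀ (A B : Set V) (d : ℕ), RC G U A B → (∀ v ∈ U, d ≤ dg G U A B v) →
    Win (Pth G U A B) d

theorem deg_split {U E S : Finset V} {v : V} (h : ∀ w ∈ U, G.Adj v w → w ∈ E ∨ w ∈ S) :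
    (U.filter (G.Adj v)).card ≤ (E.filter (G.Adj v)).card + (S.filter (G.Adj v)).card := by
  refine le_trans (Finset.card_le_card ?_) (Finset.card_union_le _ _)
  intro w hw
  simp only [Finset.mem_filter, Finset.mem_union] at hw ⊢
  have := h w hw.1 hw.2
  tauto

theorem PS.mono {n m : ℕ} (h : PS G n) (hm : m ≤ n) : PS G m :=
  fun U hU => h U (by omega)

/-- The real vertices among a possible outer neighbour, as a finset. -/
def Ext.fin : Ext V → Finset V
  | .x => ∅
  | .y => ∅
  | .v p => {p}

/-- If `o₁` and `o₂` are the only outer neighbours of `D`, then `D` with these as its new roots is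
again rooted 2-connected. -/
theorem RC.sub {U D : Finset V} {A B : Set V} (h : RC G U A B) (hD : D ⊆ U) (hne : D.Nonempty)
    {o₁ o₂ : Ext V} (ho : ∀ o, Nb G U A B D o → o = o₁ ∨ o = o₂) :
    RC G D (At G A B o₁) (At G A B o₂) := by
  refine ⟨hne, fun D' hD' hne' o => ?_⟩
  let ex : Ext V → Ext V := fun o => match o with
    | .x => o₁
    | .y => o₂
    | .v q => .v q
  obtain ⟨p, hp, hN⟩ := h.2 D' (hD'.trans hD) hne' (ex o)
  have hN' : (∃ q ∈ D, p = .v q) ∨ (p = o₁ ∨ p = o₂) ∧ ∃ u ∈ D', u ∈ At G A B p := by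
    rcases p with _ | _ | q
    · right
      obtain ⟨u, hu, huA⟩ := hN
      exact ⟨ho .x ⟨u, hD' hu, huA⟩, u, hu, huA⟩
    · right
      obtain ⟨u, hu, huA⟩ := hN
      exact ⟨ho .y ⟨u, hD' hu, huA⟩, u, hu, huA⟩
    · by_cases hq : q ∈ D
      · exact Or.inl ⟨q, hq, rfl⟩
      · right
        obtain ⟨hqU, hqD', u, hu, huA⟩ := hN
        exact ⟨ho (.v q) ⟨hqU, hq, u, hD' hu, huA⟩, u, hu, huA⟩
  rcases hN' with ⟨q, hq, rfl⟩ | ⟨rfl | rfl, hu⟩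
  · refine ⟨.v q, ?_, hq, hN.2.1, hN.2.2⟩
    rintro rfl
    exact hp rfl
  · refine ⟨.x, ?_, hu⟩
    rintro rfl
    exact hp rfl
  · refine ⟨.y, ?_, hu⟩
    rintro rfl
    exact hp rfl

/-- Passing to `D` with its only outer neighbours as roots does not decrease degrees. -/
theorem dg_sub {U D : Finset V} {A B : Set V} {v : V} (hv : v ∈ D)
    {o₁ o₂ : Ext V} (ho : ∀ o, Nb G U A B D o → o = o₁ ∨ o = o₂) (hne : o₁ ≠ o₂) :
    dg G U A B v ≤ dg G D (At G A B o₁) (At G A B o₂) v := by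
  have h1 : (U.filter (G.Adj v)).card ≤ (D.filter (G.Adj v)).card +
      ((o₁.fin ∪ o₂.fin).filter (G.Adj v)).card := by
    apply deg_split
    intro w hw hvw
    by_cases hwD : w ∈ D
    · exact Or.inl hwD
    · right
      rcases ho (.v w) ⟨hw, hwD, v, hv, hvw⟩ with h | h
      · rw [← h]; simp [Ext.fin]
      · rw [← h]; simp [Ext.fin]
  have hx : v ∈ A → Ext.x = o₁ ∨ Ext.x = o₂ := fun h => ho .x ⟨v, hv, h⟩
  have hy : v ∈ B → Ext.y = o₁ ∨ Ext.y = o₂ := fun h => ho .y ⟨v, hv, h⟩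
  unfold dg
  have h2 : ((o₁.fin ∪ o₂.fin).filter (G.Adj v)).card ≤
    (o₁.fin.filter (G.Adj v)).card + (o₂.fin.filter (G.Adj v)).card := by
    rw [Finset.filter_union]; exact Finset.card_union_le _ _
  have key : ∀ o : Ext V, (o.fin.filter (G.Adj v)).card ≤ ind (v ∈ At G A B o) := by
    intro o
    rcases o with _ | _ | q
    · simp [Ext.fin]
    · simp [Ext.fin]
    · simp only [Ext.fin, Finset.filter_singleton]
      split_ifs with h
      · rw [ind_pos (by exact h)]; simp
      · simp
  have k1 := key o₁
  have k2 := key o₂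
  have hx' : (Ext.x = o₁ ∨ Ext.x = o₂) ∨ ind (v ∈ A) = 0 := by
    by_cases h : v ∈ A
    · exact Or.inl (hx h)
    · exact Or.inr (ind_neg h)
  have hy' : (Ext.y = o₁ ∨ Ext.y = o₂) ∨ ind (v ∈ B) = 0 := by
    by_cases h : v ∈ B
    · exact Or.inl (hy h)
    · exact Or.inr (ind_neg h)
  clear hx hy ho
  rcases o₁ with _ | _ | p <;> rcases o₂ with _ | _ | q <;>
    simp only [reduceCtorEq, or_false, false_or, true_or, or_true] at hx' hy' <;>
    first
    | exact absurd rfl hne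
    | (simp only [At, Ext.fin, Finset.filter_empty, Finset.card_empty] at *; omega)

/-- A proper subset with at most two outer neighbours settles the claim: the smaller instance is
lifted by `fan_lift`. -/
theorem twocut {U D : Finset V} {A B : Set V} {d : ℕ} (h : RC G U A B) (ih : PS G U.card)
    (hD : D ⊆ U) (hne : D.Nonempty) (hDU : D ≠ U)
    {o₁ o₂ : Ext V} (ho : ∀ o, Nb G U A B D o → o = o₁ ∨ o = o₂)
    (hd : ∀ v ∈ D, d ≤ dg G U A B v) : Win (Pth G U A B) d := by
  obtain ⟨c, hc⟩ := fan_lift h hD hne ho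
  have h12 : o₁ ≠ o₂ := by
    rintro rfl
    obtain ⟨o', h1, h2⟩ := h.2 D hD hne o₁
    rcases ho _ h2 with h | h <;> exact h1 h
  have := ih D (Finset.card_lt_card (hD.ssubset_of_ne hDU)) _ _ d (h.sub hD hne ho)
    (fun v hv => (hd v hv).trans (dg_sub hv ho h12))
  exact this.shift c hc

/-- A single vertex `z` without a degree condition costs one unit of width. Either deleting `z` leaves a
rooted 2-connected set, or some set with only one outer neighbour `o` after the deletion has only
`o` and `z` as outer neighbours in `F`. -/
theorem PQ {F : Finset V} {A B : Set V} {d : ℕ} {z : V} (h : RC G F A B) (ih : PS G F.card)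
    (hz : z ∈ F) (hu : ∃ u ∈ F, u ≠ z) (hd : ∀ v ∈ F, v ≠ z → d + 1 ≤ dg G F A B v) :
    Win (Pth G F A B) d := by
  have hne : (F.erase z).Nonempty := by
    obtain ⟨u, hu, huz⟩ := hu
    exact ⟨u, Finset.mem_erase.2 ⟨huz, hu⟩⟩
  by_cases hR : RC G (F.erase z) A B
  · have := ih (F.erase z) (Finset.card_erase_lt_of_mem hz) A B d hR ?_
    · exact this.shift 0 fun m hm => hm.mono (Finset.erase_subset _ _) (fun _ _ h => h) (fun _ _ h => h)
    · intro v hv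
      rw [Finset.mem_erase] at hv
      have h1 := hd v hv.2 hv.1
      have h2 : (F.filter (G.Adj v)).card ≤ ((F.erase z).filter (G.Adj v)).card +
          (({z} : Finset V).filter (G.Adj v)).card := by
        apply deg_split
        intro w hw _
        by_cases hwz : w = z
        · right; simpa using hwz
        · left; simp [hwz, hw]
      have h3 : (({z} : Finset V).filter (G.Adj v)).card ≤ 1 :=
        (Finset.card_filter_le _ _).trans (by simp)
      unfold dg at h1 ⊢
      omega
  · have : ∃ D ⊆ F.erase z, D.Nonempty ∧ ∃ o, ∀ o', Nb G (F.erase z) A B D o' → o' = o := by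
      by_contra hcon
      apply hR
      refine ⟨hne, fun D hD hDne o => ?_⟩
      by_contra hno
      exact hcon ⟨D, hD, hDne, o, fun o' ho' => by
        by_contra hoo; exact hno ⟨o', hoo, ho'⟩⟩
    obtain ⟨D, hD, hDne, o, ho⟩ := this
    have hzD : z ∉ D := fun h => by simpa using hD h
    have := twocut (d := d + 1) (o₁ := o) (o₂ := .v z) h ih (hD.trans (Finset.erase_subset _ _)) hDne
      (by rintro rfl; exact hzD hz) ?_ ?_
    · exact this.mono_len (by omega)
    · intro o' ho'
      rcases o' with _ | _ | p
      · left; exact ho _ ho'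
      · left; exact ho _ ho'
      · by_cases hpz : p = z
        · right; rw [hpz]
        · left
          exact ho _ ⟨Finset.mem_erase.2 ⟨hpz, ho'.1⟩, ho'.2⟩
    · intro v hv
      have := Finset.mem_erase.1 (hD hv)
      exact hd v this.2 this.1

/-! ### Growing from a clique or from the neighbours of a root -/

theorem RC.dg_pos {U : Finset V} {A B : Set V} (h : RC G U A B) {v : V} (hv : v ∈ U) :
    1 ≤ dg G U A B v := by
  obtain ⟨o, -, hN⟩ := h.2 {v} (by simpa using hv) (by simp) .x
  unfold dg
  rcases o with _ | _ | p
  · obtain ⟨u, hu, huA⟩ := hN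
    rw [Finset.mem_singleton] at hu
    rw [ind_pos (hu ▸ huA)]; omega
  · obtain ⟨u, hu, huA⟩ := hN
    rw [Finset.mem_singleton] at hu
    rw [ind_pos (p := v ∈ B) (hu ▸ huA)]; omega
  · obtain ⟨hp, -, u, hu, huA⟩ := hN
    rw [Finset.mem_singleton] at hu
    have : 0 < (U.filter (G.Adj v)).card := Finset.card_pos.2 ⟨p, by simp [hp, ← hu, huA]⟩
    omega

/-- edges leave every proper nonempty part of a component -/
theorem comp_edge {E : Finset V} (hconn : ∀ D ⊆ E, D.Nonempty → (∀ v ∈ D, ∀ w ∈ E, G.Adj v w → w ∈ D) → D = E)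
    {D : Finset V} (hD : D ⊆ E) (hne : D.Nonempty) (hDE : D ≠ E) :
    ∃ v ∈ D, ∃ w ∈ E, w ∉ D ∧ G.Adj v w := by
  by_contra hcon
  push Not at hcon
  apply hDE
  refine hconn D hD hne fun v hv w hw hvw => ?_
  by_contra hwD
  exact hcon v hv w hw hwD hvw

theorem ind_nbs {S : Finset V} {v : V} : ind (v ∈ nbs G (S : Set V)) = min 1 (S.filter (G.Adj v)).card := by
  by_cases h : v ∈ nbs G (S : Set V)
  · rw [ind_pos h]
    obtain ⟨s, hs, hvs⟩ := h
    have : 0 < (S.filter (G.Adj v)).card := Finset.card_pos.2 ⟨s, by simp [hvs, Finset.mem_coe.1 hs]⟩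
    omega
  · rw [ind_neg h]
    have : (S.filter (G.Adj v)) = ∅ := by
      rw [Finset.filter_eq_empty_iff]
      intro s hs hvs
      exact h ⟨s, hs, hvs⟩
    simp [this]

/-- `S` supplies paths from `A` with each number `1, …, r` of vertices, ending anywhere in `S`. The path
theorem is applied to a component of `U \ S` meeting `B`, rooted at the neighbours of `S` and at `B`,
where each vertex loses at most `r - 1` from its degree; prefixing the paths in `S` makes up for it. -/
theorem ML {U S : Finset V} {A B : Set V} {d r : ℕ} (hT : TC G U A B) (ih : PS G U.card)
    (hdeg : ∀ v ∈ U, d ≤ dg G U A B v) (hSU : S ⊆ U) (hSne : S.Nonempty) (hr : 1 ≤ r)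
    (hp : ∀ s ∈ S, ∀ t, 1 ≤ t → t ≤ r → Pth G S A {s} t)
    (hv : ∀ v ∈ U, v ∉ S → (S.filter (G.Adj v)).card + ind (v ∈ A) ≤ r ∧ (v ∈ A → 2 ≤ r))
    (he : ∃ e ∈ U, e ∉ S ∧ e ∈ B) : Win (Pth G U A B) d := by
  obtain ⟨e, heU, heS, heB⟩ := he
  obtain ⟨E, hEX, heE, hcl, hconn⟩ := exists_comp (G := G) (U \ S) (e := e) (by simp [heU, heS])
  have hEU : E ⊆ U := hEX.trans Finset.sdiff_subset
  have hES : ∀ z ∈ E, z ∉ S := fun z hz => (Finset.mem_sdiff.1 (hEX hz)).2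
  have hRC : RC G E (nbs G S) B := by
    refine ⟨⟨e, heE⟩, fun D hD hne o => ?_⟩
    by_cases hox : o = .x
    · subst hox
      by_cases hDE : D = E
      · exact ⟨.y, by simp, e, hDE ▸ heE, heB⟩
      · obtain ⟨v, hv, w, hw, hwD, hvw⟩ := comp_edge hconn hD hne hDE
        exact ⟨.v w, by simp, hw, hwD, v, hv, hvw⟩
    · by_cases hDS : ∃ u ∈ D, u ∈ nbs G (S : Set V)
      · exact ⟨.x, fun h => hox h.symm, hDS⟩
      · obtain ⟨o', h1, h2, h3⟩ := hT D (hD.trans hEU) hne (by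
          rintro rfl
          obtain ⟨s, hs⟩ := hSne
          exact hES s (hD (hSU hs)) hs) o .x
        rcases o' with _ | _ | q
        · exact absurd rfl h2
        · exact ⟨.y, h1, h3⟩
        · refine ⟨.v q, h1, ?_, h3.2⟩
          obtain ⟨hqU, hqD, u, hu, huq⟩ := h3
          have hqS : q ∉ S := fun hqS => hDS ⟨u, hu, q, hqS, huq⟩
          exact hcl u (hD hu) q (by simp [hqU, hqS]) huq
  have hW := ih E (Finset.card_lt_card (hEU.ssubset_of_ne (by
      rintro rfl
      obtain ⟨s, hs⟩ := hSne
      exact hES s (hSU hs) hs))) _ _ (max (d + 1 - r) 1) hRC (by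
    intro v hvE
    refine max_le ?_ (hRC.dg_pos hvE)
    have h1 := hdeg v (hEU hvE)
    have h2 : (U.filter (G.Adj v)).card ≤ (E.filter (G.Adj v)).card + (S.filter (G.Adj v)).card :=
      deg_split fun w hw hvw => by
        by_cases hwS : w ∈ S
        · exact Or.inr hwS
        · exact Or.inl (hcl v hvE w (by simp [hw, hwS]) hvw)
    have h3 := (hv v (hEU hvE) (hES v hvE)).1
    unfold dg at h1 ⊢
    rw [ind_nbs]
    by_cases hvA : v ∈ A
    · have := (hv v (hEU hvE) (hES v hvE)).2 hvA
      have := ind_le (v ∈ A)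
      omega
    · rw [ind_neg hvA] at h1 h3
      omega)
  have := hW.add (L' := Pth G U A B) (r := r) 0 (le_max_right _ _) hr (by
    intro m hm t ht1 ht2
    obtain ⟨u, huE, ⟨s, hs, hus⟩, hm⟩ := hm.start
    rw [add_zero, add_comm]
    refine Pth.append (hp s hs t ht1 ht2) hm ?_ ?_ hSU hEU
    · rintro _ rfl _ rfl; exact hus.symm
    · rw [Finset.disjoint_left]; exact fun z hz hz' => hES z hz' hz)
  exact this.mono_len (by omega)

/-- The case where both roots have the same neighbourhood `S`: a vertex `b ∈ S` is split off to serve as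
the far end, and a component outside `S` is rooted at the neighbours of `S \ {b}` and of `b`. -/
theorem DL {U S : Finset V} {A B : Set V} {d r : ℕ} (h : RC G U A B) (ih : PS G U.card)
    (hdeg : ∀ v ∈ U, d ≤ dg G U A B v) (hSU : S ⊆ U) (hSne : S ≠ U) (hr : 1 ≤ r)
    (hA : ∀ v ∈ U, v ∈ A ↔ v ∈ S) (hB : ∀ v ∈ U, v ∈ B ↔ v ∈ S)
    (hp : ∀ b ∈ S, ∀ s ∈ S, s ≠ b → ∀ t, 1 ≤ t → t ≤ r → Pth G (S.erase b) A {s} t)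
    (hv : ∀ v ∈ U, v ∉ S → ∀ b ∈ S, ((S.erase b).filter (G.Adj v)).card ≤ r) :
    Win (Pth G U A B) d := by
  obtain ⟨e, heU, heS⟩ := Finset.exists_of_ssubset (hSU.ssubset_of_ne hSne)
  obtain ⟨E, hEX, heE, hcl, hconn⟩ := exists_comp (G := G) (U \ S) (e := e) (by simp [heU, heS])
  have hEU : E ⊆ U := hEX.trans Finset.sdiff_subset
  have hES : ∀ z ∈ E, z ∉ S := fun z hz => (Finset.mem_sdiff.1 (hEX hz)).2
  have hEA : ∀ z ∈ E, z ∉ A := fun z hz h => hES z hz ((hA z (hEU hz)).1 h)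
  have hEB : ∀ z ∈ E, z ∉ B := fun z hz h => hES z hz ((hB z (hEU hz)).1 h)
  have hN : ∀ o, ∃ q ∈ S, Ext.v q ≠ o ∧ ∃ u ∈ E, G.Adj u q := by
    intro o
    obtain ⟨o', ho', hN⟩ := h.2 E hEU ⟨e, heE⟩ o
    rcases o' with _ | _ | q
    · obtain ⟨u, hu, huA⟩ := hN; exact absurd huA (hEA u hu)
    · obtain ⟨u, hu, huA⟩ := hN; exact absurd huA (hEB u hu)
    · refine ⟨q, ?_, ho', hN.2.2⟩
      by_contra hqS
      obtain ⟨hqU, hqE, u, hu, huq⟩ := hN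
      exact hqE (hcl u hu q (by simp [hqU, hqS]) huq)
  obtain ⟨b, hbS, -, hbE⟩ := hN .x
  obtain ⟨c, hcS, hcb, hcE⟩ := hN (.v b)
  have hcb : c ≠ b := fun h => hcb (by rw [h])
  have hRC : RC G E (nbs G (S.erase b : Finset V)) {u | G.Adj u b} := by
    refine ⟨⟨e, heE⟩, fun D hD hne o => ?_⟩
    by_cases hDE : D = E
    · subst hDE
      obtain ⟨u, hu, huc⟩ := hcE
      have hx : Nb G D (nbs G (S.erase b : Finset V)) {u | G.Adj u b} D .x :=
        ⟨u, hu, c, by simp [hcS, hcb], huc⟩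
      by_cases hox : o = .x
      · exact ⟨.y, by simp [hox], hbE⟩
      · exact ⟨.x, fun h => hox h.symm, hx⟩
    · obtain ⟨v, hv, w, hw, hwD, hvw⟩ := comp_edge hconn hD hne hDE
      by_cases how : o = .v w
      · obtain ⟨o', ho', hN⟩ := h.2 D (hD.trans hEU) hne o
        rcases o' with _ | _ | q
        · obtain ⟨u, hu, huA⟩ := hN; exact absurd huA (hEA u (hD hu))
        · obtain ⟨u, hu, huA⟩ := hN; exact absurd huA (hEB u (hD hu))
        · obtain ⟨hqU, hqD, u, hu, huq⟩ := hN
          by_cases hqb : q = b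
          · exact ⟨.y, by simp [how], u, hu, hqb ▸ huq⟩
          by_cases hqS : q ∈ S
          · exact ⟨.x, by simp [how], u, hu, q, by simp [hqS, hqb], huq⟩
          · exact ⟨.v q, ho', hcl u (hD hu) q (by simp [hqU, hqS]) huq, hqD, u, hu, huq⟩
      · exact ⟨.v w, fun h => how h.symm, hw, hwD, v, hv, hvw⟩
  have hW := ih E (Finset.card_lt_card (hEU.ssubset_of_ne (by
      rintro rfl
      exact hES b (hSU hbS) hbS))) _ _ (max (d + 1 - r) 1) hRC (by
    intro v hvE
    refine max_le ?_ (hRC.dg_pos hvE)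
    have h1 := hdeg v (hEU hvE)
    have h2 : (U.filter (G.Adj v)).card ≤ ((E ∪ {b} : Finset V).filter (G.Adj v)).card + ((S.erase b).filter (G.Adj v)).card :=
      deg_split fun w hw hvw => by
        by_cases hwb : w = b
        · left; simp [hwb]
        by_cases hwS : w ∈ S
        · exact Or.inr (by simp [hwS, hwb])
        · left; simp [hcl v hvE w (by simp [hw, hwS]) hvw]
    have h4 : ((E ∪ {b} : Finset V).filter (G.Adj v)).card ≤ (E.filter (G.Adj v)).card + ind (G.Adj v b) := by
      rw [Finset.filter_union]
      refine (Finset.card_union_le _ _).trans ?_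
      rw [Finset.filter_singleton]
      split_ifs with h
      · rw [ind_pos h]; simp
      · simp
    have h3 := hv v (hEU hvE) (hES v hvE) b hbS
    unfold dg at h1 ⊢
    rw [ind_nbs]
    rw [ind_neg (hEA v hvE), ind_neg (hEB v hvE)] at h1
    simp only [Set.mem_ofPred_eq]
    omega)
  have := hW.add (L' := Pth G U A B) (r := r) 1 (le_max_right _ _) hr (by
    intro m hm t ht1 ht2
    obtain ⟨u, huE, ⟨s, hs, hus⟩, hm⟩ := hm.start
    obtain ⟨hsb, hsS⟩ := Finset.mem_erase.1 (Finset.mem_coe.1 hs)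
    rw [add_comm m t]
    have h1 : Pth G (U.erase b) A {u | G.Adj u b} (t + m) := by
      refine Pth.append (hp b hbS s hsS hsb t ht1 ht2) hm ?_ ?_ ?_ ?_
      · rintro _ rfl _ rfl; exact hus.symm
      · rw [Finset.disjoint_left]; exact fun z hz hz' => hES z hz' (Finset.mem_of_mem_erase hz)
      · exact Finset.erase_subset_erase _ hSU
      · intro z hz
        exact Finset.mem_erase.2 ⟨fun h => hES z hz (h ▸ hbS), hEU hz⟩
    refine (Pth.cons (s := b) h1.symm (hSU hbS) (by simp) (Finset.erase_subset _ _)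
      ((hB b (hSU hbS)).2 hbS) ?_).symm
    intro e he; exact SimpleGraph.Adj.symm he)
  exact this.mono_len (by omega)

theorem clique_path {S : Finset V} {A : Set V} (hS : ∀ u ∈ S, ∀ v ∈ S, u ≠ v → G.Adj u v)
    (hA : ∀ u ∈ S, u ∈ A) {s : V} (hs : s ∈ S) {t : ℕ} (h1 : 1 ≤ t) (ht : t ≤ S.card) :
    Pth G S A {s} t := by
  obtain ⟨T, hT, hTc⟩ := Finset.exists_subset_card_eq (s := S.erase s) (n := t - 1) (by
    rw [Finset.card_erase_of_mem hs]; omega)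
  have hTs : ∀ z ∈ T, z ≠ s ∧ z ∈ S := fun z hz => by simpa using hT hz
  have hnd : (T.toList ++ [s]).Nodup := by
    rw [List.nodup_append']
    refine ⟨T.nodup_toList, by simp, ?_⟩
    simp only [List.disjoint_singleton, Finset.mem_toList]
    exact fun h => (hTs s h).1 rfl
  have hsub : ∀ z ∈ T.toList ++ [s], z ∈ S := by
    intro z hz
    rcases List.mem_append.1 hz with h | h
    · exact (hTs z (by simpa using h)).2
    · rw [List.mem_singleton] at h; exact h ▸ hs
  obtain ⟨a, ha⟩ : ∃ a, (T.toList ++ [s]).head? = some a := by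
    cases h : T.toList ++ [s] with
    | nil => simp at h
    | cons a l => exact ⟨a, rfl⟩
  refine ⟨a, hA _ (hsub a (List.mem_of_mem_head? ha)), s, rfl, _, ⟨hnd, ?_, hsub, ha, by simp⟩, ?_⟩
  · apply List.Pairwise.isChain
    refine hnd.imp_of_mem fun {x y} hx hy hxy => hS x (hsub x hx) y (hsub y hy) hxy
  · simp [hTc]; omega

/-- Some two neighbours of a root are adjacent. A maximum clique among the neighbours plays the role
of `S` in `ML` or `DL`; by maximality, a further vertex of `A` misses some vertex of the clique, so
its loss of degree stays within the bound. -/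
theorem step1 {U : Finset V} {A B : Set V} {d : ℕ} (h : RC G U A B) (hT : TC G U A B) (ih : PS G U.card)
    (hdeg : ∀ v ∈ U, d ≤ dg G U A B v)
    (htri : ∃ u ∈ U, u ∈ A ∧ ∃ u' ∈ U, u' ∈ A ∧ G.Adj u u') : Win (Pth G U A B) d := by
  obtain ⟨u, huU, huA, u', huU', huA', huu⟩ := htri
  let P : Finset V → Prop := fun S => (∀ z ∈ S, z ∈ A) ∧ (∀ u ∈ S, ∀ v ∈ S, u ≠ v → G.Adj u v)
  have hPm : ({u, u'} : Finset V) ∈ U.powerset.filter P := by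
    refine Finset.mem_filter.2 ⟨Finset.mem_powerset.2 ?_, ?_, ?_⟩
    · intro z hz; simp at hz; rcases hz with rfl | rfl <;> assumption
    · intro z hz; simp at hz; rcases hz with rfl | rfl <;> assumption
    · intro z hz w hw hzw
      simp at hz hw
      rcases hz with rfl | rfl <;> rcases hw with rfl | rfl
      · exact absurd rfl hzw
      · exact huu
      · exact huu.symm
      · exact absurd rfl hzw
  obtain ⟨S, hS, hmax⟩ := Finset.exists_max_image (U.powerset.filter P) Finset.card ⟨_, hPm⟩
  have hS2 : 2 ≤ S.card := by
    have := hmax _ hPm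
    rwa [Finset.card_pair huu.ne] at this
  obtain ⟨hSU, hSA, hSc⟩ := Finset.mem_filter.1 hS
  rw [Finset.mem_powerset] at hSU
  by_cases he : ∃ e ∈ U, e ∉ S ∧ e ∈ B
  · refine ML hT ih hdeg hSU (Finset.card_pos.1 (by omega)) (r := S.card) (by omega)
      (fun s hs t h1 h2 => clique_path hSc hSA hs h1 h2) (fun v hvU hvS => ⟨?_, fun _ => hS2⟩) he
    by_cases hvA : v ∈ A
    · rw [ind_pos hvA]
      apply Nat.succ_le_of_lt
      refine Finset.card_lt_card (Finset.filter_ssubset.2 ?_)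
      by_contra hcon
      push Not at hcon
      have := hmax (insert v S) (by
        refine Finset.mem_filter.2 ⟨Finset.mem_powerset.2 (Finset.insert_subset hvU hSU), ?_, ?_⟩
        · intro z hz
          rcases Finset.mem_insert.1 hz with rfl | hz
          · exact hvA
          · exact hSA z hz
        · intro z hz w hw hzw
          rcases Finset.mem_insert.1 hz with rfl | hz' <;> rcases Finset.mem_insert.1 hw with rfl | hw'
          · exact absurd rfl hzw
          · exact hcon w hw'
          · exact (hcon z hz').symm
          · exact hSc z hz' w hw' hzw)
      rw [Finset.card_insert_of_notMem hvS] at this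
      omega
    · rw [ind_neg hvA]; exact Finset.card_filter_le _ _
  push Not at he
  have hBS : ∀ e ∈ U, e ∈ B → e ∈ S := fun e heU heB => by
    by_contra hcon; exact he e heU hcon heB
  let T := U.filter (· ∈ B)
  have hTm : ∀ z, z ∈ T ↔ z ∈ U ∧ z ∈ B := fun z => by simp [T]
  have hTS : ∀ z ∈ T, z ∈ S := fun z hz => hBS z ((hTm z).1 hz).1 ((hTm z).1 hz).2
  have hTU : T ⊆ U := Finset.filter_subset _ _
  have hTc : ∀ u ∈ T, ∀ v ∈ T, u ≠ v → G.Adj u v := fun u hu v hv => hSc u (hTS u hu) v (hTS v hv)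
  have hTne : T.Nonempty := by
    obtain ⟨o, ho, hN⟩ := h.2 U subset_rfl h.1 .x
    rcases o with _ | _ | q
    · exact absurd rfl ho
    · obtain ⟨u, hu, huB⟩ := hN; exact ⟨u, (hTm u).2 ⟨hu, huB⟩⟩
    · exact absurd hN.1 hN.2.1
  by_cases he' : ∃ e ∈ U, e ∉ T ∧ e ∈ A
  · apply Win.symm
    refine ML hT.symm ih (by simpa only [dg_symm] using hdeg) hTU hTne (r := T.card) hTne.card_pos
      (fun s hs t h1 h2 => clique_path hTc (fun z hz => ((hTm z).1 hz).2) hs h1 h2) (fun v hvU hvS => ?_) he'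
    have : v ∉ B := fun h => hvS ((hTm v).2 ⟨hvU, h⟩)
    rw [ind_neg this]
    exact ⟨Finset.card_filter_le _ _, fun h => absurd h this⟩
  push Not at he'
  have hA : ∀ v ∈ U, v ∈ A ↔ v ∈ T := by
    intro v hv
    constructor
    · intro hvA; by_contra hcon; exact he' v hv hcon hvA
    · intro hvT; exact hSA v (hTS v hvT)
  have hB : ∀ v ∈ U, v ∈ B ↔ v ∈ T := fun v hv => by simp [hTm, hv]
  have hT2 : 2 ≤ T.card := by
    refine hS2.trans (Finset.card_le_card fun z hz => (hA z (hSU hz)).1 (hSA z hz))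
  by_cases hTU' : T = U
  · have hdU : d ≤ T.card + 1 := by
      have h1 := hdeg u huU
      unfold dg at h1
      have h2 := ind_le (u ∈ A)
      have h3 := ind_le (u ∈ B)
      have h4 : (U.filter (G.Adj u)).card < U.card :=
        Finset.card_lt_card (Finset.filter_ssubset.2 ⟨u, huU, G.loopless.irrefl u⟩)
      rw [← hTU'] at h4 h1
      omega
    have key : ∀ t, 1 ≤ t → t ≤ T.card → Pth G U A B t := by
      intro t h1 h2
      have := clique_path (A := A) hTc (fun z hz => hSA z (hTS z hz)) ((hA u huU).1 huA) h1 h2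
      refine this.mono hTU (fun _ _ h => h) ?_
      rintro z hz rfl
      exact (hB z (hTU hz)).2 hz
    refine ⟨0, fun i hi => ?_⟩
    by_cases hi0 : i = 0
    · subst hi0; right; exact key _ (by omega) (by omega)
    · left; exact key _ (by omega) (by omega)
  · refine DL h ih hdeg hTU hTU' (r := T.card - 1) (by omega) hA hB ?_ ?_
    · intro b hb s hs hsb t h1 h2
      refine clique_path (fun u hu v hv => hTc u (Finset.mem_of_mem_erase hu) v (Finset.mem_of_mem_erase hv))
        (fun z hz => (hA z (hTU (Finset.mem_of_mem_erase hz))).2 (Finset.mem_of_mem_erase hz))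
        (Finset.mem_erase.2 ⟨hsb, hs⟩) h1 ?_
      rw [Finset.card_erase_of_mem hb]; exact h2
    · intro v hv hvT b hb
      refine (Finset.card_filter_le _ _).trans ?_
      rw [Finset.card_erase_of_mem hb]

/-- The set `A` is independent and no vertex has two neighbours in it: `S = U ∩ A` works with `r = 1`. -/
theorem step2 {U : Finset V} {A B : Set V} {d : ℕ} (h : RC G U A B) (hT : TC G U A B) (ih : PS G U.card)
    (hdeg : ∀ v ∈ U, d ≤ dg G U A B v) (hd : 3 ≤ d)
    (hind : ∀ u ∈ U, u ∈ A → ∀ u' ∈ U, u' ∈ A → ¬ G.Adj u u') 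
    (hone : ∀ v ∈ U, ((U.filter (· ∈ A)).filter (G.Adj v)).card ≤ 1) : Win (Pth G U A B) d := by
  have hnex : ∃ u ∈ U, u ∈ A := by
    obtain ⟨o, ho, hN⟩ := h.2 U subset_rfl h.1 .y
    rcases o with _ | _ | q
    · exact hN
    · exact absurd rfl ho
    · exact absurd hN.1 hN.2.1
  have hney : ∃ u ∈ U, u ∈ B := by
    obtain ⟨o, ho, hN⟩ := h.2 U subset_rfl h.1 .x
    rcases o with _ | _ | q
    · exact absurd rfl ho
    · exact hN
    · exact absurd hN.1 hN.2.1
  have hsing : ∀ (S : Finset V) (A : Set V), (∀ z ∈ S, z ∈ A) → ∀ s ∈ S, ∀ t, 1 ≤ t → t ≤ 1 →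
      Pth G S A {s} t := by
    intro S A hSA s hs t h1 h2
    obtain rfl : t = 1 := by omega
    exact Pth.single hs (hSA s hs) rfl
  let S := U.filter (· ∈ A)
  have hSm : ∀ z, z ∈ S ↔ z ∈ U ∧ z ∈ A := fun z => by simp [S]
  have hSU : S ⊆ U := Finset.filter_subset _ _
  by_cases he : ∃ e ∈ U, e ∉ S ∧ e ∈ B
  · refine ML hT ih hdeg hSU ?_ le_rfl
      (hsing S A fun z hz => ((hSm z).1 hz).2) (fun v hvU hvS => ?_) he
    · obtain ⟨u, h1, h2⟩ := hnex; exact ⟨u, (hSm u).2 ⟨h1, h2⟩⟩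
    · have : v ∉ A := fun h => hvS ((hSm v).2 ⟨hvU, h⟩)
      rw [ind_neg this]
      exact ⟨hone v hvU, fun h => absurd h this⟩
  push Not at he
  have hBS : ∀ e ∈ U, e ∈ B → e ∈ S := fun e heU heB => by
    by_contra hcon; exact he e heU hcon heB
  let T := U.filter (· ∈ B)
  have hTm : ∀ z, z ∈ T ↔ z ∈ U ∧ z ∈ B := fun z => by simp [T]
  have hTS : T ⊆ S := fun z hz => hBS z ((hTm z).1 hz).1 ((hTm z).1 hz).2
  have hTU : T ⊆ U := Finset.filter_subset _ _
  by_cases he' : ∃ e ∈ U, e ∉ T ∧ e ∈ A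
  · apply Win.symm
    refine ML hT.symm ih (by simpa only [dg_symm] using hdeg) hTU ?_ le_rfl
      (hsing T B fun z hz => ((hTm z).1 hz).2) (fun v hvU hvS => ?_) he'
    · obtain ⟨u, h1, h2⟩ := hney; exact ⟨u, (hTm u).2 ⟨h1, h2⟩⟩
    · have : v ∉ B := fun h => hvS ((hTm v).2 ⟨hvU, h⟩)
      rw [ind_neg this]
      exact ⟨(Finset.card_le_card (Finset.filter_subset_filter _ hTS)).trans (hone v hvU), fun h => absurd h this⟩
  push Not at he'
  have hST : S = T := by
    apply Finset.Subset.antisymm _ hTS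
    intro z hz
    by_contra hcon
    exact he' z (hSU hz) hcon ((hSm z).1 hz).2
  refine DL h ih hdeg hSU ?_ le_rfl (fun v hv => by simp [hSm, hv])
    (fun v hv => by rw [hST]; simp [hTm, hv]) ?_ ?_
  · intro hSU'
    obtain ⟨u, huU, huA⟩ := hnex
    have h1 := hdeg u huU
    have h2 : U.filter (G.Adj u) = ∅ := by
      rw [Finset.filter_eq_empty_iff]
      intro z hz
      rw [← hSU'] at hz
      exact hind u huU huA z (hSU hz) ((hSm z).1 hz).2
    unfold dg at h1
    rw [h2, Finset.card_empty] at h1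
    have h3 := ind_le (u ∈ A)
    have h4 := ind_le (u ∈ B)
    omega
  · intro b hb s hs hsb
    exact hsing _ _ (fun z hz => ((hSm z).1 (Finset.mem_of_mem_erase hz)).2) s (Finset.mem_erase.2 ⟨hsb, hs⟩)
  · intro v hv hvT b hb
    exact (Finset.card_le_card (Finset.filter_subset_filter _ (Finset.erase_subset _ _))).trans (hone v hv)

/-! ### Two root neighbours with a common neighbour, and the path theorem -/

theorem filter_insert_le (S : Finset V) (a v : V) :
    ((insert a S).filter (G.Adj v)).card ≤ ind (G.Adj v a) + (S.filter (G.Adj v)).card := by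
  rw [Finset.filter_insert]
  split_ifs with h
  · rw [ind_pos h, add_comm]; exact Finset.card_insert_le _ _
  · omega

theorem filter_singleton_card (a v : V) :
    (({a} : Finset V).filter (G.Adj v)).card = ind (G.Adj v a) := by
  rw [Finset.filter_singleton]
  split_ifs with h
  · rw [ind_pos h]; simp
  · rw [ind_neg h]; simp

/-- A path leaving `X` next to `b` or `b'` can be prefixed by that vertex alone, or by the other one of
the two, then `a`, then that vertex: one or three extra vertices. -/
theorem pre3 {U X : Finset V} {A A' B : Set V} {a b b' : V} {m : ℕ} (haU : a ∈ U) (hbU : b ∈ U) (hb'U : b' ∈ U)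
    (hbA : b ∈ A) (hb'A : b' ∈ A) (hab : G.Adj a b) (hab' : G.Adj a b') (hbb : b ≠ b')
    (hXU : X ⊆ U) (hX : ∀ z ∈ X, z ≠ a ∧ z ≠ b ∧ z ≠ b')
    (hA' : ∀ z ∈ X, z ∈ A' → G.Adj z b ∨ G.Adj z b') (hm : Pth G X A' B m) :
    Pth G U A B (m + 1) ∧ Pth G U A B (m + 1 + 2) := by
  have key : ∀ {b b'}, b ∈ U → b' ∈ U → b ∈ A → b' ∈ A → G.Adj a b → G.Adj a b' → b ≠ b' →
      (∀ z ∈ X, z ≠ a ∧ z ≠ b ∧ z ≠ b') → ∀ u, G.Adj u b → Pth G X {u} B m →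
      Pth G U A B (m + 1) ∧ Pth G U A B (m + 1 + 2) := by
    intro b b' hbU hb'U hbA hb'A hab hab' hbb hX u hub hm
    have hbX : b ∉ X := fun h => (hX b h).2.1 rfl
    have hb'X : b' ∉ X := fun h => (hX b' h).2.2 rfl
    have haX : a ∉ X := fun h => (hX a h).1 rfl
    have h1 : ∀ A : Set V, b ∈ A → Pth G (insert b X) A B (m + 1) := fun A hbA =>
      Pth.cons hm (Finset.mem_insert_self _ _) hbX (Finset.subset_insert _ _) hbA
        (by rintro _ rfl; exact hub.symm)
    have h2 : Pth G (insert a (insert b X)) {a} B (m + 1 + 1) :=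
      Pth.cons (h1 {b} rfl) (Finset.mem_insert_self _ _) (by simp [haX, hab.ne]) (Finset.subset_insert _ _) rfl
        (by rintro _ rfl; exact hab)
    refine ⟨(h1 A hbA).mono (Finset.insert_subset hbU hXU) (fun _ _ h => h) (fun _ _ h => h), ?_⟩
    refine Pth.cons h2 hb'U (by simp [hb'X, hab'.ne.symm, hbb.symm])
      (Finset.insert_subset haU (Finset.insert_subset hbU hXU)) hb'A ?_
    rintro _ rfl; exact hab'.symm
  obtain ⟨u, huX, huA, hm⟩ := hm.start
  rcases hA' u huX huA with h | h
  · exact key hbU hb'U hbA hb'A hab hab' hbb hX u h hm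
  · exact key hb'U hbU hb'A hbA hab' hab hbb.symm (fun z hz => by have := hX z hz; tauto) u h hm

/-- For `d ≤ 4`, two paths whose numbers of vertices differ by two suffice. -/
theorem step3small {U : Finset V} {A B : Set V} {d : ℕ} (hT : TC G U A B) (hd : d ≤ 4)
    {a b b' : V} (haU : a ∈ U) (hbU : b ∈ U) (hb'U : b' ∈ U)
    (hbA : b ∈ A) (hb'A : b' ∈ A) (hab : G.Adj a b) (hab' : G.Adj a b') (hbb : b ≠ b') :
    Win (Pth G U A B) d := by
  have fin : ∀ m, Pth G U A B (m + 1) → Pth G U A B (m + 1 + 2) → Win (Pth G U A B) d := by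
    intro m h1 h2
    refine ⟨m, fun i hi => ?_⟩
    have : i = 0 ∨ i = 1 ∨ i = 2 ∨ i = 3 := by omega
    rcases this with rfl | rfl | rfl | rfl
    · right; exact h1
    · left; exact h1
    · right; exact h2
    · left; exact h2
  have hB : ∀ {b b'}, b ∈ U → b' ∈ U → b ∈ A → b' ∈ A → G.Adj a b → G.Adj a b' → b ≠ b' → b ∈ B →
      Win (Pth G U A B) d := by
    intro b b' hbU hb'U hbA hb'A hab hab' hbb hbB
    have h0 : ∀ A : Set V, b ∈ A → Pth G {b} A B 1 := fun A h => Pth.single (by simp) h hbB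
    have h2 : Pth G {a, b} {a} B (1 + 1) :=
      Pth.cons (h0 {b} rfl) (by simp) (by simp [hab.ne]) (by simp) rfl
        (by rintro _ rfl; exact hab)
    refine fin 0 (Pth.single hbU hbA hbB) ?_
    refine Pth.cons h2 hb'U (by simp [hab'.ne.symm, hbb.symm]) ?_ hb'A ?_
    · intro z hz; simp at hz; rcases hz with rfl | rfl <;> assumption
    · rintro _ rfl; exact hab'.symm
  by_cases h1 : b ∈ B
  · exact hB hbU hb'U hbA hb'A hab hab' hbb h1
  by_cases h2 : b' ∈ B
  · exact hB hb'U hbU hb'A hbA hab' hab hbb.symm h2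
  let X := U.filter fun z => z ≠ a ∧ z ≠ b ∧ z ≠ b'
  have hX : ∀ z, z ∈ X ↔ z ∈ U ∧ z ≠ a ∧ z ≠ b ∧ z ≠ b' := fun z => by simp [X]
  rcases path_or_closed (G := G) X {z | G.Adj z b ∨ G.Adj z b'} B with ⟨m, hm⟩ | ⟨D, hDX, hD1, hD2, hD3⟩
  · obtain ⟨h3, h4⟩ := pre3 haU hbU hb'U hbA hb'A hab hab' hbb (Finset.filter_subset _ _)
      (fun z hz => ((hX z).1 hz).2) (fun z _ h => h) hm
    exact fin m h3 h4
  · exfalso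
    let D' := insert b (insert b' D)
    have hm : ∀ z, z ∈ D' ↔ z = b ∨ z = b' ∨ z ∈ D := fun z => by simp [D']
    have hDU : ∀ z ∈ D, z ∈ U := fun z hz => ((hX z).1 (hDX hz)).1
    have haD : a ∉ D' := by
      rw [hm]; push Not
      exact ⟨hab.ne, hab'.ne, fun h => ((hX a).1 (hDX h)).2.1 rfl⟩
    obtain ⟨o, ho1, ho2, hN⟩ := hT D' (by
        intro z hz
        rcases (hm z).1 hz with rfl | rfl | h
        · exact hbU
        · exact hb'U
        · exact hDU z h) ⟨b, (hm b).2 (Or.inl rfl)⟩ (by intro h; exact haD (h ▸ haU)) .x (.v a)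
    rcases o with _ | _ | q
    · exact ho1 rfl
    · obtain ⟨u, hu, huB⟩ := hN
      rcases (hm u).1 hu with rfl | rfl | h
      · exact h1 huB
      · exact h2 huB
      · exact hD2 u h huB
    · obtain ⟨hqU, hqD, u, hu, huq⟩ := hN
      rw [hm] at hqD
      push Not at hqD
      have hqX : q ∈ X := (hX q).2 ⟨hqU, fun h => ho2 (by rw [h]), hqD.1, hqD.2.1⟩
      rcases (hm u).1 hu with rfl | rfl | h
      · exact hqD.2.2 (hD1 q hqX (Or.inl huq.symm))
      · exact hqD.2.2 (hD1 q hqX (Or.inr huq.symm))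
      · exact hqD.2.2 (hD3 u h q hqX huq)

/-- Paths through `D` to `a` and paths from `a` through `F` are concatenated. A window of width three on
the right contains two lengths differing by `δ ∈ {1, 2}`, which enlarges the left window by `δ`. -/
theorem combine {U D F : Finset V} {A B : Set V} {d : ℕ} {a : V} (hDU : D ⊆ U) (hFU : F ⊆ U) (haU : a ∈ U)
    (haD : a ∉ D) (haF : a ∉ F) (hDF : Disjoint D F) (hd : 2 ≤ d)
    (hL : Win (Pth G D A {u | G.Adj u a}) d) (hR : Win (Pth G F {u | G.Adj u a} B) 3) :
    Win (Pth G U A B) (d + 1) := by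
  have hcat : ∀ m m', Pth G D A {u | G.Adj u a} m → Pth G F {u | G.Adj u a} B m' →
      Pth G U A B (m + (m' + 1)) := by
    intro m m' h1 h2
    have h3 : Pth G (insert a F) {a} B (m' + 1) :=
      Pth.cons h2 (Finset.mem_insert_self _ _) haF (Finset.subset_insert _ _) rfl
        (fun e he => SimpleGraph.Adj.symm he)
    refine Pth.append h1 h3 ?_ ?_ hDU (Finset.insert_subset haU hFU)
    · rintro s hs _ rfl; exact hs
    · rw [Finset.disjoint_insert_right]; exact ⟨haD, hDF⟩
  have : ∃ m δ, 1 ≤ δ ∧ δ ≤ 2 ∧ Pth G F {u | G.Adj u a} B m ∧ Pth G F {u | G.Adj u a} B (m + δ) := by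
    obtain ⟨j, hj⟩ := hR
    have h0 := hj 0 (by omega)
    have h1 := hj 1 (by omega)
    have h2 := hj 2 (by omega)
    rcases h0 with h0 | h0
    · rcases h1 with h1 | h1
      · exact ⟨_, 1, le_rfl, by omega, h0, h1⟩
      · exact ⟨_, 2, by omega, by omega, h0, h1⟩
    · rcases h2 with h2 | h2
      · exact ⟨_, 1, le_rfl, by omega, h0, h2⟩
      · exact ⟨_, 2, by omega, by omega, h0, h2⟩
  obtain ⟨m, δ, h1, h2, h3, h4⟩ := this
  refine (hL.two (L' := Pth G U A B) (m + 1) δ (by omega) fun l hl => ⟨hcat _ _ hl h3, ?_⟩).mono_len (by omega)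
  have := hcat _ _ hl h4
  convert this using 1; omega

/-- The virtual vertex `x` and `b, a, b'` form a 4-cycle. Remove `a`, `b`, `b'` and take a component `E` of
the rest meeting `B`, rooted at the neighbours of `b`, `b'` and at `B`.
If it is rooted 2-connected, degrees have dropped by at most two and `pre3` regains two.
Otherwise there is a set `D` avoiding `b` and `b'` whose outer neighbours are among `x`, `a` and some
`v`; take it maximal. Then `D` gives a window of width `d - 1` from `A` to the neighbours of `a`, the
set `F = U \ (D ∪ {a})` gives one of width at least three from the neighbours of `a` to `B` (here `v`
is the exceptional vertex of `PQ`), and `combine` joins them through `a`. -/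
theorem step3main {U : Finset V} {A B : Set V} {d : ℕ} (hT : TC G U A B) (ih : PS G U.card)
    (hdeg : ∀ v ∈ U, d ≤ dg G U A B v) (hd : 5 ≤ d)
    (hind : ∀ u ∈ U, u ∈ A → ∀ u' ∈ U, u' ∈ A → ¬ G.Adj u u') 
    {a b b' : V} (haU : a ∈ U) (hbU : b ∈ U) (hb'U : b' ∈ U)
    (hbA : b ∈ A) (hb'A : b' ∈ A) (hab : G.Adj a b) (hab' : G.Adj a b') (hbb : b ≠ b') 
    (he : ∃ e ∈ U, e ∈ B ∧ e ≠ a ∧ e ≠ b ∧ e ≠ b') :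
    Win (Pth G U A B) d := by
  obtain ⟨e, heU, heB, hea, heb, heb'⟩ := he
  let X := U.filter fun z => z ≠ a ∧ z ≠ b ∧ z ≠ b'
  have hX : ∀ z, z ∈ X ↔ z ∈ U ∧ z ≠ a ∧ z ≠ b ∧ z ≠ b' := fun z => by simp [X]
  obtain ⟨E, hEX, heE, hcl, hconn⟩ := exists_comp (G := G) X (e := e) ((hX e).2 ⟨heU, hea, heb, heb'⟩)
  have hEm : ∀ z ∈ E, z ∈ U ∧ z ≠ a ∧ z ≠ b ∧ z ≠ b' := fun z hz => (hX z).1 (hEX hz)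
  have hEU : E ⊆ U := fun z hz => (hEm z hz).1
  have hEne : E ≠ U := by rintro rfl; exact (hEm a haU).2.1 rfl
  let A' : Set V := nbs G (({b, b'} : Finset V) : Set V)
  have hA'm : ∀ z, z ∈ A' ↔ G.Adj z b ∨ G.Adj z b' := by
    intro z; simp [A', nbs]
  by_cases hRC : RC G E A' B
  · have hW := ih E (Finset.card_lt_card (hEU.ssubset_of_ne hEne)) A' B (d - 2) hRC (by
      intro v hvE
      have h1 := hdeg v (hEU hvE)
      have h2 : (U.filter (G.Adj v)).card ≤ (E.filter (G.Adj v)).card +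
          ((insert a ({b, b'} : Finset V)).filter (G.Adj v)).card :=
        deg_split fun w hw hvw => by
          by_cases hwS : w = a ∨ w = b ∨ w = b'
          · exact Or.inr (by simpa using hwS)
          · push Not at hwS
            exact Or.inl (hcl v hvE w ((hX w).2 ⟨hw, hwS⟩) hvw)
      have h3 := filter_insert_le (G := G) ({b, b'} : Finset V) a v
      have h4 := ind_le (G.Adj v a)
      have h5 : ((({b, b'} : Finset V)).filter (G.Adj v)).card ≤ 2 :=
        (Finset.card_filter_le _ _).trans Finset.card_le_two
      unfold dg at h1 ⊢
      rw [ind_nbs]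
      by_cases hvA : v ∈ A
      · have h6 : (({b, b'} : Finset V)).filter (G.Adj v) = ∅ := by
          rw [Finset.filter_eq_empty_iff]
          intro z hz
          simp at hz
          rcases hz with rfl | rfl
          · exact hind v (hEU hvE) hvA z hbU hbA
          · exact hind v (hEU hvE) hvA z hb'U hb'A
        rw [h6] at h3 ⊢
        have := ind_le (v ∈ A)
        simp only [Finset.card_empty] at h3 ⊢
        omega
      · rw [ind_neg hvA] at h1
        omega)
    refine (hW.two (L' := Pth G U A B) 1 2 (by omega) fun m hm => ?_).mono_len (by omega)
    exact pre3 haU hbU hb'U hbA hb'A hab hab' hbb hEU (fun z hz => (hEm z hz).2)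
      (fun z _ hz => (hA'm z).1 hz) hm
  -- the sets avoiding `b`, `b'` with `x`, `a` and one more vertex as their only outer neighbours
  let P : Finset V → Prop := fun D => D.Nonempty ∧ b ∉ D ∧ b' ∉ D ∧ ∃ v, ∀ o, Nb G U A B D o → o = .x ∨ o = .v a ∨ o = v
  have hPne : ∃ D ⊆ U, P D := by
    by_contra hcon
    apply hRC
    refine ⟨⟨e, heE⟩, fun D hD hne o => ?_⟩
    by_contra hno
    push Not at hno
    apply hcon
    have hox : o ≠ .x := by
      rintro rfl
      by_cases hDE : D = E
      · exact hno .y (by simp) ⟨e, hDE ▸ heE, heB⟩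
      · obtain ⟨v, hv, w, hw, hwD, hvw⟩ := comp_edge hconn hD hne hDE
        exact hno (.v w) (by simp) ⟨hw, hwD, v, hv, hvw⟩
    refine ⟨D, hD.trans hEU, hne, fun h => (hEm b (hD h)).2.2.1 rfl, fun h => (hEm b' (hD h)).2.2.2 rfl, o, ?_⟩
    intro p hp
    have hA'D : ∀ u ∈ D, u ∉ A' := fun u hu huA => hno .x hox.symm ⟨u, hu, huA⟩
    rcases p with _ | _ | q
    · left; rfl
    · right; right; by_contra h; exact hno .y h hp
    · obtain ⟨hqU, hqD, u, hu, huq⟩ := hp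
      by_cases hqa : q = a
      · right; left; rw [hqa]
      by_cases hqb : q = b
      · exact absurd ((hA'm u).2 (Or.inl (hqb ▸ huq))) (hA'D u hu)
      by_cases hqb' : q = b'
      · exact absurd ((hA'm u).2 (Or.inr (hqb' ▸ huq))) (hA'D u hu)
      right; right; by_contra h
      exact hno (.v q) h ⟨hcl u (hD hu) q ((hX q).2 ⟨hqU, hqa, hqb, hqb'⟩) huq, hqD, u, hu, huq⟩
  obtain ⟨D, hDm, hmax⟩ := Finset.exists_max_image (U.powerset.filter P) Finset.card (by
    obtain ⟨D, h1, h2⟩ := hPne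
    exact ⟨D, Finset.mem_filter.2 ⟨Finset.mem_powerset.2 h1, h2⟩⟩)
  obtain ⟨hDU, hDne, hbD, hb'D, v, hv⟩ := Finset.mem_filter.1 hDm
  rw [Finset.mem_powerset] at hDU
  have hDneU : D ≠ U := fun h => hbD (h ▸ hbU)
  have haN : Nb G U A B D (.v a) := by
    obtain ⟨o, h1, h2, h3⟩ := hT D hDU hDne hDneU .x v
    rcases hv o h3 with h | h | h
    · exact absurd h h1
    · exact h ▸ h3
    · exact absurd h h2
  have haD : a ∉ D := haN.2.1
  obtain ⟨hvN, hvx, hva⟩ : Nb G U A B D v ∧ v ≠ .x ∧ v ≠ .v a := by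
    obtain ⟨o, h1, h2, h3⟩ := hT D hDU hDne hDneU .x (.v a)
    rcases hv o h3 with h | h | h
    · exact absurd h h1
    · exact absurd h h2
    · subst h; exact ⟨h3, h1, h2⟩
  have hLeft : Win (Pth G D A {u | G.Adj u a}) (d - 1) := by
    refine ih D (Finset.card_lt_card (hDU.ssubset_of_ne hDneU)) _ _ _ ⟨hDne, fun D' hD' hne' o => ?_⟩ ?_
    · let ex : Ext V → Ext V := fun o => match o with
        | .x => .x
        | .y => .v a
        | .v q => .v q
      obtain ⟨p, hp1, hp2, hN⟩ := hT D' (hD'.trans hDU) hne' (fun h => hbD (hD' (h ▸ hbU))) v (ex o)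
      rcases p with _ | _ | q
      · refine ⟨.x, ?_, hN⟩
        rintro rfl; exact hp2 rfl
      · exfalso
        obtain ⟨u, hu, huB⟩ := hN
        rcases hv .y ⟨u, hD' hu, huB⟩ with h | h | h
        · simp at h
        · simp at h
        · exact hp1 h
      · by_cases hqD : q ∈ D
        · refine ⟨.v q, ?_, hqD, hN.2⟩
          rintro rfl; exact hp2 rfl
        · obtain ⟨hqU, hqD', u, hu, huq⟩ := hN
          rcases hv (.v q) ⟨hqU, hqD, u, hD' hu, huq⟩ with h | h | h
          · simp at h
          · obtain rfl : q = a := by simpa using h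
            refine ⟨.y, ?_, u, hu, huq⟩
            rintro rfl; exact hp2 rfl
          · exact absurd h hp1
    · intro w hw
      have h1 := hdeg w (hDU hw)
      have h2 : (U.filter (G.Adj w)).card ≤ (D.filter (G.Adj w)).card + ((insert a v.fin).filter (G.Adj w)).card :=
        deg_split fun q hq hwq => by
          by_cases hqD : q ∈ D
          · exact Or.inl hqD
          · right
            rcases hv (.v q) ⟨hq, hqD, w, hw, hwq⟩ with h | h | h
            · simp at h
            · obtain rfl : q = a := by simpa using h
              simp
            · rw [← h]; simp [Ext.fin]
      have h3 := filter_insert_le (G := G) v.fin a w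
      have h4 := Finset.card_filter_le v.fin (G.Adj w)
      unfold dg at h1 ⊢
      simp only [Set.mem_ofPred_eq]
      have h5 := ind_le (w ∈ B)
      rcases v with _ | _ | z
      · exact absurd rfl hvx
      · simp only [Ext.fin, Finset.card_empty] at h3 h4 h2
        omega
      · have hwB : w ∉ B := fun h => by
          rcases hv .y ⟨w, hw, h⟩ with h | h | h <;> simp at h
        rw [ind_neg hwB] at h1
        simp only [Ext.fin, Finset.card_singleton] at h3 h4 h2
        omega
  let F := U.filter fun z => z ∉ D ∧ z ≠ a
  have hF : ∀ z, z ∈ F ↔ z ∈ U ∧ z ∉ D ∧ z ≠ a := fun z => by simp [F]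
  have hFU : F ⊆ U := Finset.filter_subset _ _
  have haF : a ∉ F := fun h => ((hF a).1 h).2.2 rfl
  have hFcard : F.card < U.card := Finset.card_lt_card (hFU.ssubset_of_ne fun h => haF (h ▸ haU))
  have hbF : b ∈ F := (hF b).2 ⟨hbU, hbD, hab.ne.symm⟩
  have hb'F : b' ∈ F := (hF b').2 ⟨hb'U, hb'D, hab'.ne.symm⟩
  let ex : Ext V → Ext V := fun o => match o with
    | .x => .v a
    | .y => .y
    | .v q => .v q
  -- the only vertex of `F` with a neighbour in `D` is `v`
  have hDF : ∀ u ∈ D, ∀ w ∈ F, G.Adj u w → v = .v w := by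
    intro u hu w hw huw
    rcases hv (.v w) ⟨hFU hw, ((hF w).1 hw).2.1, u, hu, huw⟩ with h | h | h
    · simp at h
    · exact absurd (by simpa using h) ((hF w).1 hw).2.2
    · exact h.symm
  have hFdeg : ∀ w ∈ F, v ≠ .v w → d - 1 ≤ dg G F {u | G.Adj u a} B w := by
    intro w hw hwv
    have h1 := hdeg w (hFU hw)
    have h2 : (U.filter (G.Adj w)).card ≤ (F.filter (G.Adj w)).card + (({a} : Finset V).filter (G.Adj w)).card :=
      deg_split fun q hq hwq => by
        by_cases hqa : q = a
        · right; simp [hqa]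
        by_cases hqD : q ∈ D
        · exact absurd (hDF q hqD w hw hwq.symm) hwv
        · exact Or.inl ((hF q).2 ⟨hq, hqD, hqa⟩)
    rw [filter_singleton_card] at h2
    unfold dg at h1 ⊢
    simp only [Set.mem_ofPred_eq]
    have h5 := ind_le (w ∈ A)
    omega
  have hRight : Win (Pth G F {u | G.Adj u a} B) 3 := by
    rcases v with _ | _ | z
    · exact absurd rfl hvx
    · refine (ih F hFcard _ _ (d - 1) ⟨⟨b, hbF⟩, fun D' hD' hne' o => ?_⟩ 
        (fun w hw => hFdeg w hw (by simp))).mono_len (by omega)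
      obtain ⟨p, hp1, hp2, hN⟩ := hT D' (hD'.trans hFU) hne' (fun h => haF (hD' (h ▸ haU))) .x (ex o)
      rcases p with _ | _ | q
      · exact absurd rfl hp1
      · refine ⟨.y, ?_, hN⟩
        rintro rfl; exact hp2 rfl
      · obtain ⟨hqU, hqD', u, hu, huq⟩ := hN
        by_cases hqa : q = a
        · subst hqa
          refine ⟨.x, ?_, u, hu, huq⟩
          rintro rfl; exact hp2 rfl
        by_cases hqD : q ∈ D
        · exact absurd (hDF q hqD u (hD' hu) huq.symm) (by simp)
        · refine ⟨.v q, ?_, (hF q).2 ⟨hqU, hqD, hqa⟩, hqD', u, hu, huq⟩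
          rintro rfl; exact hp2 rfl
    · obtain ⟨hzU, hzD, -⟩ := hvN
      have hza : z ≠ a := fun h => hva (by rw [h])
      have hzF : z ∈ F := (hF z).2 ⟨hzU, hzD, hza⟩
      have hDB : ∀ u ∈ D, u ∉ B := fun u hu huB => by
        rcases hv .y ⟨u, hu, huB⟩ with h | h | h <;> simp at h
      refine PQ (z := z) ⟨⟨b, hbF⟩, fun D' hD' hne' o => ?_⟩ (ih.mono hFcard.le) hzF ?_ ?_
      · by_contra hno
        push Not at hno
        by_cases hzD' : z ∈ D'
        · let D'' := D ∪ D'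
          have hD''U : D'' ⊆ U := Finset.union_subset hDU (hD'.trans hFU)
          have haD'' : a ∉ D'' := fun h => by
            rcases Finset.mem_union.1 h with h | h
            · exact haD h
            · exact haF (hD' h)
          have hN'' : ∀ p, Nb G U A B D'' p → p = .x ∨ p = .v a ∨ p = ex o := by
            intro p hp
            by_contra hcon
            push Not at hcon
            rcases p with _ | _ | q
            · exact hcon.1 rfl
            · obtain ⟨u, hu, huB⟩ := hp
              rcases Finset.mem_union.1 hu with hu | hu
              · exact hDB u hu huB
              · refine hno .y ?_ ⟨u, hu, huB⟩
                rintro rfl; exact hcon.2.2 rfl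
            · obtain ⟨hqU, hqD, u, hu, huq⟩ := hp
              have hqa : q ≠ a := fun h => hcon.2.1 (by rw [h])
              rw [Finset.mem_union, not_or] at hqD
              have hqF : q ∈ F := (hF q).2 ⟨hqU, hqD.1, hqa⟩
              rcases Finset.mem_union.1 hu with hu | hu
              · have := hDF u hu q hqF huq
                obtain rfl : z = q := by simpa using this
                exact hqD.2 hzD'
              · refine hno (.v q) ?_ ⟨hqF, hqD.2, u, hu, huq⟩
                rintro rfl; exact hcon.2.2 rfl
          by_cases hox : o = .x
          · subst hox
            obtain ⟨p, h1, h2, h3⟩ := hT D'' hD''U (hDne.mono Finset.subset_union_left)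
              (fun h => haD'' (h ▸ haU)) .x (.v a)
            rcases hN'' p h3 with h | h | h
            · exact h1 h
            · exact h2 h
            · exact h2 h
          · have hb1 : b ∉ D' := fun h => hno .x (Ne.symm hox) ⟨b, h, hab.symm⟩
            have hb2 : b' ∉ D' := fun h => hno .x (Ne.symm hox) ⟨b', h, hab'.symm⟩
            have := hmax D'' (Finset.mem_filter.2 ⟨Finset.mem_powerset.2 hD''U,
              hDne.mono Finset.subset_union_left, by simp [D'', hbD, hb1], by simp [D'', hb'D, hb2],
              ex o, hN''⟩)
            have h2 : D.card < D''.card := Finset.card_lt_card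
              (Finset.subset_union_left.ssubset_of_ne fun h => hzD (h ▸ Finset.mem_union_right _ hzD'))
            omega
        · obtain ⟨p, h1, h2, hN⟩ := hT D' (hD'.trans hFU) hne' (fun h => haF (hD' (h ▸ haU))) .x (ex o)
          rcases p with _ | _ | q
          · exact h1 rfl
          · refine hno .y ?_ hN
            rintro rfl; exact h2 rfl
          · obtain ⟨hqU, hqD', u, hu, huq⟩ := hN
            by_cases hqa : q = a
            · subst hqa
              refine hno .x ?_ ⟨u, hu, huq⟩
              rintro rfl; exact h2 rfl
            by_cases hqD : q ∈ D
            · have := hDF q hqD u (hD' hu) huq.symm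
              obtain rfl : z = u := by simpa using this
              exact hzD' hu
            · refine hno (.v q) ?_ ⟨(hF q).2 ⟨hqU, hqD, hqa⟩, hqD', u, hu, huq⟩
              rintro rfl; exact h2 rfl
      · by_cases h : b = z
        · exact ⟨b', hb'F, fun h' => hbb (h.trans h'.symm)⟩
        · exact ⟨b, hbF, h⟩
      · intro w hw hwz
        have := hFdeg w hw (by intro h; exact hwz (by simpa using h.symm))
        omega
  refine (combine hDU hFU haU haD haF ?_ (d := d - 1) (by omega) hLeft hRight).mono_len (by omega)
  rw [Finset.disjoint_left]
  intro z hz hz'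
  exact ((hF z).1 hz').2.1 hz

/-- `A` is independent and `a` has two neighbours `b`, `b'` in it. By symmetry between the roots,
`step3main` applies unless `A` and `B` both reduce to `{b, b'}`, which is a case of `DL`. -/
theorem step3 {U : Finset V} {A B : Set V} {d : ℕ} (h : RC G U A B) (hT : TC G U A B) (ih : PS G U.card)
    (hdeg : ∀ v ∈ U, d ≤ dg G U A B v)
    (hindA : ∀ u ∈ U, u ∈ A → ∀ u' ∈ U, u' ∈ A → ¬ G.Adj u u')
    (hindB : ∀ u ∈ U, u ∈ B → ∀ u' ∈ U, u' ∈ B → ¬ G.Adj u u')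
    {a b b' : V} (haU : a ∈ U) (hbU : b ∈ U) (hb'U : b' ∈ U)
    (hbA : b ∈ A) (hb'A : b' ∈ A) (hab : G.Adj a b) (hab' : G.Adj a b') (hbb : b ≠ b') :
    Win (Pth G U A B) d := by
  by_cases hd : d ≤ 4
  · exact step3small hT hd haU hbU hb'U hbA hb'A hab hab' hbb
  push Not at hd
  by_cases he : ∃ e ∈ U, e ∈ B ∧ e ≠ a ∧ e ≠ b ∧ e ≠ b'
  · exact step3main hT ih hdeg hd hindA haU hbU hb'U hbA hb'A hab hab' hbb he
  have hB1 : ∀ e ∈ U, e ∈ B → e = a ∨ e = b ∨ e = b' := by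
    intro e heU heB
    by_contra hcon
    push Not at hcon
    exact he ⟨e, heU, heB, hcon⟩
  -- `B` has at least two elements
  have hB2 : ∀ p ∈ U, ∃ e ∈ U, e ∈ B ∧ e ≠ p := by
    intro p hp
    obtain ⟨w, hw, hwp⟩ : ∃ w ∈ U, w ≠ p := by
      by_cases h : p = b
      · exact ⟨b', hb'U, fun h' => hbb (h'.trans h).symm⟩
      · exact ⟨b, hbU, fun h' => h h'.symm⟩
    obtain ⟨o, h1, h2, h3⟩ := hT (U.erase p) (Finset.erase_subset _ _) ⟨w, by simp [hw, hwp]⟩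
      (fun h => by rw [← h] at hp; simp at hp) .x (.v p)
    rcases o with _ | _ | q
    · exact absurd rfl h1
    · obtain ⟨u, hu, huB⟩ := h3
      exact ⟨u, Finset.mem_of_mem_erase hu, huB, Finset.ne_of_mem_erase hu⟩
    · exfalso
      exact h3.2.1 (Finset.mem_erase.2 ⟨fun h => h2 (by rw [h]), h3.1⟩)
  have haB : a ∉ B := by
    intro haB
    obtain ⟨e, heU, heB, hea⟩ := hB2 a haU
    rcases hB1 e heU heB with rfl | rfl | rfl
    · exact hea rfl
    · exact hindB a haU haB e heU heB hab
    · exact hindB a haU haB e heU heB hab'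
  have hbB : b ∈ B := by
    obtain ⟨e, heU, heB, heb⟩ := hB2 b' hb'U
    rcases hB1 e heU heB with rfl | rfl | rfl
    · exact absurd heB haB
    · exact heB
    · exact absurd rfl heb
  have hb'B : b' ∈ B := by
    obtain ⟨e, heU, heB, heb⟩ := hB2 b hbU
    rcases hB1 e heU heB with rfl | rfl | rfl
    · exact absurd heB haB
    · exact absurd rfl heb
    · exact heB
  by_cases he' : ∃ e ∈ U, e ∈ A ∧ e ≠ a ∧ e ≠ b ∧ e ≠ b'
  · exact (step3main hT.symm ih (by simpa only [dg_symm] using hdeg) hd hindB haU hbU hb'U hbB hb'B hab hab' hbb he').symm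
  have hA1 : ∀ e ∈ U, e ∈ A → e = b ∨ e = b' := by
    intro e heU heB
    by_contra hcon
    push Not at hcon
    refine he' ⟨e, heU, heB, ?_, hcon⟩
    rintro rfl
    exact hindA e heU heB b hbU hbA hab
  have hS1 : ∀ s ∈ ({b, b'} : Finset V), (({b, b'} : Finset V).erase s).card = 1 := by
    intro s hs
    rw [Finset.card_erase_of_mem hs, Finset.card_pair hbb]
  refine DL (S := {b, b'}) (r := 1) h ih hdeg ?_ ?_ le_rfl ?_ ?_ ?_ ?_
  · intro z hz; simp at hz; rcases hz with rfl | rfl <;> assumption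
  · intro h; rw [← h] at haU; simp at haU
    rcases haU with h | h
    · exact hab.ne h
    · exact hab'.ne h
  · intro v hv
    simp only [Finset.mem_insert, Finset.mem_singleton]
    refine ⟨hA1 v hv, ?_⟩
    rintro (rfl | rfl) <;> assumption
  · intro v hv
    simp only [Finset.mem_insert, Finset.mem_singleton]
    refine ⟨fun hvB => ?_, ?_⟩
    · rcases hB1 v hv hvB with rfl | h
      · exact absurd hvB haB
      · exact h
    · rintro (rfl | rfl) <;> assumption
  · intro p hp s hs hsp t h1 h2
    obtain rfl : t = 1 := by omega
    refine Pth.single (Finset.mem_erase.2 ⟨hsp, hs⟩) ?_ rfl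
    simp at hs
    rcases hs with rfl | rfl <;> assumption
  · intro v hv hvS p hp
    exact (Finset.card_filter_le _ _).trans (hS1 p hp).le

/-- The path theorem, by induction on the number of vertices. -/
theorem PT (n : ℕ) : PS G n := by
  induction n with
  | zero => intro U hU; omega
  | succ n ih' =>
  intro U hU A B d h hdeg
  have ih : PS G U.card := ih'.mono (by omega)
  by_cases hd : d ≤ 2
  · rcases path_or_closed (G := G) U A B with ⟨m, hm⟩ | ⟨D, hD, hD1, hD2, hD3⟩
    · obtain ⟨m, rfl⟩ : ∃ m', m = m' + 1 := ⟨m - 1, by have := hm.pos; omega⟩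
      refine ⟨m, fun i hi => ?_⟩
      have : i = 0 ∨ i = 1 := by omega
      rcases this with rfl | rfl
      · right; exact hm
      · left; exact hm
    · exfalso
      have hne : D.Nonempty := by
        obtain ⟨o, ho, hN⟩ := h.2 U subset_rfl h.1 .y
        rcases o with _ | _ | q
        · obtain ⟨u, hu, huA⟩ := hN; exact ⟨u, hD1 u hu huA⟩
        · exact absurd rfl ho
        · exact absurd hN.1 hN.2.1
      obtain ⟨o, ho, hN⟩ := h.2 D hD hne .x
      rcases o with _ | _ | q
      · exact absurd rfl ho
      · obtain ⟨u, hu, huB⟩ := hN; exact hD2 u hu huB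
      · obtain ⟨hqU, hqD, u, hu, huq⟩ := hN
        exact hqD (hD3 u hu q hqU huq)
  push Not at hd
  by_cases hT : TC G U A B
  swap
  · unfold TC at hT
    push Not at hT
    obtain ⟨D, hD, hne, hDU, o₁, o₂, ho⟩ := hT
    refine twocut (o₁ := o₁) (o₂ := o₂) h ih hD hne hDU (fun o hN => ?_) (fun v hv => hdeg v (hD hv))
    by_contra hcon
    push Not at hcon
    exact ho o hcon.1 hcon.2 hN
  by_cases htA : ∃ u ∈ U, u ∈ A ∧ ∃ u' ∈ U, u' ∈ A ∧ G.Adj u u'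
  · exact step1 h hT ih hdeg htA
  by_cases htB : ∃ u ∈ U, u ∈ B ∧ ∃ u' ∈ U, u' ∈ B ∧ G.Adj u u'
  · exact (step1 h.symm hT.symm ih (by simpa only [dg_symm] using hdeg) htB).symm
  have hindA : ∀ u ∈ U, u ∈ A → ∀ u' ∈ U, u' ∈ A → ¬ G.Adj u u' :=
    fun u h1 h2 u' h3 h4 h5 => htA ⟨u, h1, h2, u', h3, h4, h5⟩
  have hindB : ∀ u ∈ U, u ∈ B → ∀ u' ∈ U, u' ∈ B → ¬ G.Adj u u' :=
    fun u h1 h2 u' h3 h4 h5 => htB ⟨u, h1, h2, u', h3, h4, h5⟩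
  by_cases hone : ∀ v ∈ U, ((U.filter (· ∈ A)).filter (G.Adj v)).card ≤ 1
  · exact step2 h hT ih hdeg hd hindA hone
  push Not at hone
  obtain ⟨a, haU, ha⟩ := hone
  obtain ⟨b, hb, b', hb', hbb⟩ := Finset.one_lt_card.1 ha
  simp only [Finset.mem_filter] at hb hb'
  exact step3 h hT ih hdeg hindA hindB haU hb.1.1 hb'.1.1 hb.1.2 hb'.1.2 hb.2 hb'.2 hbb

/-- In a rooted 2-connected set where every degree (counting the virtual neighbours) is at least `d`,
the numbers of vertices of `A`–`B` paths contain a window of width `d`. -/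
theorem pathThm {U : Finset V} {A B : Set V} {d : ℕ} (h : RC G U A B)
    (hdeg : ∀ v ∈ U, d ≤ dg G U A B v) : Win (Pth G U A B) d :=
  PT (U.card + 1) U (by omega) A B d h hdeg

/-! ### Cycles from a path and an arc -/

/-- `G` has a cycle of length `t`. -/
def CycL (G : SimpleGraph V) (t : ℕ) : Prop := ∃ u, ∃ c : G.Walk u u, c.IsCycle ∧ c.length = t

theorem CycL.of_list {U : Finset V} {a b : V} {l : List V} (h : IsP G U a b l) (hab : G.Adj b a)
    (h3 : 3 ≤ l.length) : CycL G l.length := by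
  have hne : l ≠ [] := by rintro rfl; simp at h3
  have ha : l.head hne = a := by
    have := h.head; rw [List.head?_eq_some_head hne] at this; simpa using this
  have hb : l.getLast hne = b := by
    have := h.last; rw [List.getLast?_eq_some_getLast hne] at this; simpa using this
  subst ha hb
  let p := SimpleGraph.Walk.ofSupport l hne h.chain
  have hp : p.IsPath := by
    rw [SimpleGraph.Walk.isPath_def]
    simpa [p, SimpleGraph.Walk.support_ofSupport] using h.nodup
  have hl : p.length = l.length - 1 := by simp [p, SimpleGraph.Walk.length_ofSupport]
  refine ⟨_, SimpleGraph.Walk.cons hab p, ?_, ?_⟩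
  · rw [SimpleGraph.Walk.cons_isCycle_iff]
    refine ⟨hp, fun he => ?_⟩
    rw [Sym2.eq_swap] at he
    have := hp.length_eq_one_of_mem_edges he
    omega
  · rw [SimpleGraph.Walk.length_cons]; omega

/-- `f` enumerates cyclically a non-separating induced odd cycle of length `n`, and `T` is its complement.
Connectedness of `T` is stated through closed sets. -/
structure Cy [Fintype V] (G : SimpleGraph V) (n : ℕ) (f : ZMod n → V) (T : Finset V) : Prop where
  three : 3 ≤ n
  odd : Odd n
  inj : Function.Injective f
  adj : ∀ i, G.Adj (f i) (f (i + 1))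
  chord : ∀ i j, G.Adj (f i) (f j) → j = i + 1 ∨ i = j + 1
  memT : ∀ v, v ∈ T ↔ ∀ i, f i ≠ v
  ne : T.Nonempty
  conn : ∀ D ⊆ T, D.Nonempty → (∀ v ∈ D, ∀ w ∈ T, G.Adj v w → w ∈ D) → D = T

/-- A path through `T` between neighbours of `f i` and of `f (i + e)` is closed up by the arc with `e` edges
of the cycle. -/
theorem arc [Fintype V] {n : ℕ} {f : ZMod n → V} {T : Finset V} (hC : Cy G n f T) {i j : ZMod n} {e m : ℕ}
    (h : Pth G T {z | G.Adj z (f i)} {z | G.Adj z (f j)} m) (hj : j = i + e) (he : e < n)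
    (h3 : 2 ≤ m + e) : CycL G (m + e + 1) := by
  obtain ⟨a, ha, b, hb, l, hl, rfl⟩ := h
  have hn : NeZero n := ⟨by have := hC.three; omega⟩
  let r := (List.range (e + 1)).map (fun t : ℕ => f (i + (t : ZMod n)))
  have hr : IsP G (Finset.univ) (f i) (f j) r := by
    refine ⟨?_, ?_, by simp, ?_, ?_⟩
    · refine List.Nodup.map_on ?_ List.nodup_range
      intro x hx y hy hxy
      have h1 := add_left_cancel (hC.inj hxy)
      rw [ZMod.natCast_eq_natCast_iff'] at h1
      rw [List.mem_range] at hx hy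
      rwa [Nat.mod_eq_of_lt (by omega), Nat.mod_eq_of_lt (by omega)] at h1
    · rw [List.isChain_iff_getElem]
      intro t ht
      simp only [r, List.getElem_map, List.getElem_range]
      convert hC.adj (i + (t : ZMod n)) using 2
      push_cast; ring
    · simp [r, List.range_succ_eq_map]
    · simp [r, List.range_succ, hj]
  have hd : l.Disjoint r.reverse := by
    intro z hz hz'
    have h1 := (hC.memT z).1 (hl.sub z hz)
    simp only [r, List.mem_reverse, List.mem_map] at hz'
    obtain ⟨t, -, ht⟩ := hz'
    exact h1 _ ht
  have := CycL.of_list (hl.append hr.reverse hb hd (U := Finset.univ) (Finset.subset_univ _) (Finset.subset_univ _))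
    (SimpleGraph.Adj.symm ha) (by simp [r]; omega)
  simpa [r, add_assoc] using this

/-- The two arcs between `f i` and `f (i + s)` have `s` and `s + 1` edges, so a window of width `w` for the
paths through `T` yields `w` consecutive cycle lengths. -/
theorem antip [Fintype V] {n s : ℕ} {f : ZMod n → V} {T : Finset V} (hC : Cy G n f T) (hn : n = 2 * s + 1)
    {i j : ZMod n} {w : ℕ} (h : Win (Pth G T {z | G.Adj z (f i)} {z | G.Adj z (f j)}) w)
    (hj : j = i + s) : ∃ J, ∀ t < w, CycL G (J + t) := by
  obtain ⟨L, hL⟩ := h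
  have h3 := hC.three
  have hi : i = j + ((s + 1 : ℕ) : ZMod n) := by
    have : ((2 * s + 1 : ℕ) : ZMod n) = 0 := by rw [← hn]; exact ZMod.natCast_self n
    rw [hj]; push_cast at this ⊢; linear_combination (-1 : ZMod n) * this
  refine ⟨L + s + 2, fun t ht => ?_⟩
  rcases hL t ht with h | h
  · have := arc hC h.symm hi (by omega) (by have := h.pos; omega)
    convert this using 1; omega
  · have := arc hC h hj (by omega) (by have := h.pos; omega)
    convert this using 1; omega

/-- If `w ∈ T` is adjacent to `f (m - 1)` and to `f (m + 1)`, then arcs with `s - 1`, `s`, `s + 1` and `s + 2`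
edges lead from `w` to `f (m + s)`; this yields `r + 2` consecutive cycle lengths from a window of
width `r`. -/
theorem fourarc [Fintype V] {n s : ℕ} {f : ZMod n → V} {T : Finset V} (hC : Cy G n f T) (hn : n = 2 * s + 1)
    (hs : 2 ≤ s) {m : ZMod n} {w : V} (hwT : w ∈ T) (hw1 : G.Adj w (f (m - 1))) (hw2 : G.Adj w (f (m + 1)))
    {r : ℕ} (hr : 1 ≤ r)
    (h : Win (Pth G (T.erase w) {z | G.Adj z w} {z | G.Adj z (f (m + s))}) r) :
    ∃ J, ∀ t < r + 2, CycL G (J + t) := by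
  obtain ⟨L, hL⟩ := h
  have h0 : ((2 * s + 1 : ℕ) : ZMod n) = 0 := by rw [← hn]; exact ZMod.natCast_self n
  push_cast at h0
  have key : ∀ l, Pth G (T.erase w) {z | G.Adj z w} {z | G.Adj z (f (m + s))} l →
      CycL G (l + s + 1) ∧ CycL G (l + s + 2) ∧ CycL G (l + s + 3) ∧ CycL G (l + s + 4) := by
    intro l hl
    have hp := hl.pos
    have c1 : Pth G T {z | G.Adj z (f (m - 1))} {z | G.Adj z (f (m + s))} (l + 1) :=
      hl.cons hwT (by simp) (Finset.erase_subset _ _) hw1 (fun e he => SimpleGraph.Adj.symm he)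
    have c2 : Pth G T {z | G.Adj z (f (m + 1))} {z | G.Adj z (f (m + s))} (l + 1) :=
      hl.cons hwT (by simp) (Finset.erase_subset _ _) hw2 (fun e he => SimpleGraph.Adj.symm he)
    refine ⟨?_, ?_, ?_, ?_⟩
    · have := arc hC c2 (e := s - 1) (by rw [Nat.cast_sub (by omega)]; push_cast; ring) (by omega) (by omega)
      convert this using 1; omega
    · have := arc hC c1.symm (e := s) (by linear_combination (-1 : ZMod n) * h0) (by omega) (by omega)
      convert this using 1; omega
    · have := arc hC c1 (e := s + 1) (by push_cast; ring) (by omega) (by omega)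
      convert this using 1; omega
    · have := arc hC c2.symm (e := s + 2) (by push_cast; linear_combination (-1 : ZMod n) * h0) (by omega) (by omega)
      convert this using 1; omega
  refine ⟨L + s + 2, fun t ht => ?_⟩
  rcases lt_or_ge t r with h | h
  · rcases hL t h with h' | h'
    · convert (key _ h').2.1 using 1; omega
    · convert (key _ h').1 using 1; omega
  · rcases hL (r - 1) (by omega) with h' | h'
    · have : t = r ∨ t = r + 1 := by omega
      rcases this with rfl | rfl
      · convert (key _ h').2.2.1 using 1; omega
      · convert (key _ h').2.2.2 using 1; omega
    · have : t = r ∨ t = r + 1 := by omega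
      rcases this with rfl | rfl
      · convert (key _ h').2.1 using 1; omega
      · convert (key _ h').2.2.1 using 1; omega

/-! ### Closed-set form of the connectivity hypotheses -/

theorem closed_all {W : Type*} {H : SimpleGraph W} (hH : H.Preconnected) (P : W → Prop)
    (hP : ∀ a b, P a → H.Adj a b → P b) {a : W} (ha : P a) (b : W) : P b := by
  obtain ⟨p⟩ := hH a b
  induction p with
  | nil => exact ha
  | cons h _ ih => exact ih (hP _ _ ha h)

theorem closed_induce {S : Set V} (hS : (G.induce S).Connected) (D : Finset V)
    (hD : ∀ v ∈ D, v ∈ S) (hne : D.Nonempty) (hcl : ∀ v ∈ D, ∀ w ∈ S, G.Adj v w → w ∈ D) :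
    ∀ z ∈ S, z ∈ D := by
  obtain ⟨a, ha⟩ := hne
  intro z hz
  exact closed_all hS.preconnected (fun v => v.1 ∈ D) (fun x y hx hxy => hcl _ hx _ y.2 (by simpa using hxy))
    (a := ⟨a, hD a ha⟩) ha ⟨z, hz⟩

/-- Closed-set form of 2-connectivity: a nonempty set all of whose outside neighbours equal `p` covers
everything except possibly `p`. -/
def TwoC (G : SimpleGraph V) : Prop :=
  ∀ D : Finset V, D.Nonempty → ∀ p, (∀ v ∈ D, ∀ w, G.Adj v w → w ∈ D ∨ w = p) → ∀ z, z ∈ D ∨ z = p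

theorem twoC_of (h1 : G.Connected) (h2 : ∀ v : V, (G.induce ({v}ᶜ : Set V)).Connected) : TwoC G := by
  intro D hne p hcl z
  by_cases hp : p ∈ D
  · left
    obtain ⟨a, ha⟩ := hne
    refine closed_all h1.preconnected (fun v => v ∈ D) (fun x y hx hxy => ?_) ha z
    rcases hcl x hx y hxy with h | rfl
    · exact h
    · exact hp
  · by_cases hz : z = p
    · exact Or.inr hz
    · left
      refine closed_induce (h2 p) D (fun v hv => by rintro rfl; exact hp hv) hne
        (fun v hv w hw hvw => (hcl v hv w hvw).resolve_right hw) z hz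

/-- A cycle enumerated by the natural numbers below its length. -/
theorem Cy.of_nat [Fintype V] {n : ℕ} {g : ℕ → V} {T : Finset V} (h3 : 3 ≤ n) (hodd : Odd n)
    (ginj : ∀ a < n, ∀ b < n, g a = g b → a = b) (gadj : ∀ t, t + 1 < n → G.Adj (g t) (g (t + 1)))
    (glast : G.Adj (g (n - 1)) (g 0))
    (gch : ∀ a b, a < b → b < n → G.Adj (g a) (g b) → b = a + 1 ∨ (a = 0 ∧ b = n - 1))
    (memT : ∀ v, v ∈ T ↔ ∀ t < n, g t ≠ v) (ne : T.Nonempty)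
    (conn : ∀ D ⊆ T, D.Nonempty → (∀ v ∈ D, ∀ w ∈ T, G.Adj v w → w ∈ D) → D = T) :
    Cy G n (fun z => g z.val) T := by
  have hn : NeZero n := ⟨by omega⟩
  have hval : ∀ i : ZMod n, ((i.val : ℕ) : ZMod n) = i := fun i => ZMod.natCast_zmod_val i
  have hsucc : ∀ i : ZMod n, i.val + 1 < n → (i + 1).val = i.val + 1 := by
    intro i hi
    have : i + 1 = ((i.val + 1 : ℕ) : ZMod n) := by push_cast; rw [hval]
    rw [this, ZMod.val_cast_of_lt hi]
  have hlast : ∀ i : ZMod n, i.val = n - 1 → i + 1 = 0 := by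
    intro i hi
    have : i + 1 = ((i.val + 1 : ℕ) : ZMod n) := by push_cast; rw [hval]
    rw [this, hi, Nat.sub_add_cancel (by omega), ZMod.natCast_self]
  have hch : ∀ i j : ZMod n, i.val < j.val → G.Adj (g i.val) (g j.val) → j = i + 1 ∨ i = j + 1 := by
    intro i j hij h
    rcases gch _ _ hij (ZMod.val_lt j) h with h | ⟨h, h'⟩
    · left
      have := hval j
      rw [h] at this; push_cast at this; rw [hval] at this; exact this.symm
    · right
      rw [hlast j h']
      have := hval i
      rw [h] at this; simpa using this.symm
  refine ⟨h3, hodd, ?_, ?_, ?_, ?_, ne, conn⟩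
  · intro i j hij
    exact ZMod.val_injective n (ginj _ (ZMod.val_lt i) _ (ZMod.val_lt j) hij)
  · intro i
    by_cases h : i.val + 1 < n
    · rw [hsucc i h]; exact gadj _ h
    · have hv : i.val = n - 1 := by have := ZMod.val_lt i; omega
      rw [hlast i hv, hv, ZMod.val_zero]; exact glast
  · intro i j h
    rcases lt_trichotomy i.val j.val with h' | h' | h'
    · exact hch i j h' h
    · rw [h'] at h; exact absurd h (G.loopless.irrefl _)
    · exact (hch j i h' h.symm).symm
  · intro v
    rw [memT]
    refine ⟨fun h i => h _ (ZMod.val_lt i), fun h t ht => ?_⟩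
    have := h (t : ZMod n)
    rwa [ZMod.val_cast_of_lt ht] at this

theorem Cy.of_walk [Fintype V] {u : V} {c : G.Walk u u} (hc : c.IsCycle) (hodd : Odd c.length)
    (hind : ∀ a b : V, a ∈ c.support → b ∈ c.support → G.Adj a b → s(a, b) ∈ c.edges)
    (hsep : (G.induce {v : V | v ∉ c.support}).Connected) :
    ∃ n f T, Cy G n f T := by
  have h3 := hc.three_le_length
  have hinj : ∀ a < c.length, ∀ b < c.length, c.getVert a = c.getVert b → a = b := by
    intro a ha b hb hab
    exact hc.getVert_injOn' (by simp; omega) (by simp; omega) hab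
  let T : Finset V := Finset.univ.filter (fun v => v ∉ c.support)
  have hT : ∀ v, v ∈ T ↔ v ∉ c.support := fun v => by simp [T]
  refine ⟨c.length, _, T, Cy.of_nat (g := c.getVert) h3 hodd hinj ?_ ?_ ?_ ?_ ?_ ?_⟩
  · intro t ht
    exact c.adj_getVert_succ (by omega)
  · have := c.adj_getVert_succ (i := c.length - 1) (by omega)
    rw [Nat.sub_add_cancel (by omega), c.getVert_length] at this
    rwa [c.getVert_zero]
  · intro a b hab hb h
    have := hind _ _ (c.getVert_mem_support a) (c.getVert_mem_support b) h
    rw [SimpleGraph.Walk.mk_mem_edges_iff_exists] at this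
    obtain ⟨i, hi, hh⟩ := this
    have hk : ∀ t, t ≤ c.length → ∃ t' < c.length, c.getVert t = c.getVert t' ∧ (t' = t ∨ (t = c.length ∧ t' = 0)) := by
      intro t ht
      rcases Nat.lt_or_ge t c.length with h | h
      · exact ⟨t, h, rfl, Or.inl rfl⟩
      · have : t = c.length := by omega
        subst this
        exact ⟨0, by omega, by simp, Or.inr ⟨rfl, rfl⟩⟩
    obtain ⟨i', hi', e1, e2⟩ := hk i (by omega)
    obtain ⟨i'', hi'', e3, e4⟩ := hk (i + 1) (by omega)
    rw [e1, e3, Sym2.eq_iff] at hh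
    rcases hh with hh | hh
    · have := hinj _ hi' _ (by omega) hh.1
      have := hinj _ hi'' _ (by omega) hh.2
      omega
    · have := hinj _ hi' _ (by omega) hh.1
      have := hinj _ hi'' _ (by omega) hh.2
      omega
  · intro v
    rw [hT, SimpleGraph.Walk.mem_support_iff_exists_getVert]
    constructor
    · rintro h t ht rfl
      exact h ⟨t, rfl, ht.le⟩
    · rintro h ⟨t, rfl, ht⟩
      rcases Nat.lt_or_ge t c.length with h' | h'
      · exact h t h' rfl
      · have : t = c.length := by omega
        subst this
        exact h 0 (by omega) (by simp)
  · obtain ⟨v⟩ := hsep.nonempty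
    exact ⟨v.1, (hT _).2 v.2⟩
  · intro D hD hne hcl
    refine Finset.Subset.antisymm hD fun z hz => ?_
    refine closed_induce hsep D (fun v hv => (hT v).1 (hD hv)) hne (fun v hv w hw => hcl v hv w ((hT w).2 hw)) z
      ((hT z).1 hz)

/-! ### Shortest non-separating induced odd cycles -/

/-- Connectedness of the graph induced on `X`, in closed-set form; the empty set qualifies. -/
def Conn (G : SimpleGraph V) (X : Finset V) : Prop :=
  ∀ D ⊆ X, D.Nonempty → (∀ v ∈ D, ∀ w ∈ X, G.Adj v w → w ∈ D) → D = X

/-- A vertex of an induced cycle has only two neighbours on it, hence at least `k - 2` in `T`. -/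
theorem Cy.hub [Fintype V] {n : ℕ} {f : ZMod n → V} {T : Finset V} (hC : Cy G n f T) {k : ℕ}
    (hd : ∀ v : V, k ≤ (Finset.univ.filter (G.Adj v)).card) (i : ZMod n) :
    k ≤ (T.filter (G.Adj (f i))).card + 2 := by
  refine (hd (f i)).trans ((deg_split (E := T) (S := {f (i + 1), f (i - 1)}) ?_).trans ?_)
  · intro w _ hw
    by_cases h : w ∈ T
    · exact Or.inl h
    · right
      rw [hC.memT] at h
      push Not at h
      obtain ⟨j, rfl⟩ := h
      rcases hC.chord _ _ hw with rfl | rfl <;> simp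
  · have : (({f (i + 1), f (i - 1)} : Finset V).filter (G.Adj (f i))).card ≤ 2 :=
      (Finset.card_filter_le _ _).trans Finset.card_le_two
    omega

theorem Cy.hub' [Fintype V] {n : ℕ} {f : ZMod n → V} {T : Finset V} (hC : Cy G n f T) {k : ℕ}
    (hd : ∀ v : V, k ≤ (Finset.univ.filter (G.Adj v)).card) (hk : 4 ≤ k) (i : ZMod n) (v : V) :
    ∃ u ∈ T, u ≠ v ∧ G.Adj (f i) u := by
  have h1 := hC.hub hd i
  have h2 : 1 < (T.filter (G.Adj (f i))).card := by omega
  obtain ⟨u, hu, huv⟩ := Finset.exists_mem_ne h2 v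
  rw [Finset.mem_filter] at hu
  exact ⟨u, hu.1, huv, hu.2⟩

/-- For a shortest such cycle, any two neighbours on it of a vertex `v` that does not disconnect `T` are
at distance two. Otherwise take a shortest arc of odd length `l` between such neighbours; if `l ≤ n - 4`,
closing it up by `v` gives a shorter non-separating induced odd cycle, of length `l + 2`. -/
theorem Cy.claim [Fintype V] {n : ℕ} {f : ZMod n → V} {T : Finset V} (hC : Cy G n f T) {k : ℕ}
    (hd : ∀ v : V, k ≤ (Finset.univ.filter (G.Adj v)).card) (hk : 4 ≤ k)
    (hmin : ∀ n' < n, ∀ f' T', ¬ Cy G n' f' T') {v : V} (hv : v ∈ T) (hne : (T.erase v).Nonempty)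
    (hconn : Conn G (T.erase v)) {i j : ZMod n} (hi : G.Adj v (f i)) (hj : G.Adj v (f j)) (hij : i ≠ j) :
    j = i + 2 ∨ i = j + 2 := by
  have h3 := hC.three
  obtain ⟨s, hs⟩ := hC.odd
  have hn : NeZero n := ⟨by omega⟩
  by_contra hcon
  push Not at hcon
  have hn0 : (n : ZMod n) = 0 := ZMod.natCast_self n
  have hex : ∃ l : ℕ, Odd l ∧ l + 4 ≤ n ∧ ∃ i : ZMod n, G.Adj v (f i) ∧ G.Adj v (f (i + l)) := by
    have main : ∀ i j : ZMod n, G.Adj v (f i) → G.Adj v (f j) → i ≠ j + 2 → Odd (j - i).val →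
        ∃ l : ℕ, Odd l ∧ l + 4 ≤ n ∧ ∃ i : ZMod n, G.Adj v (f i) ∧ G.Adj v (f (i + l)) := by
      intro i j hi hj hij ho
      have he : (((j - i).val : ℕ) : ZMod n) = j - i := ZMod.natCast_zmod_val _
      have hlt := ZMod.val_lt (j - i)
      refine ⟨(j - i).val, ho, ?_, i, hi, by rw [he]; simpa using hj⟩
      by_contra hcc
      obtain ⟨r, hr⟩ := ho
      have : (j - i).val + 2 = n := by omega
      have h2 : (((j - i).val + 2 : ℕ) : ZMod n) = 0 := by rw [this, hn0]
      push_cast at h2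
      rw [he] at h2
      exact hij (by linear_combination (-1 : ZMod n) * h2)
    rcases Nat.even_or_odd (j - i).val with h | h
    · refine main j i hj hi hcon.1 ?_
      have hsub : (i - j).val = n - (j - i).val := by
        have : i - j = -(j - i) := by ring
        have hn' : NeZero (j - i) := ⟨sub_ne_zero.2 hij.symm⟩
        rw [this, ZMod.val_neg_of_ne_zero]
      rw [hsub]
      exact Nat.Odd.sub_even (ZMod.val_lt _).le hC.odd h
    · exact main i j hi hj hcon.2 h
  obtain ⟨hlo, hln, i₀, ha, hb⟩ := Nat.find_spec hex
  have hlmin := fun m hm => Nat.find_min hex (m := m) hm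
  set l := Nat.find hex
  have hcast : ∀ a b : ℕ, a < n → b < n → i₀ + (a : ZMod n) = i₀ + b → a = b := by
    intro a b ha hb hab
    have h1 := add_left_cancel hab
    rw [ZMod.natCast_eq_natCast_iff'] at h1
    rwa [Nat.mod_eq_of_lt ha, Nat.mod_eq_of_lt hb] at h1
  let g : ℕ → V := fun t => if t = 0 then v else f (i₀ + ((t - 1 : ℕ) : ZMod n))
  have g0 : g 0 = v := by simp [g]
  have gs : ∀ t, g (t + 1) = f (i₀ + (t : ZMod n)) := by intro t; simp [g]
  have hvf : ∀ i, f i ≠ v := (hC.memT v).1 hv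
  let T' : Finset V := Finset.univ.filter (fun z => ∀ t < l + 2, g t ≠ z)
  have hT' : ∀ z, z ∈ T' ↔ ∀ t < l + 2, g t ≠ z := fun z => by simp [T']
  have hsub : ∀ z ∈ T.erase v, z ∈ T' := by
    intro z hz
    rw [Finset.mem_erase, hC.memT] at hz
    rw [hT']
    intro t ht
    rcases t with _ | t
    · rw [g0]; exact hz.1.symm
    · rw [gs]; exact hz.2 _
  have hcase : ∀ z ∈ T', z ∈ T.erase v ∨ ∃ j, f j = z := by
    intro z hz
    by_cases h : ∃ j, f j = z
    · exact Or.inr h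
    · left
      push Not at h
      rw [Finset.mem_erase, hC.memT]
      refine ⟨?_, h⟩
      have := (hT' z).1 hz 0 (by omega)
      rw [g0] at this; exact this.symm
  refine hmin (l + 2) (by omega) _ T' (Cy.of_nat (g := g) (by obtain ⟨r, hr⟩ := hlo; omega) (by
    obtain ⟨r, hr⟩ := hlo; exact ⟨r + 1, by omega⟩) ?_ ?_ ?_ ?_ hT' ?_ ?_)
  · intro a ha b hb hab
    rcases a with _ | a <;> rcases b with _ | b
    · rfl
    · rw [g0, gs] at hab; exact absurd hab.symm (hvf _)
    · rw [g0, gs] at hab; exact absurd hab (hvf _)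
    · rw [gs, gs] at hab
      rw [hcast a b (by omega) (by omega) (hC.inj hab)]
  · intro t ht
    rcases t with _ | t
    · rw [g0, gs]; simpa using ha
    · rw [gs, gs]
      convert hC.adj (i₀ + (t : ZMod n)) using 2
      push_cast; ring
  · have : l + 2 - 1 = l + 1 := rfl
    rw [this, g0, gs]; exact hb.symm
  · intro a b hab hb' h
    rcases b with _ | b
    · omega
    rcases a with _ | a
    · rw [g0, gs] at h
      by_cases hb0 : b = 0
      · left; omega
      by_cases hbl : b = l
      · right; omega
      exfalso
      have hbl' : b < l := by omega
      rcases Nat.even_or_odd b with he | ho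
      · refine hlmin (l - b) (by omega) ⟨Nat.Odd.sub_even hbl'.le hlo he, by omega, i₀ + b, h, ?_⟩
        convert hb using 2
        rw [Nat.cast_sub hbl'.le]; ring
      · exact hlmin b hbl' ⟨ho, by omega, i₀, ha, h⟩
    · rw [gs, gs] at h
      rcases hC.chord _ _ h with h | h
      · left
        have := hcast b (a + 1) (by omega) (by omega) (by rw [h]; push_cast; ring)
        omega
      · exfalso
        have := hcast a (b + 1) (by omega) (by omega) (by rw [h]; push_cast; ring)
        omega
  · obtain ⟨z, hz⟩ := hne
    exact ⟨z, hsub z hz⟩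
  · intro D hD hDne hcl
    have hDT : D.filter (· ∈ T.erase v) = T.erase v := by
      refine hconn _ (fun z hz => (Finset.mem_filter.1 hz).2) ?_ ?_
      · obtain ⟨z, hz⟩ := hDne
        rcases hcase z (hD hz) with h | ⟨j, rfl⟩
        · exact ⟨z, Finset.mem_filter.2 ⟨hz, h⟩⟩
        · obtain ⟨u, hu, huv, hju⟩ := hC.hub' hd hk j v
          have hu' : u ∈ T.erase v := Finset.mem_erase.2 ⟨huv, hu⟩
          exact ⟨u, Finset.mem_filter.2 ⟨hcl _ hz u (hsub u hu') hju, hu'⟩⟩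
      · intro x hx w hw hxw
        rw [Finset.mem_filter] at hx ⊢
        exact ⟨hcl x hx.1 w (hsub w hw) hxw, hw⟩
    have hTD : ∀ z ∈ T.erase v, z ∈ D := by
      intro z hz; rw [← hDT] at hz; exact (Finset.mem_filter.1 hz).1
    refine Finset.Subset.antisymm hD fun z hz => ?_
    rcases hcase z hz with h | ⟨j, rfl⟩
    · exact hTD z h
    · obtain ⟨u, hu, huv, hju⟩ := hC.hub' hd hk j v
      exact hcl u (hTD u (Finset.mem_erase.2 ⟨huv, hu⟩)) _ hz hju.symm

/-- the degree of a vertex off the cycle -/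
theorem Cy.deg_one [Fintype V] {n : ℕ} {f : ZMod n → V} {T : Finset V} (hC : Cy G n f T) {k : ℕ}
    (hd : ∀ v : V, k ≤ (Finset.univ.filter (G.Adj v)).card) {v : V}
    (h1 : ∀ i j, G.Adj v (f i) → G.Adj v (f j) → i = j) :
    k ≤ (T.filter (G.Adj v)).card + ind (∃ i, G.Adj v (f i)) := by
  by_cases h : ∃ i, G.Adj v (f i)
  · obtain ⟨i, hi⟩ := h
    rw [ind_pos ⟨i, hi⟩]
    refine (hd v).trans ((deg_split (E := T) (S := {f i}) ?_).trans ?_)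
    · intro w _ hw
      by_cases h : w ∈ T
      · exact Or.inl h
      · right
        rw [hC.memT] at h
        push Not at h
        obtain ⟨j, rfl⟩ := h
        rw [h1 _ _ hw hi]; simp
    · have : (({f i} : Finset V).filter (G.Adj v)).card ≤ 1 :=
        (Finset.card_filter_le _ _).trans (by simp)
      omega
  · refine (hd v).trans ((deg_split (E := T) (S := ∅) ?_).trans ?_)
    · intro w _ hw
      by_cases hh : w ∈ T
      · exact Or.inl hh
      · exfalso
        rw [hC.memT] at hh
        push Not at hh
        obtain ⟨j, rfl⟩ := hh
        exact h ⟨j, hw⟩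
    · simp

/-- On an odd cycle of length at least five, vertices pairwise at distance two are at most two in number. -/
theorem Cy.deg_two [Fintype V] {n : ℕ} {f : ZMod n → V} {T : Finset V} (hC : Cy G n f T) {k : ℕ}
    (hn5 : 5 ≤ n)
    (hd : ∀ v : V, k ≤ (Finset.univ.filter (G.Adj v)).card) {v : V}
    (h1 : ∀ i j, G.Adj v (f i) → G.Adj v (f j) → i ≠ j → j = i + 2 ∨ i = j + 2) :
    k ≤ (T.filter (G.Adj v)).card + 2 := by
  have h3 := hC.three
  obtain ⟨s, hs⟩ := hC.odd
  have hn : NeZero n := ⟨by omega⟩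
  let S := Finset.univ.filter (fun i => G.Adj v (f i))
  have h20 : (2 : ZMod n) ≠ 0 := by
    intro h
    have : ((2 : ℕ) : ZMod n) = 0 := by exact_mod_cast h
    rw [ZMod.natCast_eq_zero_iff] at this
    have := Nat.le_of_dvd (by omega) this
    omega
  have h60 : (6 : ZMod n) ≠ 0 := by
    intro h
    have : ((6 : ℕ) : ZMod n) = 0 := by exact_mod_cast h
    rw [ZMod.natCast_eq_zero_iff] at this
    have h' := Nat.le_of_dvd (by omega) this
    have : n = 5 ∨ n = 6 := by omega
    rcases this with rfl | rfl <;> omega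
  have hS : S.card ≤ 2 := by
    by_contra hc
    push Not at hc
    obtain ⟨a, b, c, ha, hb, hc, hab, hac, hbc⟩ := Finset.two_lt_card_iff.1 hc
    have ha' := (Finset.mem_filter.1 ha).2
    have hb' := (Finset.mem_filter.1 hb).2
    have hc' := (Finset.mem_filter.1 hc).2
    rcases h1 _ _ ha' hb' hab with e1 | e1 <;> rcases h1 _ _ ha' hc' hac with e2 | e2 <;>
      rcases h1 _ _ hb' hc' hbc with e3 | e3
    · exact hbc (by rw [e1, e2])
    · exact hbc (by rw [e1, e2])
    · exact h60 (by linear_combination -e1 - e2 - e3)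
    · exact h20 (by linear_combination -e1 - e2 + e3)
    · exact h20 (by linear_combination -e1 - e2 + e3)
    · exact h60 (by linear_combination -e1 - e2 - e3)
    · exact hbc (by linear_combination e2 - e1)
    · exact hbc (by linear_combination e2 - e1)
  refine (hd v).trans ((deg_split (E := T) (S := S.image f) ?_).trans ?_)
  · intro w _ hw
    by_cases hh : w ∈ T
    · exact Or.inl hh
    · right
      rw [hC.memT] at hh
      push Not at hh
      obtain ⟨j, rfl⟩ := hh
      exact Finset.mem_image_of_mem _ (Finset.mem_filter.2 ⟨Finset.mem_univ _, hw⟩)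
  · have : ((S.image f).filter (G.Adj v)).card ≤ 2 :=
      (Finset.card_filter_le _ _).trans (Finset.card_image_le.trans hS)
    omega

/-! ### Two cycles, and the triangle -/

theorem not_RC {U : Finset V} {A B : Set V} (hU : U.Nonempty) (h : ¬ RC G U A B) :
    ∃ D ⊆ U, D.Nonempty ∧ ∃ o, ∀ o', Nb G U A B D o' → o' = o := by
  unfold RC at h
  push Not at h
  obtain ⟨D, hD, hne, o, ho⟩ := h hU
  exact ⟨D, hD, hne, o, fun o' h' => by_contra fun hc => ho o' hc h'⟩

theorem RC_of {U : Finset V} {A B : Set V} (hU : U.Nonempty)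
    (h : ∀ D ⊆ U, D.Nonempty → ∀ o, (∀ o', Nb G U A B D o' → o' = o) → False) : RC G U A B := by
  by_contra hc
  obtain ⟨D, hD, hne, o, ho⟩ := not_RC hU hc
  exact h D hD hne o ho

/-- The vertex named by an outer neighbour, when `x` and `y` stand for `a` and `b`. -/
def Ext.pt (a b : V) : Ext V → V
  | .x => a
  | .y => b
  | .v q => q

/-- A width of one is enough here: any path through `T` between neighbours of two antipodal vertices. -/
theorem case_two [Fintype V] {n : ℕ} {f : ZMod n → V} {T : Finset V} (hC : Cy G n f T)
    (hd : ∀ v : V, 3 ≤ (Finset.univ.filter (G.Adj v)).card) :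
    ∃ J, ∀ t < 2, CycL G (J + t) := by
  obtain ⟨s, hs⟩ := hC.odd
  have hub : ∀ i, ∃ u ∈ T, G.Adj u (f i) := by
    intro i
    have := hC.hub hd i
    obtain ⟨u, hu⟩ := Finset.card_pos.1 (show 0 < (T.filter (G.Adj (f i))).card by omega)
    rw [Finset.mem_filter] at hu
    exact ⟨u, hu.1, hu.2.symm⟩
  refine antip hC hs (i := 0) (j := 0 + s) ?_ rfl
  rcases path_or_closed (G := G) T {z | G.Adj z (f 0)} {z | G.Adj z (f (0 + s))} with ⟨m, hm⟩ | ⟨D, hD, hA, hB, hcl⟩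
  · have := hm.pos
    refine ⟨m - 1, fun i hi => ?_⟩
    have h2 : i = 0 ∨ i = 1 := by omega
    rcases h2 with rfl | rfl
    · right; convert hm using 1; omega
    · left; convert hm using 1; omega
  · exfalso
    obtain ⟨u, hu, hu'⟩ := hub 0
    obtain ⟨w, hw, hw'⟩ := hub (0 + s)
    have := hC.conn D hD ⟨u, hA u hu hu'⟩ hcl
    subst this
    exact hB w hw hw'

/-- The cycle is a triangle. If `T` is not rooted 2-connected with respect to `f 0` and `f 1`, it contains a
set `D` whose only outside neighbours are a vertex `p` of `T` and `f 2`; a window for `D` between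
these two is extended through `T \ D` to the neighbours of `f 0`. -/
theorem case_three [Fintype V] {f : ZMod 3 → V} {T : Finset V} (hC : Cy G 3 f T) {k : ℕ} (hk : 3 ≤ k)
    (h2 : TwoC G) (hd : ∀ v : V, k + 1 ≤ (Finset.univ.filter (G.Adj v)).card) :
    ∃ J, ∀ t < k, CycL G (J + t) := by
  have hub : ∀ i, ∃ u ∈ T, G.Adj u (f i) := by
    intro i
    obtain ⟨u, hu, -, h⟩ := hC.hub' hd (by omega) i (f i)
    exact ⟨u, hu, h.symm⟩
  have htot : ∀ i : ZMod 3, i = 0 ∨ i = 1 ∨ i = 2 := by decide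
  have hout : ∀ z, z ∉ T → z = f 0 ∨ z = f 1 ∨ z = f 2 := by
    intro z hz
    rw [hC.memT] at hz
    push Not at hz
    obtain ⟨i, rfl⟩ := hz
    rcases htot i with rfl | rfl | rfl <;> simp
  have hfT : ∀ i, f i ∉ T := fun i h => (hC.memT _).1 h i rfl
  by_cases hRC : RC G T {z | G.Adj z (f 0)} {z | G.Adj z (f 1)}
  · refine antip hC (s := 1) rfl (i := 0) (j := 1) (pathThm hRC ?_) (by decide)
    intro v hv
    have h1 := (hd v).trans (deg_split (E := T) (S := {f 0, f 1, f 2}) (fun w _ _ => ?_))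
    · have a1 := filter_insert_le (G := G) {f 1, f 2} (f 0) v
      have a2 := filter_insert_le (G := G) {f 2} (f 1) v
      have a3 := filter_singleton_card (G := G) (f 2) v
      have a4 := ind_le (G.Adj v (f 2))
      unfold dg
      simp only [Set.mem_ofPred_eq]
      omega
    · by_cases hw : w ∈ T
      · exact Or.inl hw
      · right; rcases hout w hw with h | h | h <;> simp [h]
  · obtain ⟨D, hD, hne, o, ho⟩ := not_RC hC.ne hRC
    have hDcl : ∀ u ∈ D, ∀ w ∈ T, G.Adj u w → w ∈ D ∨ Ext.v w = o := by
      intro u hu w hw huw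
      by_cases h : w ∈ D
      · exact Or.inl h
      · exact Or.inr (ho (.v w) ⟨hw, h, u, hu, huw⟩)
    have hop : ∃ p ∈ T, p ∉ D ∧ o = .v p := by
      by_contra hcon
      push Not at hcon
      have hDT : D = T := by
        refine hC.conn D hD hne fun u hu w hw huw => ?_
        rcases hDcl u hu w hw huw with h | h
        · exact h
        · by_contra hw'
          exact hcon w hw hw' h.symm
      subst hDT
      obtain ⟨a, ha, ha'⟩ := hub 0
      obtain ⟨b, hb, hb'⟩ := hub 1
      have e1 := ho .x ⟨a, ha, ha'⟩
      have e2 := ho .y ⟨b, hb, hb'⟩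
      rw [← e1] at e2; cases e2
    obtain ⟨p, hp, hpD, rfl⟩ := hop
    have hn0 : ∀ u ∈ D, ¬ G.Adj u (f 0) := fun u hu h => by
      have := ho .x ⟨u, hu, h⟩; cases this
    have hn1 : ∀ u ∈ D, ¬ G.Adj u (f 1) := fun u hu h => by
      have := ho .y ⟨u, hu, h⟩; cases this
    have hnb : ∀ u ∈ D, ∀ w, G.Adj u w → w ∈ D ∨ w = p ∨ w = f 2 := by
      intro u hu w huw
      by_cases hw : w ∈ T
      · rcases hDcl u hu w hw huw with h | h
        · exact Or.inl h
        · cases h; simp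
      · rcases hout w hw with rfl | rfl | rfl
        · exact absurd huw (hn0 u hu)
        · exact absurd huw (hn1 u hu)
        · simp
    have hRD : RC G D {z | G.Adj z (f 2)} {z | G.Adj z p} := by
      refine RC_of hne fun E hE hEne o ho => ?_
      have hz : ∃ q : V, ∀ v ∈ E, ∀ w, G.Adj v w → w ∈ E ∨ w = q := by
        refine ⟨o.pt (f 2) p, fun v hv w hvw => ?_⟩
        by_cases hwE : w ∈ E
        · exact Or.inl hwE
        right
        rcases hnb v (hE hv) w hvw with h | rfl | rfl
        · rw [← ho (.v w) ⟨h, hwE, v, hv, hvw⟩]; rfl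
        · rw [← ho .y ⟨v, hv, hvw⟩]; rfl
        · rw [← ho .x ⟨v, hv, hvw⟩]; rfl
      obtain ⟨q, hq⟩ := hz
      have h3 := h2 E hEne q hq
      have e0 := (h3 (f 0)).resolve_left fun h => hfT 0 (hD (hE h))
      have e1 := (h3 (f 1)).resolve_left fun h => hfT 1 (hD (hE h))
      have := hC.inj (e0.trans e1.symm)
      exact absurd this (by decide)
    have hW : Win (Pth G D {z | G.Adj z (f 2)} {z | G.Adj z p}) k := by
      refine pathThm hRD fun v hv => ?_
      have h1 := (hd v).trans (deg_split (E := D) (S := {f 2, p}) (fun w _ hw => ?_))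
      · have a1 := filter_insert_le (G := G) {p} (f 2) v
        have a2 := filter_singleton_card (G := G) p v
        unfold dg
        simp only [Set.mem_ofPred_eq]
        omega
      · rcases hnb v hv w hw with h | h | h <;> simp [h]
    have hext : ∃ m i, (i = 0 ∨ i = 1) ∧ Pth G (T \ D) {p} {z | G.Adj z (f i)} m := by
      rcases path_or_closed (G := G) (T \ D) {p} {z | G.Adj z (f 0)} with ⟨m, hm⟩ | ⟨R, hR, hA, hB, hcl⟩
      · exact ⟨m, 0, Or.inl rfl, hm⟩
      exfalso
      have hpR := hA p (Finset.mem_sdiff.2 ⟨hp, hpD⟩) rfl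
      have hDR : D ∪ R = T := by
        refine hC.conn _ (Finset.union_subset hD (hR.trans Finset.sdiff_subset)) ⟨p, by simp [hpR]⟩ ?_
        intro v hv w hw hvw
        rw [Finset.mem_union] at hv ⊢
        by_cases hwD : w ∈ D
        · exact Or.inl hwD
        right
        rcases hv with hv | hv
        · rcases hDcl v hv w hw hvw with h | h
          · exact absurd h hwD
          · cases h; exact hpR
        · exact hcl v hv w (Finset.mem_sdiff.2 ⟨hw, hwD⟩) hvw
      obtain ⟨a, ha, ha'⟩ := hub 0
      rw [← hDR, Finset.mem_union] at ha
      rcases ha with ha | ha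
      · exact hn0 a ha ha'
      · exact hB a ha ha'
    obtain ⟨m, i, hi, hm⟩ := hext
    have hW2 : Win (Pth G T {z | G.Adj z (f 2)} {z | G.Adj z (f i)}) k := by
      refine hW.shift m fun m' h' => Pth.append h' hm ?_ Finset.disjoint_sdiff hD Finset.sdiff_subset
      rintro z hz _ rfl; exact hz
    rcases hi with rfl | rfl
    · exact antip hC (s := 1) rfl hW2 (by decide)
    · exact antip hC (s := 1) rfl hW2.symm (by decide)

/-! ### No cut vertex off the cycle -/

/-- The main case: a shortest non-separating induced odd cycle, of length `n = 2 s + 1 ≥ 5`, in a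
2-connected graph of minimum degree at least `k + 1` with `k ≥ 3`. -/
structure Ctx [Fintype V] (G : SimpleGraph V) (n s k : ℕ) (f : ZMod n → V) (T : Finset V) : Prop where
  C : Cy G n f T
  hn : n = 2 * s + 1
  hs : 2 ≤ s
  hk : 3 ≤ k
  hd : ∀ v : V, k + 1 ≤ (Finset.univ.filter (G.Adj v)).card
  hmin : ∀ n' < n, ∀ f' T', ¬ Cy G n' f' T'
  h2 : TwoC G

section
variable [Fintype V] {n s k : ℕ} {f : ZMod n → V} {T : Finset V}

theorem Ctx.hub (h : Ctx G n s k f T) (i : ZMod n) (v : V) : ∃ u ∈ T, u ≠ v ∧ G.Adj u (f i) := by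
  obtain ⟨u, hu, huv, ha⟩ := h.C.hub' h.hd (by have := h.hk; omega) i v
  exact ⟨u, hu, huv, ha.symm⟩

theorem Ctx.erase_ne (h : Ctx G n s k f T) (v : V) : (T.erase v).Nonempty := by
  obtain ⟨u, hu, huv, -⟩ := h.hub 0 v
  exact ⟨u, Finset.mem_erase.2 ⟨huv, hu⟩⟩

/-- A vertex that does not disconnect `T` has at most one neighbour on the cycle, or is adjacent to both
neighbours on the cycle of some `f m`. -/
theorem Ctx.one_or_two (h : Ctx G n s k f T) {v : V} (hv : v ∈ T) (hc : Conn G (T.erase v)) :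
    (∀ i j, G.Adj v (f i) → G.Adj v (f j) → i = j) ∨ ∃ m, G.Adj v (f (m - 1)) ∧ G.Adj v (f (m + 1)) := by
  by_cases h1 : ∀ i j, G.Adj v (f i) → G.Adj v (f j) → i = j
  · exact Or.inl h1
  right
  push Not at h1
  obtain ⟨i, j, hi, hj, hij⟩ := h1
  rcases h.C.claim h.hd (by have := h.hk; omega) h.hmin hv (h.erase_ne v) hc hi hj hij with rfl | rfl
  · exact ⟨i + 1, by convert hi using 2; ring, by convert hj using 2; ring⟩
  · exact ⟨j + 1, by convert hj using 2; ring, by convert hi using 2; ring⟩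

theorem Ctx.degT (h : Ctx G n s k f T) {v : V} (hv : v ∈ T) (hc : Conn G (T.erase v)) :
    k ≤ (T.filter (G.Adj v)).card + 1 := by
  have := h.C.deg_two (by have := h.hs; have := h.hn; omega) h.hd (v := v) (fun i j hi hj hij =>
    h.C.claim h.hd (by have := h.hk; omega) h.hmin hv (h.erase_ne v) hc hi hj hij)
  omega

/-- `T` has no cut vertex. If no vertex of `T` has two neighbours on the cycle, `T` has a window of width
`k` between antipodal vertices. Otherwise remove such a vertex `w`: the rest has a window of width
`k - 1` from the neighbours of `w` to those of `f (m + s)`, and `fourarc` applies. -/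
theorem caseI (h : Ctx G n s k f T)
    (hNC : ∀ X ⊆ T, X.Nonempty → ∀ p, (∀ v ∈ X, ∀ w ∈ T, G.Adj v w → w ∈ X ∨ w = p) → ∀ z ∈ T, z ∈ X ∨ z = p) :
    ∃ J, ∀ t < k, CycL G (J + t) := by
  have hk := h.hk
  have hconn : ∀ v, Conn G (T.erase v) := by
    intro v D hD hne hcl
    refine Finset.Subset.antisymm hD fun z hz => ?_
    rw [Finset.mem_erase] at hz
    refine (hNC D (hD.trans (Finset.erase_subset _ _)) hne v (fun u hu w hw huw => ?_) z hz.2).resolve_right hz.1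
    by_cases hwv : w = v
    · exact Or.inr hwv
    · exact Or.inl (hcl u hu w (Finset.mem_erase.2 ⟨hwv, hw⟩) huw)
  by_cases h1 : ∀ v ∈ T, ∀ i j, G.Adj v (f i) → G.Adj v (f j) → i = j
  · have hRC : RC G T {z | G.Adj z (f 0)} {z | G.Adj z (f (0 + s))} := by
      refine RC_of h.C.ne fun D hD hne o ho => ?_
      obtain ⟨v₀, hv₀⟩ := hne
      have hcl : ∀ v ∈ D, ∀ z ∈ T, G.Adj v z → z ∈ D ∨ z = o.pt v₀ v₀ := by
        intro v hv z hz hvz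
        by_cases hzD : z ∈ D
        · exact Or.inl hzD
        right
        rw [← ho (.v z) ⟨hz, hzD, v, hv, hvz⟩]; rfl
      have hall := hNC D hD ⟨v₀, hv₀⟩ _ hcl
      have hhub : ∀ i, ∃ u ∈ D, G.Adj u (f i) := by
        intro i
        obtain ⟨u, hu, hup, hua⟩ := h.hub i (o.pt v₀ v₀)
        exact ⟨u, (hall u hu).resolve_right hup, hua⟩
      obtain ⟨a, ha, ha'⟩ := hhub 0
      obtain ⟨b, hb, hb'⟩ := hhub (0 + s)
      have e1 := ho .x ⟨a, ha, ha'⟩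
      have e2 := ho .y ⟨b, hb, hb'⟩
      rw [← e1] at e2; cases e2
    refine antip h.C h.hn (pathThm hRC fun v hv => ?_) rfl
    have a1 := h.C.deg_one h.hd (h1 v hv)
    have a2 := ind_le (∃ i, G.Adj v (f i))
    unfold dg
    omega
  · push Not at h1
    obtain ⟨w, hw, i, j, hi, hj, hij⟩ := h1
    obtain ⟨m, hm1, hm2⟩ := (h.one_or_two hw (hconn w)).resolve_left
      (fun hh => hij (hh i j hi hj))
    have hRC : RC G (T.erase w) {z | G.Adj z w} {z | G.Adj z (f (m + s))} := by
      refine RC_of (h.erase_ne w) fun D hD hne o ho => ?_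
      have hwD : w ∉ D := fun hh => by simpa using hD hh
      have hDT : D ⊆ T := hD.trans (Finset.erase_subset _ _)
      have hcl : ∀ v ∈ D, ∀ z ∈ T, G.Adj v z → z ∈ D ∨ z = o.pt w w := by
        intro v hv z hz hvz
        by_cases hzD : z ∈ D
        · exact Or.inl hzD
        right
        by_cases hzw : z = w
        · subst hzw; rw [← ho .x ⟨v, hv, hvz⟩]; rfl
        · rw [← ho (.v z) ⟨Finset.mem_erase.2 ⟨hzw, hz⟩, hzD, v, hv, hvz⟩]; rfl
      have hall := hNC D hDT hne _ hcl
      have hw' := (hall w hw).resolve_left hwD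
      have hox : o = .x := by
        obtain ⟨u, hu, hne⟩ : ∃ u ∈ D, ∃ z ∈ T, z ∉ D ∧ G.Adj u z := by
          by_contra hcon
          push Not at hcon
          have := h.C.conn D hDT hne fun v hv z hz hvz => by
            by_contra hzD; exact hcon v hv z hz hzD hvz
          exact hwD (this ▸ hw)
        obtain ⟨z, hz, hzD, huz⟩ := hne
        have hz' := (hall z hz).resolve_left hzD
        rw [← hw'] at hz'
        subst hz'
        exact (ho .x ⟨u, hu, huz⟩).symm
      obtain ⟨u, hu, huw, hua⟩ := h.hub (m + s) w
      have huD : u ∈ D := (hall u hu).resolve_right fun hh => huw (hh.trans hw'.symm)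
      have := ho .y ⟨u, huD, hua⟩
      rw [hox] at this; cases this
    have hW := pathThm hRC (d := k - 1) fun v hv => by
      have hv' := Finset.mem_erase.1 hv
      have a1 := h.degT hv'.2 (hconn v)
      have a2 := deg_split (G := G) (U := T) (E := T.erase w) (S := {w}) (v := v) (fun z hz _ => by
        by_cases hzw : z = w
        · right; simp [hzw]
        · left; exact Finset.mem_erase.2 ⟨hzw, hz⟩)
      rw [filter_singleton_card] at a2
      unfold dg
      simp only [Set.mem_ofPred_eq]
      omega
    obtain ⟨J, hJ⟩ := fourarc h.C h.hn h.hs hw hm1 hm2 (by omega) hW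
    exact ⟨J, fun t ht => hJ t (by omega)⟩
end

/-! ### A minimal lobe off the cycle -/

/-- `D` is attached to the rest of `T` only through the vertex `c`, and the rest is not just `c`. -/
structure Lobe (G : SimpleGraph V) (T D : Finset V) (c : V) : Prop where
  sub : D ⊆ T
  ne : D.Nonempty
  cT : c ∈ T
  cD : c ∉ D
  out : ∀ v ∈ D, ∀ w ∈ T, G.Adj v w → w ∈ D ∨ w = c
  rest : ∃ z ∈ T, z ∉ D ∧ z ≠ c

/-- Every proper nonempty subset of `D` has at least two outer neighbours in `T`. -/
def MinLobe (G : SimpleGraph V) (T D : Finset V) : Prop :=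
  ∀ Y ⊆ D, Y.Nonempty → Y ≠ D → ∀ p, ∃ u ∈ Y, ∃ w ∈ T, w ∉ Y ∧ w ≠ p ∧ G.Adj u w

theorem lobe_of {T X : Finset V} {p : V} (hT : Conn G T) (hX : X ⊆ T) (hne : X.Nonempty)
    (hcl : ∀ v ∈ X, ∀ w ∈ T, G.Adj v w → w ∈ X ∨ w = p) (hz : ∃ z ∈ T, z ∉ X ∧ z ≠ p) : Lobe G T X p := by
  have hp : p ∈ T ∧ p ∉ X := by
    by_contra hcon
    obtain ⟨z, hz, hzX, -⟩ := hz
    refine hzX ((hT X hX hne fun v hv w hw hvw => ?_) ▸ hz)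
    rcases hcl v hv w hw hvw with h | rfl
    · exact h
    · by_contra hw'; exact hcon ⟨hw, hw'⟩
  exact ⟨hX, hne, hp.1, hp.2, hcl, hz⟩

/-- A smallest lobe is minimal. -/
theorem exists_lobe {T : Finset V} (hT : Conn G T) (h : ∃ D c, Lobe G T D c) :
    ∃ D c, Lobe G T D c ∧ MinLobe G T D := by
  obtain ⟨D₀, c₀, h₀⟩ := h
  obtain ⟨D, hD, hmin⟩ := Finset.exists_min_image (T.powerset.filter fun D => ∃ c, Lobe G T D c) Finset.card
    ⟨D₀, by simpa using ⟨h₀.sub, c₀, h₀⟩⟩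
  obtain ⟨c, hc⟩ := (Finset.mem_filter.1 hD).2
  refine ⟨D, c, hc, ?_⟩
  intro Y hY hYne hYD p
  by_contra hcon
  push Not at hcon
  have hL : Lobe G T Y p := by
    refine lobe_of hT (hY.trans hc.sub) hYne (fun v hv w hw hvw => ?_) ?_
    · by_contra hh
      push Not at hh
      exact hcon v hv w hw hh.1 hh.2 hvw
    · obtain ⟨z, hz, hzD, hzc⟩ := hc.rest
      by_cases hzp : z = p
      · exact ⟨c, hc.cT, fun h => hc.cD (hY h), fun h => hzc (hzp.trans h.symm)⟩
      · exact ⟨z, hz, fun h => hzD (hY h), hzp⟩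
  have := hmin Y (Finset.mem_filter.2 ⟨Finset.mem_powerset.2 hL.sub, p, hL⟩)
  have := Finset.card_lt_card (Finset.ssubset_iff_subset_ne.2 ⟨hY, hYD⟩)
  omega

/-- No vertex of a minimal lobe is a cut vertex of `T`. -/
theorem Lobe.noncut {T D : Finset V} {c : V} (hT : Conn G T) (hL : Lobe G T D c) (hm : MinLobe G T D)
    {v : V} (hv : v ∈ D) : Conn G (T.erase v) := by
  have key : ∀ X ⊆ T.erase v, X.Nonempty → (∀ u ∈ X, ∀ w ∈ T.erase v, G.Adj u w → w ∈ X) → c ∈ X := by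
    intro X hX hne hcl
    by_contra hcX
    have hXD : ∀ u ∈ X, u ∉ D := by
      intro u hu huD
      have hvX : v ∉ X := fun hh => by simpa using hX hh
      obtain ⟨a, ha, w, hw, hwY, hwv, haw⟩ := hm (X ∩ D) Finset.inter_subset_right
        ⟨u, Finset.mem_inter.2 ⟨hu, huD⟩⟩ (fun hh => hvX (Finset.mem_inter.1 (hh.symm ▸ hv)).1) v
      rw [Finset.mem_inter] at ha
      have hwX := hcl a ha.1 w (Finset.mem_erase.2 ⟨hwv, hw⟩) haw
      rcases hL.out a ha.2 w hw haw with h | rfl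
      · exact hwY (Finset.mem_inter.2 ⟨hwX, h⟩)
      · exact hcX hwX
    have hXT : X = T := by
      refine hT X (hX.trans (Finset.erase_subset _ _)) hne fun u hu w hw huw => ?_
      by_cases hwv : w = v
      · subst hwv
        exfalso
        rcases hL.out w hv u (Finset.mem_of_mem_erase (hX hu)) huw.symm with h | rfl
        · exact hXD u hu h
        · exact hcX hu
      · exact hcl u hu w (Finset.mem_erase.2 ⟨hwv, hw⟩) huw
    exact hcX (hXT ▸ hL.cT)
  intro X hX hne hcl
  by_contra hcon
  have h1 := key X hX hne hcl
  have h2 := key (T.erase v \ X) Finset.sdiff_subset (by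
    rw [Finset.sdiff_nonempty]
    exact fun hh => hcon (Finset.Subset.antisymm hX hh)) (fun u hu w hw huw => by
    rw [Finset.mem_sdiff] at hu ⊢
    exact ⟨hw, fun hwX => hu.2 (hcl w hwX u hu.1 huw.symm)⟩)
  exact (Finset.mem_sdiff.1 h2).2 h1

theorem Lobe.extend {T D : Finset V} {c : V} (hT : Conn G T) (hL : Lobe G T D c) {B : Set V}
    (hB : ∃ u ∈ T, u ∉ D ∧ u ∈ B) : ∃ m, Pth G (T \ D) {c} B m := by
  rcases path_or_closed (G := G) (T \ D) {c} B with h | ⟨R, hR, hA, hB', hcl⟩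
  · exact h
  exfalso
  have hcR := hA c (Finset.mem_sdiff.2 ⟨hL.cT, hL.cD⟩) rfl
  have hDR : D ∪ R = T := by
    refine hT _ (Finset.union_subset hL.sub (hR.trans Finset.sdiff_subset)) ⟨c, by simp [hcR]⟩ ?_
    intro v hv w hw hvw
    rw [Finset.mem_union] at hv ⊢
    by_cases hwD : w ∈ D
    · exact Or.inl hwD
    right
    rcases hv with hv | hv
    · rcases hL.out v hv w hw hvw with h | rfl
      · exact absurd h hwD
      · exact hcR
    · exact hcl v hv w (Finset.mem_sdiff.2 ⟨hw, hwD⟩) hvw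
  obtain ⟨u, hu, huD, huB⟩ := hB
  rw [← hDR, Finset.mem_union] at hu
  exact hB' u (hu.resolve_left huD) huB

theorem Lobe.c_nb {T D : Finset V} {c : V} (hT : Conn G T) (hL : Lobe G T D c) : ∃ d ∈ D, G.Adj d c := by
  by_contra hcon
  push Not at hcon
  have := hT D hL.sub hL.ne fun v hv w hw hvw => by
    rcases hL.out v hv w hw hvw with h | rfl
    · exact h
    · exact absurd hvw (hcon v hv)
  exact hL.cD (this ▸ hL.cT)

section
variable [Fintype V] {n s k : ℕ} {f : ZMod n → V} {T : Finset V}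

/-- No vertex of `D` has two neighbours on the cycle. There are antipodal vertices of the cycle, one with
a neighbour in `D` and the other with one in `T \ D`; otherwise the set of indices of cycle vertices
with neighbours in `D` would be invariant under a shift by one. A window of width `k` in `D`, ending
next to `c`, is then extended through `T \ D`. -/
theorem caseIIa (h : Ctx G n s k f T) {D : Finset V} {c : V} (hL : Lobe G T D c) (hm : MinLobe G T D)
    (h1 : ∀ v ∈ D, ∀ i j, G.Adj v (f i) → G.Adj v (f j) → i = j) :
    ∃ J, ∀ t < k, CycL G (J + t) := by
  have hfT : ∀ i, f i ∉ T := fun i hh => (h.C.memT _).1 hh i rfl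
  have hTor : ∀ z, z ∈ T ∨ ∃ i, z = f i := by
    intro z
    by_cases hz : z ∈ T
    · exact Or.inl hz
    · right
      rw [h.C.memT] at hz
      push Not at hz
      obtain ⟨i, rfl⟩ := hz
      exact ⟨i, rfl⟩
  have hT : Conn G T := h.C.conn
  have hn : NeZero n := ⟨by have := h.hn; omega⟩
  have hI : ∃ i, ∃ u ∈ D, G.Adj u (f i) := by
    by_contra hcon
    push Not at hcon
    rcases h.h2 D hL.ne c (fun v hv w hvw => by
      rcases hTor w with hw | ⟨i, rfl⟩
      · exact hL.out v hv w hw hvw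
      · exact absurd hvw (hcon i v hv)) (f 0) with hh | hh
    · exact hfT 0 (hL.sub hh)
    · exact hfT 0 (hh ▸ hL.cT)
  have hJ : ∃ j, ∃ u ∈ T, u ∉ D ∧ G.Adj u (f j) := by
    by_contra hcon
    push Not at hcon
    obtain ⟨z, hz, hzD, hzc⟩ := hL.rest
    rcases h.h2 ((T \ D).erase c) ⟨z, by simp [hz, hzD, hzc]⟩ c (fun v hv w hvw => by
      rw [Finset.mem_erase, Finset.mem_sdiff] at hv
      rcases hTor w with hw | ⟨i, rfl⟩
      · by_cases hwc : w = c
        · exact Or.inr hwc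
        · left
          rw [Finset.mem_erase, Finset.mem_sdiff]
          refine ⟨hwc, hw, fun hwD => ?_⟩
          rcases hL.out w hwD v hv.2.1 hvw.symm with hh | hh
          · exact hv.2.2 hh
          · exact hv.1 hh
      · exact absurd hvw (hcon i v hv.2.1 hv.2.2)) (f 0) with hh | hh
    · rw [Finset.mem_erase, Finset.mem_sdiff] at hh
      exact hfT 0 hh.2.1
    · exact hfT 0 (hh ▸ hL.cT)
  have hIJ : ∃ i j, (∃ u ∈ D, G.Adj u (f i)) ∧ (∃ u ∈ T, u ∉ D ∧ G.Adj u (f j)) ∧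
      (j = i + s ∨ i = j + s) := by
    by_contra hcon
    push Not at hcon
    have hor : ∀ i, (∃ u ∈ D, G.Adj u (f i)) ∨ (∃ u ∈ T, u ∉ D ∧ G.Adj u (f i)) := by
      intro i
      obtain ⟨u, hu, -, hua⟩ := h.hub i c
      by_cases huD : u ∈ D
      · exact Or.inl ⟨u, huD, hua⟩
      · exact Or.inr ⟨u, hu, huD, hua⟩
    have hminus : ∀ i, (∃ u ∈ D, G.Adj u (f i)) → ∃ u ∈ D, G.Adj u (f (i - s)) := by
      intro i hi
      refine (hor (i - s)).resolve_right fun hh => ?_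
      exact (hcon i (i - s) hi hh).2 (by ring)
    have hplus : ∀ i, (∃ u ∈ D, G.Adj u (f i)) → ∃ u ∈ D, G.Adj u (f (i + 1)) := by
      intro i hi
      have h0 : ((2 * s + 1 : ℕ) : ZMod n) = 0 := by rw [← h.hn]; exact ZMod.natCast_self n
      push_cast at h0
      have : i + 1 = i - s - s := by linear_combination h0
      rw [this]
      exact hminus _ (hminus _ hi)
    obtain ⟨i, hi⟩ := hI
    obtain ⟨j, hj⟩ := hJ
    have hall : ∀ t : ℕ, ∃ u ∈ D, G.Adj u (f (i + t)) := by
      intro t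
      induction t with
      | zero => simpa using hi
      | succ t ih =>
        have := hplus _ ih
        rwa [add_assoc, ← Nat.cast_succ] at this
    have := hall (j - s - i).val
    rw [ZMod.natCast_zmod_val] at this
    refine (hcon _ j this hj).1 (by ring)
  obtain ⟨i, j, hi, hj, hij⟩ := hIJ
  have hRC : RC G D {z | G.Adj z c} {z | G.Adj z (f i)} := by
    refine RC_of hL.ne fun E hE hne o ho => ?_
    by_cases hED : E = D
    · subst hED
      obtain ⟨d, hd, hdc⟩ := hL.c_nb hT
      obtain ⟨u, hu, hua⟩ := hi
      have e1 := ho .x ⟨d, hd, hdc⟩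
      have e2 := ho .y ⟨u, hu, hua⟩
      rw [← e1] at e2; cases e2
    · obtain ⟨u, hu, w, hw, hwE, hwp, huw⟩ := hm E hE hne hED (o.pt c c)
      rcases hL.out u (hE hu) w hw huw with hwD | rfl
      · refine hwp ?_
        rw [← ho (.v w) ⟨hwD, hwE, u, hu, huw⟩]; rfl
      · refine hwp ?_
        rw [← ho .x ⟨u, hu, huw⟩]; rfl
  have hW : Win (Pth G D {z | G.Adj z c} {z | G.Adj z (f i)}) k := by
    refine pathThm hRC fun v hv => ?_
    have a1 := h.C.deg_one h.hd (h1 v hv)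
    have a2 := ind_le (∃ i, G.Adj v (f i))
    have a3 := deg_split (G := G) (U := T) (E := D) (S := {c}) (v := v) (fun z hz hvz => by
      rcases hL.out v hv z hz hvz with hh | hh
      · exact Or.inl hh
      · right; simp [hh])
    rw [filter_singleton_card] at a3
    unfold dg
    simp only [Set.mem_ofPred_eq]
    omega
  obtain ⟨l, hl⟩ := hL.extend hT (B := {z | G.Adj z (f j)}) hj
  have hW2 : Win (Pth G T {z | G.Adj z (f i)} {z | G.Adj z (f j)}) k := by
    refine hW.symm.shift l fun m' h' => Pth.append h' hl ?_ Finset.disjoint_sdiff hL.sub Finset.sdiff_subset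
    rintro z hz _ rfl; exact hz
  rcases hij with hij | hij
  · exact antip h.C h.hn hW2 hij
  · exact antip h.C h.hn hW2.symm hij

/-- A vertex `w ∈ D` has two neighbours on the cycle, and `f (m + s)` has a neighbour in `T \ D`: a window
of width `k - 1` in `D \ {w}`, from the neighbours of `w` to those of `c`, is extended through `T \ D`. -/
theorem caseIIb1 (h : Ctx G n s k f T) {D : Finset V} {c : V} (hL : Lobe G T D c) (hm : MinLobe G T D)
    {w : V} (hw : w ∈ D) {m : ZMod n} (hm1 : G.Adj w (f (m - 1))) (hm2 : G.Adj w (f (m + 1)))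
    (hne : (D.erase w).Nonempty) (hq : ∃ u ∈ T, u ∉ D ∧ G.Adj u (f (m + s))) :
    ∃ J, ∀ t < k, CycL G (J + t) := by
  have hT : Conn G T := h.C.conn
  have hk := h.hk
  have hRC : RC G (D.erase w) {z | G.Adj z w} {z | G.Adj z c} := by
    refine RC_of hne fun E hE hEne o ho => ?_
    have hED : E ≠ D := by rintro rfl; simpa using hE hw
    have hE' : E ⊆ D := hE.trans (Finset.erase_subset _ _)
    obtain ⟨u, hu, z, hz, hzE, hzp, huz⟩ := hm E hE' hEne hED (o.pt w c)
    rcases hL.out u (hE' hu) z hz huz with hzD | rfl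
    · by_cases hzw : z = w
      · subst hzw
        refine hzp ?_
        rw [← ho .x ⟨u, hu, huz⟩]; rfl
      · refine hzp ?_
        rw [← ho (.v z) ⟨Finset.mem_erase.2 ⟨hzw, hzD⟩, hzE, u, hu, huz⟩]; rfl
    · refine hzp ?_
      rw [← ho .y ⟨u, hu, huz⟩]; rfl
  have hW : Win (Pth G (D.erase w) {z | G.Adj z w} {z | G.Adj z c}) (k - 1) := by
    refine pathThm hRC fun v hv => ?_
    have hv' := Finset.mem_erase.1 hv
    have a1 := h.degT (hL.sub hv'.2) (hL.noncut hT hm hv'.2)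
    have a3 := deg_split (G := G) (U := T) (E := D.erase w) (S := {w, c}) (v := v) (fun z hz hvz => by
      by_cases hzw : z = w
      · right; simp [hzw]
      rcases hL.out v hv'.2 z hz hvz with hh | hh
      · exact Or.inl (Finset.mem_erase.2 ⟨hzw, hh⟩)
      · right; simp [hh])
    have a4 := filter_insert_le (G := G) {c} w v
    rw [filter_singleton_card] at a4
    unfold dg
    simp only [Set.mem_ofPred_eq]
    omega
  obtain ⟨l, hl⟩ := hL.extend hT (B := {z | G.Adj z (f (m + s))}) hq
  have hW2 : Win (Pth G (T.erase w) {z | G.Adj z w} {z | G.Adj z (f (m + s))}) (k - 1) := by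
    refine hW.shift l fun m' h' => Pth.append h' hl ?_ ?_ (Finset.erase_subset_erase _ hL.sub) ?_
    · rintro z hz _ rfl; exact hz
    · exact Finset.disjoint_sdiff.mono_left (Finset.erase_subset _ _)
    · intro z hz
      rw [Finset.mem_sdiff] at hz
      exact Finset.mem_erase.2 ⟨fun hh => hz.2 (hh ▸ hw), hz.1⟩
  obtain ⟨J, hJ⟩ := fourarc h.C h.hn h.hs (hL.sub hw) hm1 hm2 (by omega) hW2
  exact ⟨J, fun t ht => hJ t (by omega)⟩

/-- As before, but all neighbours of `f (m + s)` in `T` lie in `D`. In `(D \ {w}) ∪ {c}` only `c` lacks the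
degree bound, so there is a window of width `k - 2`, just enough for `fourarc`. -/
theorem caseIIb2 (h : Ctx G n s k f T) {D : Finset V} {c : V} (hL : Lobe G T D c) (hm : MinLobe G T D)
    {w : V} (hw : w ∈ D) {m : ZMod n} (hm1 : G.Adj w (f (m - 1))) (hm2 : G.Adj w (f (m + 1)))
    (hne : (D.erase w).Nonempty) (hq : ∀ u ∈ T, G.Adj u (f (m + s)) → u ∈ D) :
    ∃ J, ∀ t < k, CycL G (J + t) := by
  have hT : Conn G T := h.C.conn
  have hk := h.hk
  have hcw : c ≠ w := fun hh => hL.cD (hh ▸ hw)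
  have hmemU : ∀ z, z ∈ insert c (D.erase w) ↔ z = c ∨ (z ≠ w ∧ z ∈ D) := fun z => by
    rw [Finset.mem_insert, Finset.mem_erase]
  have hRC : RC G (insert c (D.erase w)) {z | G.Adj z w} {z | G.Adj z (f (m + s))} := by
    refine RC_of (Finset.insert_nonempty _ _) fun E hE hEne o ho => ?_
    have hwE : w ∉ E := fun hh => by
      rcases (hmemU w).1 (hE hh) with h | h
      · exact hcw h.symm
      · exact h.1 rfl
    -- an edge from `E` to a vertex of `D` outside `E`, other than `w`, determines `o`
    have hov : ∀ u ∈ E, ∀ z ∈ D, z ∉ E → z ≠ w → G.Adj u z → o = .v z := fun u hu z hz hzE hzw huz =>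
      (ho (.v z) ⟨(hmemU z).2 (Or.inr ⟨hzw, hz⟩), hzE, u, hu, huz⟩).symm
    by_cases hcE : c ∈ E
    · by_cases hox : o = .x
      · subst hox
        by_cases hY : ((D \ E).erase w).Nonempty
        · obtain ⟨u, hu, z, hz, hzY, hzw, huz⟩ := hm ((D \ E).erase w)
            ((Finset.erase_subset _ _).trans Finset.sdiff_subset) hY
            (fun hh => by rw [← hh] at hw; simp at hw) w
          rw [Finset.mem_erase, Finset.mem_sdiff] at hu
          have hzE : z ∈ E := by
            rcases hL.out u hu.2.1 z hz huz with hh | rfl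
            · by_contra hzE
              exact hzY (Finset.mem_erase.2 ⟨hzw, Finset.mem_sdiff.2 ⟨hh, hzE⟩⟩)
            · exact hcE
          cases hov z hzE u hu.2.1 hu.2.2 hu.1 huz.symm
        · obtain ⟨u, hu, huw, hua⟩ := h.hub (m + s) w
          have huD := hq u hu hua
          have huE : u ∈ E := by
            by_contra hcon
            exact hY ⟨u, Finset.mem_erase.2 ⟨huw, Finset.mem_sdiff.2 ⟨huD, hcon⟩⟩⟩
          cases ho .y ⟨u, huE, hua⟩
      · have hnx : ∀ u ∈ E, ¬ G.Adj u w := fun u hu huw => hox (ho .x ⟨u, hu, huw⟩).symm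
        let p := o.pt w c
        have hop : ∀ u ∈ E, ∀ z ∈ D, z ∉ E → z ≠ w → G.Adj u z → z = p := by
          intro u hu z hz hzE hzw huz
          have := hov u hu z hz hzE hzw huz
          subst this; rfl
        let Y := (D \ E).filter fun y => y ≠ p ∨ y = w
        have hwY : w ∈ Y := by simp [Y, hw, hwE]
        by_cases hYD : Y = D
        · obtain ⟨d, hd, hdc⟩ := hL.c_nb hT
          have hdY : d ∈ Y := hYD ▸ hd
          simp only [Y, Finset.mem_filter, Finset.mem_sdiff] at hdY
          by_cases hdw : d = w
          · subst hdw; exact hnx c hcE hdc.symm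
          · exact (hdY.2.resolve_right hdw) (hop c hcE d hd hdY.1.2 hdw hdc.symm)
        · obtain ⟨u, hu, z, hz, hzY, hzp, huz⟩ := hm Y
            ((Finset.filter_subset _ _).trans Finset.sdiff_subset) ⟨w, hwY⟩ hYD p
          simp only [Y, Finset.mem_filter, Finset.mem_sdiff] at hu hzY
          have hzE : z ∈ E := by
            rcases hL.out u hu.1.1 z hz huz with hh | rfl
            · by_contra hzE
              exact hzY ⟨⟨hh, hzE⟩, Or.inl hzp⟩
            · exact hcE
          by_cases huw : u = w
          · subst huw; exact hnx z hzE huz.symm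
          · exact (hu.2.resolve_right huw) (hop z hzE u hu.1.1 hu.1.2 huw huz.symm)
    · have hED : ∀ z ∈ E, z ∈ D := fun z hz => by
        rcases (hmemU z).1 (hE hz) with rfl | hh
        · exact absurd hz hcE
        · exact hh.2
      obtain ⟨u, hu, z, hz, hzE, hzp, huz⟩ := hm E hED hEne (fun hh => hwE (hh ▸ hw)) (o.pt w w)
      refine hzp ?_
      by_cases hzw : z = w
      · subst hzw
        rw [← ho .x ⟨u, hu, huz⟩]; rfl
      · have hzU : z ∈ insert c (D.erase w) := by
          rw [hmemU]
          rcases hL.out u (hED u hu) z hz huz with hh | hh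
          · exact Or.inr ⟨hzw, hh⟩
          · exact Or.inl hh
        rw [← ho (.v z) ⟨hzU, hzE, u, hu, huz⟩]; rfl
  have hW : Win (Pth G (insert c (D.erase w)) {z | G.Adj z w} {z | G.Adj z (f (m + s))}) (k - 2) := by
    refine PQ hRC (PT _) (z := c) (by simp) ?_ fun v hv hvc => ?_
    · obtain ⟨u, hu⟩ := hne
      exact ⟨u, Finset.mem_insert_of_mem hu, fun hh => hL.cD (hh ▸ Finset.mem_of_mem_erase hu)⟩
    · have hv' := ((hmemU v).1 hv).resolve_left hvc
      have a1 := h.degT (hL.sub hv'.2) (hL.noncut hT hm hv'.2)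
      have a3 := deg_split (G := G) (U := T) (E := insert c (D.erase w)) (S := {w}) (v := v) (fun z hz hvz => by
        by_cases hzw : z = w
        · right; simp [hzw]
        left
        rw [hmemU]
        rcases hL.out v hv'.2 z hz hvz with hh | hh
        · exact Or.inr ⟨hzw, hh⟩
        · exact Or.inl hh)
      rw [filter_singleton_card] at a3
      unfold dg
      simp only [Set.mem_ofPred_eq]
      omega
  have hW2 : Win (Pth G (T.erase w) {z | G.Adj z w} {z | G.Adj z (f (m + s))}) (k - 2) := by
    refine hW.shift 0 fun m' h' => h'.mono ?_ (fun _ _ hh => hh) (fun _ _ hh => hh)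
    intro z hz
    rw [Finset.mem_erase]
    rcases (hmemU z).1 hz with rfl | hh
    · exact ⟨hcw, hL.cT⟩
    · exact ⟨hh.1, hL.sub hh.2⟩
  obtain ⟨J, hJ⟩ := fourarc h.C h.hn h.hs (hL.sub hw) hm1 hm2 (by omega) hW2
  exact ⟨J, fun t ht => hJ t (by omega)⟩

theorem Ctx.main (h : Ctx G n s k f T) : ∃ J, ∀ t < k, CycL G (J + t) := by
  have hT : Conn G T := h.C.conn
  have hk := h.hk
  by_cases hNC : ∀ X ⊆ T, X.Nonempty → ∀ p, (∀ v ∈ X, ∀ w ∈ T, G.Adj v w → w ∈ X ∨ w = p) → ∀ z ∈ T, z ∈ X ∨ z = p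
  · exact caseI h hNC
  push Not at hNC
  obtain ⟨X, hX, hXne, p, hcl, hz⟩ := hNC
  obtain ⟨D, c, hL, hm⟩ := exists_lobe hT ⟨X, p, lobe_of hT hX hXne hcl hz⟩
  by_cases h1 : ∀ v ∈ D, ∀ i j, G.Adj v (f i) → G.Adj v (f j) → i = j
  · exact caseIIa h hL hm h1
  push Not at h1
  obtain ⟨w, hw, i, j, hi, hj, hij⟩ := h1
  have hcw := hL.noncut hT hm hw
  obtain ⟨m, hm1, hm2⟩ := (h.one_or_two (hL.sub hw) hcw).resolve_left (fun hh => hij (hh i j hi hj))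
  have hne : (D.erase w).Nonempty := by
    have a1 := h.degT (hL.sub hw) hcw
    obtain ⟨u, hu, huc⟩ := Finset.exists_mem_ne (show 1 < (T.filter (G.Adj w)).card by omega) c
    rw [Finset.mem_filter] at hu
    exact ⟨u, Finset.mem_erase.2 ⟨fun hh => G.loopless.irrefl w (hh ▸ hu.2),
      (hL.out w hw u hu.1 hu.2).resolve_right huc⟩⟩
  by_cases hq : ∃ u ∈ T, u ∉ D ∧ G.Adj u (f (m + s))
  · exact caseIIb1 h hL hm hw hm1 hm2 hne hq
  · push Not at hq
    refine caseIIb2 h hL hm hw hm1 hm2 hne fun u hu hua => ?_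
    by_contra hcon
    exact hq u hu hcon hua
end

theorem cycles [Fintype V] {k : ℕ} (hk : 2 ≤ k) (h2 : TwoC G)
    (hd : ∀ v : V, k + 1 ≤ (Finset.univ.filter (G.Adj v)).card)
    (hC : ∃ n f T, Cy G n f T) : ∃ J, ∀ t < k, CycL G (J + t) := by
  obtain ⟨f, T, hC'⟩ := Nat.find_spec hC
  have hmin : ∀ n' < Nat.find hC, ∀ f' T', ¬ Cy G n' f' T' := fun n' hn' f' T' h =>
    Nat.find_min hC hn' ⟨f', T', h⟩
  generalize Nat.find hC = n at f hC' hmin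
  rcases eq_or_lt_of_le hk with rfl | hk
  · exact case_two hC' hd
  obtain ⟨s, hs⟩ := hC'.odd
  have h3 := hC'.three
  by_cases hn3 : n = 3
  · subst hn3
    exact case_three hC' hk h2 hd
  · exact Ctx.main (s := s) ⟨hC', hs, by omega, hk, hd, hmin, h2⟩

end KC

/-- If `G` is a 2-connected graph containing a non-separating induced odd cycle and
the minimum degree of `G` is at least `k + 1`, then `G` contains `k` cycles which
have consecutive lengths or satisfy the length condition. -/
theorem k_cycles_of_nonseparating_induced_odd_cycle {V : Type*} [Fintype V]
    (k : ℕ) (hk : 0 < k) (G : SimpleGraph V) [DecidableRel G.Adj]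
    (h2 : TwoConnected G)
    (hC : ∃ (u : V) (c : G.Walk u u), c.IsCycle ∧ Odd c.length ∧
      (∀ a b : V, a ∈ c.support → b ∈ c.support → G.Adj a b → s(a, b) ∈ c.edges) ∧
      (G.induce {v : V | v ∉ c.support}).Connected)
    (hdeg : ∀ v : V, k + 1 ≤ G.degree v) :
    ∃ (v : ℕ → V) (c : ∀ i : ℕ, G.Walk (v i) (v i)),
      (∀ i, 1 ≤ i → i ≤ k → (c i).IsCycle) ∧
      (ConsecSeq k (fun i => (c i).length) ∨
       LengthSeq k (fun i => (c i).length)) := by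
  classical
  have hT : KC.TwoC G := KC.twoC_of h2.1 h2.2.2
  -- the cycles produced always have consecutive lengths; for `k = 1` the given cycle is enough
  have hex : ∃ J, ∀ t < k, KC.CycL G (J + t) := by
    rcases Nat.lt_or_ge k 2 with hk2 | hk2
    · obtain ⟨u, c, hc, -⟩ := hC
      refine ⟨c.length, fun t ht => ⟨u, c, hc, by omega⟩⟩
    · obtain ⟨u, c, hc, hodd, hind, hsep⟩ := hC
      refine KC.cycles hk2 hT (fun v => ?_) (KC.Cy.of_walk hc hodd hind hsep)
      refine (hdeg v).trans (le_of_eq ?_)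
      rw [← SimpleGraph.card_neighborFinset_eq_degree]
      congr 1
      ext w
      simp
  obtain ⟨J, hJ⟩ := hex
  have hall : ∀ i : ℕ, ∃ u, ∃ c : G.Walk u u, 1 ≤ i → i ≤ k → c.IsCycle ∧ c.length = J + (i - 1) := by
    intro i
    by_cases hi : 1 ≤ i ∧ i ≤ k
    · obtain ⟨u, c, hc⟩ := hJ (i - 1) (by omega)
      exact ⟨u, c, fun _ _ => hc⟩
    · obtain ⟨u⟩ := h2.1.nonempty
      exact ⟨u, SimpleGraph.Walk.nil, fun h1 h3 => absurd ⟨h1, h3⟩ hi⟩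
  choose v c hvc using hall
  refine ⟨v, c, fun i h1 h3 => (hvc i h1 h3).1, Or.inl ⟨?_, fun i h1 h3 => ?_⟩⟩
  · have := (hvc 1 le_rfl hk).1.three_le_length
    simp only
    omega
  · simp only
    rw [(hvc i h1 (by omega)).2, (hvc (i + 1) (by omega) (by omega)).2]
    omega
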